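/- Let d ≥ 3 and p, q, s, s̃ ∈ [1,∞) with p > 1, p' = p/(p−1), s' = s/(s−1), β = (p−1)(d−1)/(4p(p+1)), and assume 1/p + 1/q > 1 − (p−1)/(4(p+1)p) and s̃ ≤ s/(s/s' + (1+2β)/(1+4β)). Then there exist a constant M > 0 and an integer N ∈ ℕ such that the following holds. Suppose (ρ, u, R) is a smooth solution of the continuity-defect equation ∂_tρ + div(ρu) = div R, div u = 0, on [0,1]×𝕋^d, time-periodic with period 1 in t. Then for any δ, ν > 0 there exists another smooth time-periodic solution (ρ¹, u¹, R¹) of the continuity-defect equation on [0,1]×𝕋^d satisfying: ‖ρ¹ − ρ‖_{L^s_t L^p_x} ≤ ν M ‖R‖_{L^1_{t,x}}^{1/p}; ‖u¹ − u‖_{L^{s'}_t L^{p'}_x} ≤ ν^{−1} M ‖R‖_{L^1_{t,x}}^{1/p'}; ‖u¹ − u‖_{L^{s̃}_t W^{1,q}_x} ≤ δ; ‖R¹‖_{L^1_{t,x}} ≤ δ. Moreover, ρ¹ − ρ has zero spatial mean at each time, |∫_{𝕋^d} (ρ¹ − ρ)(t,x) φ(x) dx| ≤ δ ‖φ‖_{C^N}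 for all t ∈ [0,1] and all φ ∈ C^∞(𝕋^d), and there exists r > 0 such that (ρ¹ − ρ)(t,·) ≡ 0 for all t ∉ [r, 1−r]. -/

import Mathlib

open MeasureTheory ENNReal

noncomputable section

/-- Points of `ℝ^d` (representing the torus `𝕋^d = ℝ^d/ℤ^d` via periodic functions). -/
abbrev Vec (d : ℕ) := Fin d → ℝ

/-- One fundamental domain `[0,1]^d` of the torus. -/
def fundCube (d : ℕ) : Set (Vec d) := Set.Icc 0 1

/-- `ℤ^d`-periodicity of a function on `ℝ^d`. -/
def ZPer {d : ℕ} {α : Type*} (f : Vec d → α) : Prop :=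
  ∀ (x : Vec d) (k : Fin d → ℤ), f (x + fun i => (k i : ℝ)) = f x

/-- Generic `L^p` "norm" (`p ∈ [1,∞]` as `ℝ≥0∞`) of an `ℝ≥0∞`-valued function. -/
def eLpGen {α : Type*} [MeasurableSpace α] (μ : Measure α) (p : ℝ≥0∞)
    (g : α → ℝ≥0∞) : ℝ≥0∞ :=
  if p = ∞ then essSup g μ
  else (∫⁻ a, g a ^ p.toReal ∂μ) ^ (1 / p.toReal)

/-- Spatial `L^p` norm over one fundamental domain of the torus. -/
def spLp {d : ℕ} {E : Type*} [NormedAddCommGroup E] (p : ℝ≥0∞)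
    (f : Vec d → E) : ℝ≥0∞ :=
  eLpGen (volume.restrict (fundCube d)) p (fun x => (‖f x‖₊ : ℝ≥0∞))

/-- `W^{1,q}` norm of a vector field on the torus: `‖u‖_{L^q} + ‖∇u‖_{L^q}`. -/
def W1qNorm {d : ℕ} (q : ℝ≥0∞) (u : Vec d → Vec d) : ℝ≥0∞ :=
  spLp q u + spLp q (fderiv ℝ u)

/-- `L^s(0,T;L^p(𝕋^d))` norm. -/
def LsLpT {d : ℕ} {E : Type*} [NormedAddCommGroup E] (T : ℝ) (s p : ℝ≥0∞)
    (f : ℝ → Vec d → E) : ℝ≥0∞ :=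
  eLpGen (volume.restrict (Set.Ioo 0 T)) s (fun t => spLp p (f t))

/-- `L^s(0,T;W^{1,q}(𝕋^d))` norm. -/
def LsW1qT {d : ℕ} (T : ℝ) (s q : ℝ≥0∞) (u : ℝ → Vec d → Vec d) : ℝ≥0∞ :=
  eLpGen (volume.restrict (Set.Ioo 0 T)) s (fun t => W1qNorm q (u t))

/-- Gradient of a scalar function on `ℝ^d`. -/
def gradV {d : ℕ} (f : Vec d → ℝ) (x : Vec d) : Vec d :=
  fun i => fderiv ℝ f x (Pi.single i 1)

/-- Divergence of a vector field on `ℝ^d`. -/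
def divV {d : ℕ} (v : Vec d → Vec d) (x : Vec d) : ℝ :=
  ∑ i, fderiv ℝ (fun y => v y i) x (Pi.single i 1)

/-- Laplacian of a scalar function on `ℝ^d`. -/
def laplV {d : ℕ} (f : Vec d → ℝ) : Vec d → ℝ := divV (gradV f)

/-- Euclidean dot product on `ℝ^d`. -/
def dotV {d : ℕ} (a b : Vec d) : ℝ := ∑ i, a i * b i

/-- `C^N` norm over one fundamental domain. -/
def CkN {d : ℕ} (N : ℕ) (φ : Vec d → ℝ) : ℝ :=
  ∑ i ∈ Finset.range (N + 1), sSup ((fun x => ‖iteratedFDeriv ℝ i φ x‖) '' fundCube d)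

/-- `W^{m,r}` norm over one fundamental domain. -/
def SobN {d : ℕ} {E : Type*} [NormedAddCommGroup E] [NormedSpace ℝ E]
    (m : ℕ) (r : ℝ≥0∞) (f : Vec d → E) : ℝ≥0∞ :=
  ∑ i ∈ Finset.range (m + 1), spLp r (iteratedFDeriv ℝ i f)

/-- Test functions for the weak formulation on `[0,T) × 𝕋^d`:
smooth, `ℤ^d`-periodic in space, vanishing for `t` near `T` (compact support in `[0,T)`). -/
def IsTest (d : ℕ) (T : ℝ) (φ : ℝ → Vec d → ℝ) : Prop :=
  ContDiff ℝ (⊤ : ℕ∞) (Function.uncurry φ) ∧ (∀ t, ZPer (φ t)) ∧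
    ∃ T', T' < T ∧ ∀ t, T' ≤ t → ∀ x, φ t x = 0

/-- `ρ` is a weak solution on `(0,T) × 𝕋^d` of `∂_t ρ + u·∇ρ = 0` with initial data `ρ₀`. -/
def IsWeakSolution (d : ℕ) (T : ℝ) (u : ℝ → Vec d → Vec d)
    (ρ : ℝ → Vec d → ℝ) (ρ₀ : Vec d → ℝ) : Prop :=
  ∀ φ : ℝ → Vec d → ℝ, IsTest d T φ →
    ∫ x in fundCube d, ρ₀ x * φ 0 x =
      ∫ t in Set.Ioo 0 T, ∫ x in fundCube d,
        ρ t x * (deriv (fun τ => φ τ x) t + fderiv ℝ (φ t) x (u t x))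

/-- `u` is divergence free in the sense of distributions on `(0,T) × 𝕋^d`. -/
def WeaklyDivFree (d : ℕ) (T : ℝ) (u : ℝ → Vec d → Vec d) : Prop :=
  ∀ φ : ℝ → Vec d → ℝ, ContDiff ℝ (⊤ : ℕ∞) (Function.uncurry φ) →
    (∀ t, ZPer (φ t)) →
    ∫ t in Set.Ioo 0 T, ∫ x in fundCube d, fderiv ℝ (φ t) x (u t x) = 0

end

/-!
Split the cut-off defect into components and write each component as `-A B` with
`|A| ∼ |R|^(1/p)` and `|B| ∼ |R|^(1/p')`, rebalanced in time by the spatial masses of `R` so that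
`A` and `B` are bounded in `L^s L^p` and `L^s' L^p'`. Perturb the density by a derivative `∂ⱼ` of an
oscillating potential with amplitude `A`, and the velocity by a rotated gradient, hence divergence
free, with amplitude `B`. Both perturbations are concentrated at scale `μ⁻¹` in the `d - 1`
directions transverse to `j` and at scale `κ⁻¹` in time, and oscillate at the frequencies `λ` in
space and `σ` in time.

The mean of their product is `A B` and cancels the defect. The oscillation of the product in space
is the divergence of a field of size `λ⁻¹`; its oscillation in time is absorbed by a further density
perturbation of size `σ⁻¹`. Since fast periodic profiles decouple from slow amplitudes, the norms of
the perturbations are comparable to those of `A` and `B`, and the condition on the exponents lets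
`κ` be chosen as a power of `μ` for which the `W^{1,q}` norm of the velocity perturbation and the
`L¹` norm of the remaining defect are negative powers of `μ`.
-/

/-! ### Concentrated periodic profiles -/

section Profile

theorem iteratedDeriv_eq_zero_of_tsupport_subset {f : ℝ → ℝ} {s : Set ℝ} (h : tsupport f ⊆ s)
    (n : ℕ) {y : ℝ} (hy : y ∉ s) : iteratedDeriv n f y = 0 := by
  have : f =ᶠ[nhds y] fun _ => 0 := notMem_tsupport_iff_eventuallyEq.1 fun h' => hy (h h')
  simp [this.iteratedDeriv_eq n]

theorem exists_abs_iteratedDeriv_le {f : ℝ → ℝ} (hf : ContDiff ℝ (⊤ : ℕ∞) f)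
    (hc : HasCompactSupport f) (n : ℕ) : ∃ B, ∀ y, |iteratedDeriv n f y| ≤ B := by
  refine (hc.mono' fun y hy => ?_).exists_bound_of_continuous
    (hf.continuous_iteratedDeriv n (by exact_mod_cast le_top))
  by_contra h
  exact hy (iteratedDeriv_eq_zero_of_tsupport_subset subset_rfl n h)

theorem integral_sq_deriv_pos {f : ℝ → ℝ} (hf : ContDiff ℝ 1 f) {a b c : ℝ}
    (hc : c ∈ Set.Icc a b) (h : f a ≠ f c) : 0 < ∫ y in a..b, deriv f y ^ 2 := by
  have := hf.continuous_deriv le_rfl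
  have hac : a < c := hc.1.lt_of_ne fun e => h (e ▸ rfl)
  obtain ⟨z, hz, hz'⟩ : ∃ z ∈ Set.Ioo a c, deriv f z = (f c - f a) / (c - a) :=
    exists_deriv_eq_slope f hac hf.continuous.continuousOn
      (hf.differentiable (by simp)).differentiableOn
  have hne : deriv f z ≠ 0 := hz' ▸ div_ne_zero (sub_ne_zero.2 h.symm) (sub_ne_zero.2 hac.ne')
  exact intervalIntegral.integral_pos (hac.trans_le hc.2) (by fun_prop) (fun _ _ => sq_nonneg _)
    ⟨z, ⟨hz.1.le, hz.2.le.trans hc.2⟩, by positivity⟩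

theorem exists_profile : ∃ χ : ℝ → ℝ, ContDiff ℝ (⊤ : ℕ∞) χ ∧
    tsupport χ ⊆ Set.Icc (1 / 4) (3 / 4) ∧ ∫ y in (0 : ℝ)..1, deriv χ y ^ 2 = 1 := by
  let b : ContDiffBump (1 / 2 : ℝ) := ⟨1 / 8, 1 / 4, by norm_num, by norm_num⟩
  have hsmooth : ContDiff ℝ (⊤ : ℕ∞) (b : ℝ → ℝ) := b.contDiff
  have hsupp : tsupport b ⊆ Set.Icc (1 / 4) (3 / 4) := by
    rw [b.tsupport_eq, Real.closedBall_eq_Icc]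
    norm_num
  set I := ∫ y in (0 : ℝ)..1, deriv b y ^ 2 with hI
  have hb0 : b 0 = 0 := image_eq_zero_of_notMem_tsupport fun h =>
    absurd (hsupp h).1 (by norm_num)
  have hpos : 0 < I := by
    refine integral_sq_deriv_pos (c := 1 / 2) (b.contDiff (n := 1)) (by norm_num) ?_
    rw [hb0, b.one_of_mem_closedBall (by simp [b.rIn_pos.le])]
    norm_num
  refine ⟨fun y => (√I)⁻¹ * b y, contDiff_const.mul hsmooth,
    (tsupport_mul_subset_right).trans hsupp, ?_⟩
  simp only [deriv_const_mul_field, mul_pow, inv_pow, Real.sq_sqrt hpos.le,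
    intervalIntegral.integral_const_mul, ← hI, inv_mul_cancel₀ hpos.ne']

/-- The smooth profile `χ`, supported in the middle half of `[0,1]` and normalised by
`∫ (χ')² = 1`; all spatial and temporal concentration functions are rescalings of it. -/
noncomputable def profile : ℝ → ℝ := exists_profile.choose

theorem contDiff_profile : ContDiff ℝ (⊤ : ℕ∞) profile := exists_profile.choose_spec.1

theorem tsupport_profile_subset : tsupport profile ⊆ Set.Icc (1 / 4) (3 / 4) :=
  exists_profile.choose_spec.2.1

theorem integral_sq_deriv_profile : ∫ y in (0 : ℝ)..1, iteratedDeriv 1 profile y ^ 2 = 1 := by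
  rw [iteratedDeriv_one]
  exact exists_profile.choose_spec.2.2

theorem contDiff_iteratedDeriv_profile (n : ℕ) :
    ContDiff ℝ (⊤ : ℕ∞) (iteratedDeriv n profile) := by
  rw [iteratedDeriv_eq_iterate]
  exact contDiff_profile.iterate_deriv n

theorem iteratedDeriv_profile_eq_zero (n : ℕ) {y : ℝ} (hy : y < 1 / 4 ∨ 3 / 4 < y) :
    iteratedDeriv n profile y = 0 :=
  iteratedDeriv_eq_zero_of_tsupport_subset tsupport_profile_subset n fun h =>
    hy.elim h.1.not_gt h.2.not_gt

theorem exists_profile_bound :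
    ∃ B : ℝ, 1 ≤ B ∧ ∀ n ≤ 3, ∀ y, |iteratedDeriv n profile y| ≤ B := by
  have hcompact : HasCompactSupport profile :=
    isCompact_Icc.of_isClosed_subset (isClosed_tsupport _) tsupport_profile_subset
  choose B hB using exists_abs_iteratedDeriv_le contDiff_profile hcompact
  have hB0 : ∀ n, 0 ≤ B n := fun n => (abs_nonneg _).trans (hB n 0)
  refine ⟨1 + ∑ n ∈ Finset.range 4, B n,
    le_add_of_nonneg_right (Finset.sum_nonneg fun n _ => hB0 n), fun n hn y => ?_⟩
  calc |iteratedDeriv n profile y| ≤ B n := hB n y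
    _ ≤ ∑ n ∈ Finset.range 4, B n :=
      Finset.single_le_sum (fun n _ => hB0 n) (Finset.mem_range.2 (by lia))
    _ ≤ _ := le_add_of_nonneg_left zero_le_one

/-- A common bound, at least `1`, for the derivatives of the profile up to third order. -/
noncomputable def profileBound : ℝ := exists_profile_bound.choose

theorem one_le_profileBound : 1 ≤ profileBound := exists_profile_bound.choose_spec.1

theorem abs_iteratedDeriv_profile_le {n : ℕ} (hn : n ≤ 3) (y : ℝ) :
    |iteratedDeriv n profile y| ≤ profileBound := exists_profile_bound.choose_spec.2 n hn y

/-- The `1`-periodic extension of `y ↦ χ⁽ⁿ⁾(m y)`, a function concentrated in intervals of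
length `1 / m`. -/
noncomputable def conc (n : ℕ) (m y : ℝ) : ℝ := iteratedDeriv n profile (m * Int.fract y)

/-- The indicator of the concentration set `{y | fract y < 1 / m}` of `conc n m`. -/
noncomputable def concInd (m y : ℝ) : ℝ := if Int.fract y < 1 / m then 1 else 0

theorem concInd_nonneg (m y : ℝ) : 0 ≤ concInd m y := by unfold concInd; split_ifs <;> norm_num

theorem concInd_le_one (m y : ℝ) : concInd m y ≤ 1 := by unfold concInd; split_ifs <;> norm_num

theorem concInd_mul_self (m y : ℝ) : concInd m y * concInd m y = concInd m y := by
  unfold concInd; split_ifs <;> norm_num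

theorem conc_add_int (n : ℕ) (m y : ℝ) (k : ℤ) : conc n m (y + k) = conc n m y := by simp [conc]

theorem concInd_add_int (m y : ℝ) (k : ℤ) : concInd m (y + k) = concInd m y := by simp [concInd]

theorem measurable_concInd (m : ℝ) : Measurable (concInd m) :=
  Measurable.ite (measurableSet_lt measurable_fract measurable_const) measurable_const
    measurable_const

variable {m : ℝ} (hm : 1 ≤ m)
include hm

theorem abs_conc_le {n : ℕ} (hn : n ≤ 3) (y : ℝ) : |conc n m y| ≤ profileBound * concInd m y := by
  unfold concInd conc
  split_ifs with h
  · simpa using abs_iteratedDeriv_profile_le hn _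
  · rw [not_lt, div_le_iff₀ (by linarith)] at h
    rw [iteratedDeriv_profile_eq_zero _ (Or.inr (by nlinarith))]
    simp

/-- Near an integer both sides vanish, since `χ` vanishes near `0` and on `[m - 1/4, m]`. -/
theorem conc_eventuallyEq (n : ℕ) (y : ℝ) :
    conc n m =ᶠ[nhds y] fun z => iteratedDeriv n profile (m * (z - ⌊y⌋)) := by
  have h1 : (⌊y⌋ : ℝ) - 1 / 4 < y := by linarith [Int.floor_le y]
  filter_upwards [Ioo_mem_nhds h1 (Int.lt_floor_add_one y)] with z hz
  rcases le_or_gt (⌊y⌋ : ℝ) z with h | h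
  · rw [conc, Int.fract, Int.floor_eq_iff.2 ⟨h, hz.2⟩]
  · have hfloor : ⌊z⌋ = ⌊y⌋ - 1 :=
      Int.floor_eq_iff.2 ⟨by push_cast; linarith [hz.1], by push_cast; linarith⟩
    rw [conc, Int.fract, hfloor, iteratedDeriv_profile_eq_zero, iteratedDeriv_profile_eq_zero]
    · left; nlinarith
    · right; push_cast; nlinarith [hz.1]

theorem contDiff_conc (n : ℕ) : ContDiff ℝ (⊤ : ℕ∞) (conc n m) := by
  rw [contDiff_iff_contDiffAt]
  intro y
  refine ContDiffAt.congr_of_eventuallyEq ?_ (conc_eventuallyEq hm n y)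
  have := contDiff_iteratedDeriv_profile n
  exact ContDiff.contDiffAt (by fun_prop)

theorem hasDerivAt_conc (n : ℕ) (y : ℝ) : HasDerivAt (conc n m) (m * conc (n + 1) m y) y := by
  refine HasDerivAt.congr_of_eventuallyEq ?_ (conc_eventuallyEq hm n y)
  have houter := ((contDiff_iteratedDeriv_profile n).differentiable (by simp)
    (m * (y - ⌊y⌋))).hasDerivAt
  have hinner : HasDerivAt (fun z : ℝ => m * (z - ⌊y⌋)) m y := by
    simpa using ((hasDerivAt_id y).sub_const (⌊y⌋ : ℝ)).const_mul m
  have hcomp := houter.comp y hinner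
  rw [← iteratedDeriv_succ] at hcomp
  rw [mul_comm]
  exact hcomp

theorem integral_sq_conc : ∫ y in (0 : ℝ)..1, m * conc 1 m y ^ 2 = 1 := by
  have hcont := (contDiff_iteratedDeriv_profile 1).continuous
  have hfract : ∫ y in (0 : ℝ)..1, m * conc 1 m y ^ 2 =
      ∫ y in (0 : ℝ)..1, m * iteratedDeriv 1 profile (m * y) ^ 2 := by
    refine intervalIntegral.integral_congr_ae ?_
    filter_upwards [(show ∀ᵐ y : ℝ, y ≠ 1 by simp [ae_iff])] with y hy1 hy
    rw [Set.uIoc_of_le zero_le_one] at hy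
    rw [conc, Int.fract_eq_self.2 ⟨hy.1.le, lt_of_le_of_ne hy.2 hy1⟩]
  have htail : ∫ y in (1 : ℝ)..m, iteratedDeriv 1 profile y ^ 2 = 0 := by
    rw [intervalIntegral.integral_congr (g := fun _ => (0 : ℝ)), intervalIntegral.integral_zero]
    intro y hy
    rw [Set.uIcc_of_le hm] at hy
    simp [iteratedDeriv_profile_eq_zero 1 (Or.inr (by linarith [hy.1] : 3 / 4 < y))]
  rw [hfract, intervalIntegral.integral_const_mul,
    intervalIntegral.mul_integral_comp_mul_left (f := fun y => iteratedDeriv 1 profile y ^ 2),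
    mul_zero, mul_one, ← intervalIntegral.integral_add_adjacent_intervals (b := 1)
      (Continuous.intervalIntegrable (by fun_prop) _ _)
      (Continuous.intervalIntegrable (by fun_prop) _ _), integral_sq_deriv_profile, htail,
    add_zero]

/-- The periodic primitive of the mean-zero function `m (χ'(m ·))² - 1`. -/
noncomputable def concPrim (m y : ℝ) : ℝ := ∫ z in (0 : ℝ)..y, (m * conc 1 m z ^ 2 - 1)

theorem hasDerivAt_concPrim (y : ℝ) : HasDerivAt (concPrim m) (m * conc 1 m y ^ 2 - 1) y := by
  have hconc := (contDiff_conc hm 1).continuous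
  have hcont : Continuous fun z => m * conc 1 m z ^ 2 - 1 := by fun_prop
  exact intervalIntegral.integral_hasDerivAt_right (hcont.intervalIntegrable _ _)
    (hcont.stronglyMeasurableAtFilter _ _) hcont.continuousAt

theorem contDiff_concPrim : ContDiff ℝ (⊤ : ℕ∞) (concPrim m) := by
  rw [contDiff_infty_iff_deriv]
  refine ⟨fun y => (hasDerivAt_concPrim hm y).differentiableAt, ?_⟩
  rw [funext fun y => (hasDerivAt_concPrim hm y).deriv]
  have := contDiff_conc hm 1
  fun_prop

theorem concPrim_periodic : Function.Periodic (concPrim m) 1 := by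
  intro y
  have hconc := (contDiff_conc hm 1).continuous
  have hcont : Continuous fun z => m * conc 1 m z ^ 2 - 1 := by fun_prop
  have hper : Function.Periodic (fun z => m * conc 1 m z ^ 2 - 1) 1 := fun z => by
    simp [conc]
  have hmean : ∫ z in (0 : ℝ)..1, (m * conc 1 m z ^ 2 - 1) = 0 := by
    rw [intervalIntegral.integral_sub (Continuous.intervalIntegrable (by fun_prop) _ _) (by simp),
      integral_sq_conc hm]
    simp
  rw [concPrim, ← intervalIntegral.integral_add_adjacent_intervals (b := y)
    (hcont.intervalIntegrable _ _) (hcont.intervalIntegrable _ _),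
    hper.intervalIntegral_add_eq y 0, zero_add, hmean, add_zero, concPrim]

theorem concPrim_add_int (y : ℝ) (k : ℤ) : concPrim m (y + k) = concPrim m y := by
  simpa using (concPrim_periodic hm).int_mul k y

theorem abs_concPrim_le (y : ℝ) : |concPrim m y| ≤ 2 := by
  have hconc := (contDiff_conc hm 1).continuous
  have hint (a b : ℝ) : IntervalIntegrable (fun z => m * conc 1 m z ^ 2) volume a b :=
    Continuous.intervalIntegrable (by fun_prop) _ _
  rw [← Int.fract_add_floor y, concPrim_add_int hm]
  have hz0 := Int.fract_nonneg y
  have hz1 := (Int.fract_lt_one y).le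
  set z := Int.fract y
  have hsplit := intervalIntegral.integral_add_adjacent_intervals (hint 0 z) (hint z 1)
  rw [integral_sq_conc hm] at hsplit
  have hleft : 0 ≤ ∫ z in (0 : ℝ)..z, m * conc 1 m z ^ 2 :=
    intervalIntegral.integral_nonneg hz0 fun _ _ => by positivity
  have hright : 0 ≤ ∫ z in z..1, m * conc 1 m z ^ 2 :=
    intervalIntegral.integral_nonneg hz1 fun _ _ => by positivity
  rw [concPrim, intervalIntegral.integral_sub (hint _ _) (by simp),
    intervalIntegral.integral_const, smul_eq_mul, mul_one, sub_zero, abs_le]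
  constructor <;> linarith

end Profile

/-! ### Averaging of oscillating periodic functions -/

section Averaging

/-- Lebesgue measure on a fundamental domain of the torus `ℝ^d / ℤ^d`. -/
noncomputable abbrev torusVol (d : ℕ) : Measure (Vec d) := volume.restrict (fundCube d)

/-- Lebesgue measure on one time period. -/
noncomputable abbrev periodVol : Measure ℝ := volume.restrict (Set.Ioo 0 1)

instance (d : ℕ) : IsProbabilityMeasure (torusVol d) :=
  ⟨by simp [fundCube, Real.volume_Icc_pi]⟩

instance : IsProbabilityMeasure periodVol := ⟨by simp⟩

section Translation

variable {V : Type*} [AddCommGroup V] [MeasurableSpace V] [MeasurableAdd V] {μ : Measure V}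
  [μ.IsAddLeftInvariant] {L : AddSubgroup V} [Countable L] {D : Set V}

open scoped Pointwise in
theorem setLIntegral_add_right_eq_of_periodic (hD : IsAddFundamentalDomain L D μ) {F : V → ℝ≥0∞}
    (hF : ∀ g ∈ L, ∀ x, F (g + x) = F x) (z : V) :
    ∫⁻ x in D, F (x + z) ∂μ = ∫⁻ x in D, F x ∂μ := by
  rw [hD.setLIntegral_eq (hD.vadd_of_comm z) F (fun g x => hF g g.2 x), ← Set.image_vadd,
    ← (measurePreserving_vadd z μ).setLIntegral_comp_emb (measurableEmbedding_const_vadd z)]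
  simp only [vadd_eq_add, add_comm]

open scoped Pointwise in
theorem setIntegral_add_right_eq_of_periodic (hD : IsAddFundamentalDomain L D μ) {F : V → ℝ}
    (hF : ∀ g ∈ L, ∀ x, F (g + x) = F x) (z : V) :
    ∫ x in D, F (x + z) ∂μ = ∫ x in D, F x ∂μ := by
  rw [hD.setIntegral_eq (hD.vadd_of_comm z) (fun g x => hF g g.2 x), ← Set.image_vadd,
    (measurePreserving_vadd z μ).setIntegral_image_emb (measurableEmbedding_const_vadd z)]
  simp only [vadd_eq_add, add_comm]

end Translation

section FundamentalDomain

variable {V : Type*} [NormedAddCommGroup V] [NormedSpace ℝ V] [MeasurableSpace V] [BorelSpace V]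
  [SecondCountableTopology V] {μ : Measure V} [μ.IsAddLeftInvariant] [SFinite μ]
  {L : AddSubgroup V} [Countable L] {D : Set V}

/-- Translating `x` by `n⁻¹ • z` and averaging over `z ∈ D` decouples the slow factor `F` from the
fast factor `x ↦ S (n • x)`. -/
theorem setLIntegral_mul_comp_nsmul_le (hD : IsAddFundamentalDomain L D μ) (hμ : μ D = 1)
    (hbdd : ∀ z ∈ D, ‖z‖ ≤ 1) {n : ℕ} (hn : n ≠ 0) {F F' S : V → ℝ≥0∞} (hF' : Measurable F')
    (hS : Measurable S) (hFper : ∀ g ∈ L, ∀ x, F (g + x) = F x)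
    (hSper : ∀ g ∈ L, ∀ x, S (g + x) = S x)
    (hFF' : ∀ x z, ‖z‖ ≤ 1 → F (x + (n : ℝ)⁻¹ • z) ≤ F' x) :
    ∫⁻ x in D, F x * S (n • x) ∂μ ≤ (∫⁻ x in D, F' x ∂μ) * ∫⁻ x in D, S x ∂μ := by
  have hscale (x z : V) : n • (x + (n : ℝ)⁻¹ • z) = n • x + z := by
    rw [smul_add, ← Nat.cast_smul_eq_nsmul ℝ n ((n : ℝ)⁻¹ • z), smul_inv_smul₀ (by positivity)]
  have htranslate (z : V) : ∫⁻ x in D, F (x + (n : ℝ)⁻¹ • z) * S (n • x + z) ∂μ =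
      ∫⁻ x in D, F x * S (n • x) ∂μ := by
    simp only [← hscale]
    refine setLIntegral_add_right_eq_of_periodic hD (F := fun x => F x * S (n • x))
      (fun g hg x => ?_) _
    rw [hFper g hg, smul_add, hSper _ (nsmul_mem hg n)]
  calc ∫⁻ x in D, F x * S (n • x) ∂μ
      = ∫⁻ z in D, ∫⁻ x in D, F (x + (n : ℝ)⁻¹ • z) * S (n • x + z) ∂μ ∂μ := by
        simp [htranslate, hμ]
    _ ≤ ∫⁻ z in D, ∫⁻ x in D, F' x * S (n • x + z) ∂μ ∂μ := by
        refine lintegral_mono_ae ((ae_restrict_mem₀ hD.nullMeasurableSet).mono fun z hz => ?_)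
        exact lintegral_mono fun x => mul_le_mul_left (hFF' x z (hbdd z hz)) _
    _ = ∫⁻ x in D, ∫⁻ z in D, F' x * S (n • x + z) ∂μ ∂μ :=
        lintegral_lintegral_swap (by fun_prop)
    _ = ∫⁻ x in D, F' x * ∫⁻ z in D, S z ∂μ ∂μ := by
        refine lintegral_congr fun x => ?_
        rw [lintegral_const_mul _ (by fun_prop), ← setLIntegral_add_right_eq_of_periodic hD hSper
          (n • x)]
        simp only [add_comm]
    _ = _ := lintegral_mul_const _ hF'

/-- The improved Hölder inequality: concentration on a set of measure `N⁻¹` costs exactly the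
factor `N ^ (1 / r)`. -/
theorem eLpNorm_le_of_concentrated (hD : IsAddFundamentalDomain L D μ) (hμ : μ D = 1)
    (hbdd : ∀ z ∈ D, ‖z‖ ≤ 1) {n : ℕ} (hn : n ≠ 0) {F F' S G : V → ℝ≥0∞} (hF' : Measurable F')
    (hS : Measurable S) (hFper : ∀ g ∈ L, ∀ x, F (g + x) = F x)
    (hSper : ∀ g ∈ L, ∀ x, S (g + x) = S x) (hS01 : ∀ x, S x = 0 ∨ S x = 1)
    (hFF' : ∀ x z, ‖z‖ ≤ 1 → F (x + (n : ℝ)⁻¹ • z) ≤ F' x) {r : ℝ≥0∞} (hr : r ≠ 0) {N : ℝ}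
    (hN : 0 < N) (hSN : ∫⁻ x in D, S x ∂μ ≤ ENNReal.ofReal N⁻¹)
    (hG : ∀ x, G x ≤ ENNReal.ofReal (N ^ r.toReal⁻¹) * (S (n • x) * F x)) :
    eLpNorm G r (μ.restrict D) ≤ eLpNorm F' r (μ.restrict D) := by
  have hle (x : V) : F x ≤ F' x := by simpa using hFF' x 0 (by simp)
  rcases eq_or_ne r ∞ with rfl | hr'
  · refine eLpNorm_mono_enorm fun x => ?_
    simp only [enorm_eq_self]
    refine (hG x).trans ?_
    rcases hS01 (n • x) with h | h <;> simp [h, hle]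
  have hr0 : 0 < r.toReal := ENNReal.toReal_pos hr hr'
  rw [eLpNorm_eq_lintegral_rpow_enorm_toReal hr hr', eLpNorm_eq_lintegral_rpow_enorm_toReal hr hr']
  simp only [enorm_eq_self]
  gcongr ?_ ^ _
  calc ∫⁻ x in D, G x ^ r.toReal ∂μ
      ≤ ∫⁻ x in D, ENNReal.ofReal N * (F x ^ r.toReal * S (n • x)) ∂μ := by
        refine lintegral_mono fun x => (ENNReal.rpow_le_rpow (hG x) hr0.le).trans_eq ?_
        have hSr : S (n • x) ^ r.toReal = S (n • x) := by
          rcases hS01 (n • x) with h | h <;> simp [h, hr0]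
        rw [ENNReal.mul_rpow_of_nonneg _ _ hr0.le, ENNReal.mul_rpow_of_nonneg _ _ hr0.le, hSr,
          ENNReal.ofReal_rpow_of_pos (Real.rpow_pos_of_pos hN _), Real.rpow_inv_rpow hN.le hr0.ne',
          mul_comm (S _)]
    _ = ENNReal.ofReal N * ∫⁻ x in D, F x ^ r.toReal * S (n • x) ∂μ :=
        lintegral_const_mul' _ _ ofReal_ne_top
    _ ≤ ENNReal.ofReal N * ((∫⁻ x in D, F' x ^ r.toReal ∂μ) * ∫⁻ x in D, S x ∂μ) := by
        gcongr
        exact setLIntegral_mul_comp_nsmul_le hD hμ hbdd hn (hF'.pow_const _) hS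
          (fun g hg x => by rw [hFper g hg]) hSper
          fun x z hz => ENNReal.rpow_le_rpow (hFF' x z hz) hr0.le
    _ ≤ ENNReal.ofReal N * ((∫⁻ x in D, F' x ^ r.toReal ∂μ) * ENNReal.ofReal N⁻¹) := by gcongr
    _ = _ := by
        rw [mul_comm (∫⁻ x in D, _ ∂μ), ← mul_assoc, ← ENNReal.ofReal_mul hN.le,
          mul_inv_cancel₀ hN.ne', ENNReal.ofReal_one, one_mul]

end FundamentalDomain

/-- The lattice `ℤ^d ⊂ ℝ^d`. -/
def intLattice (d : ℕ) : AddSubgroup (Vec d) :=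
  (Submodule.span ℤ (Set.range (Pi.basisFun ℝ (Fin d)))).toAddSubgroup

instance (d : ℕ) : Countable (intLattice d) :=
  inferInstanceAs (Countable (Submodule.span ℤ (Set.range (Pi.basisFun ℝ (Fin d)))))

theorem isAddFundamentalDomain_intLattice (d : ℕ) : IsAddFundamentalDomain (intLattice d)
    (ZSpan.fundamentalDomain (Pi.basisFun ℝ (Fin d))) volume :=
  ZSpan.isAddFundamentalDomain' _ _

theorem restrict_fundamentalDomain_eq_torusVol (d : ℕ) :
    volume.restrict (ZSpan.fundamentalDomain (Pi.basisFun ℝ (Fin d))) = torusVol d := by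
  rw [ZSpan.fundamentalDomain_pi_basisFun]
  exact Measure.restrict_congr_set
    (Measure.univ_pi_Ico_ae_eq_Icc (f := fun _ : Fin d => (0 : ℝ)) (g := fun _ => 1))

theorem ZPer.intLattice_add {d : ℕ} {α : Type*} {F : Vec d → α} (hF : ZPer F) (g : Vec d)
    (hg : g ∈ intLattice d) (x : Vec d) : F (g + x) = F x := by
  have hint := (Module.Basis.mem_span_iff_repr_mem ℤ (Pi.basisFun ℝ (Fin d)) g).1 hg
  choose k hk using hint
  have hgk : g = fun i => (k i : ℝ) := funext fun i => by simpa using (hk i).symm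
  rw [hgk, add_comm, hF]

theorem ZPer.integral_add_right {d : ℕ} {F : Vec d → ℝ} (hF : ZPer F) (z : Vec d) :
    ∫ x in fundCube d, F (x + z) = ∫ x in fundCube d, F x := by
  simp only [← restrict_fundamentalDomain_eq_torusVol]
  exact setIntegral_add_right_eq_of_periodic (isAddFundamentalDomain_intLattice d)
    hF.intLattice_add z

/-- The indicator of `{x | fract (x l) < 1 / m for l ∈ A}`. -/
noncomputable def boxInd {d : ℕ} (A : Finset (Fin d)) (m : ℝ) (x : Vec d) : ℝ :=
  ∏ l ∈ A, concInd m (x l)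

section BoxIndicator

variable {d : ℕ} (A : Finset (Fin d)) (m : ℝ)

theorem boxInd_nonneg (x : Vec d) : 0 ≤ boxInd A m x :=
  Finset.prod_nonneg fun _ _ => concInd_nonneg _ _

theorem boxInd_mul_self (x : Vec d) : boxInd A m x * boxInd A m x = boxInd A m x := by
  simp only [boxInd, ← Finset.prod_mul_distrib, concInd_mul_self]

theorem measurable_boxInd : Measurable (boxInd A m) :=
  Finset.measurable_prod _ fun l _ => (measurable_concInd m).comp (measurable_pi_apply l)

theorem zPer_boxInd : ZPer (boxInd A m) := fun x k => by simp [boxInd, concInd_add_int]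

variable {m}

theorem integral_concInd (hm : 1 ≤ m) : ∫ y in Set.Ioo (0 : ℝ) 1, concInd m y = m⁻¹ := by
  have hm0 : 0 < m := by linarith
  have hcongr : ∀ y ∈ Set.Ioo (0 : ℝ) 1,
      concInd m y = Set.indicator (Set.Iio m⁻¹) (fun _ => (1 : ℝ)) y := by
    intro y hy
    simp only [concInd, Int.fract_eq_self.2 ⟨hy.1.le, hy.2⟩, one_div, Set.indicator, Set.mem_Iio]
  have hinter : Set.Iio m⁻¹ ∩ Set.Ioo (0 : ℝ) 1 = Set.Ioo 0 m⁻¹ := by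
    ext y
    have := inv_le_one_of_one_le₀ hm
    simp only [Set.mem_inter_iff, Set.mem_Iio, Set.mem_Ioo]
    exact ⟨fun h => ⟨h.2.1, h.1⟩, fun h => ⟨h.2, h.1, by linarith⟩⟩
  rw [setIntegral_congr_fun measurableSet_Ioo hcongr, integral_indicator measurableSet_Iio,
    Measure.restrict_restrict measurableSet_Iio, hinter]
  simp [hm0.le]

theorem integral_boxInd (hm : 1 ≤ m) :
    ∫ x in fundCube d, boxInd A m x = (m ^ A.card)⁻¹ := by
  have hpi : torusVol d = Measure.pi fun _ => periodVol := by
    rw [torusVol, fundCube, ← Set.pi_univ_Icc, volume_pi, Measure.restrict_pi_pi]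
    simp [Measure.restrict_congr_set (Ioo_ae_eq_Icc (a := (0 : ℝ)) (b := 1))]
  have hprod (x : Vec d) : boxInd A m x = ∏ l, (if l ∈ A then concInd m else 1) (x l) := by
    simp only [boxInd, ite_apply, Pi.one_apply, Finset.prod_ite_mem, Finset.univ_inter]
  have hfactor (l : Fin d) : ∫ y in Set.Ioo (0 : ℝ) 1, (if l ∈ A then concInd m else 1) y =
      if l ∈ A then m⁻¹ else 1 := by
    split_ifs
    · exact integral_concInd hm
    · simp
  simp only [hprod]
  rw [show volume.restrict (fundCube d) = _ from hpi, integral_fintype_prod_eq_prod]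
  simp only [hfactor, Finset.prod_ite_mem, Finset.univ_inter, Finset.prod_const, inv_pow]

end BoxIndicator

end Averaging

/-! ### Smooth periodic functions on space-time -/

/-- Space-time points `(t, x)`. -/
abbrev SpaceTime (d : ℕ) := ℝ × Vec d

/-- The derivative of a scalar space-time function in the direction `v`. -/
noncomputable def dirDeriv {d : ℕ} (v : SpaceTime d) (F : SpaceTime d → ℝ) : SpaceTime d → ℝ :=
  fun z => fderiv ℝ F z v

/-- The unit vector in the time direction. -/
def timeDir (d : ℕ) : SpaceTime d := (1, 0)

/-- The unit vector in the `k`-th space direction. -/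
def spaceDir {d : ℕ} (k : Fin d) : SpaceTime d := (0, Pi.single k 1)

/-- Smooth functions on space-time that have period `1` in time and are `ℤ^d`-periodic in space. -/
@[fun_prop] structure SmoothPeriodic {d : ℕ} {E : Type*} [NormedAddCommGroup E] [NormedSpace ℝ E]
    (F : SpaceTime d → E) : Prop where
  contDiff : ContDiff ℝ (⊤ : ℕ∞) F
  time_periodic : ∀ t x, F (t + 1, x) = F (t, x)
  space_periodic : ∀ t, ZPer fun x => F (t, x)

namespace SmoothPeriodic

variable {d : ℕ} {E : Type*} [NormedAddCommGroup E] [NormedSpace ℝ E] {F G : SpaceTime d → E}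
  {f g : SpaceTime d → ℝ}

theorem differentiable (hF : SmoothPeriodic F) : Differentiable ℝ F :=
  hF.contDiff.differentiable (by simp)

theorem continuous (hF : SmoothPeriodic F) : Continuous F := hF.contDiff.continuous

theorem contDiff_slice (hF : SmoothPeriodic F) (t : ℝ) :
    ContDiff ℝ (⊤ : ℕ∞) fun x => F (t, x) := hF.contDiff.comp (by fun_prop)

theorem continuous_slice (hF : SmoothPeriodic F) (t : ℝ) : Continuous fun x => F (t, x) :=
  (hF.contDiff_slice t).continuous

@[fun_prop]
theorem const (c : E) : SmoothPeriodic fun _ : SpaceTime d => c :=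
  ⟨contDiff_const, fun _ _ => rfl, fun _ _ _ => rfl⟩

@[fun_prop]
theorem add (hF : SmoothPeriodic F) (hG : SmoothPeriodic G) :
    SmoothPeriodic fun z => F z + G z where
  contDiff := hF.contDiff.add hG.contDiff
  time_periodic t x := by rw [hF.time_periodic, hG.time_periodic]
  space_periodic t x k := congrArg₂ _ (hF.space_periodic t x k) (hG.space_periodic t x k)

@[fun_prop]
theorem sub (hF : SmoothPeriodic F) (hG : SmoothPeriodic G) :
    SmoothPeriodic fun z => F z - G z where
  contDiff := hF.contDiff.sub hG.contDiff
  time_periodic t x := by rw [hF.time_periodic, hG.time_periodic]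
  space_periodic t x k := congrArg₂ _ (hF.space_periodic t x k) (hG.space_periodic t x k)

@[fun_prop]
theorem smul (hf : SmoothPeriodic f) (hF : SmoothPeriodic F) :
    SmoothPeriodic fun z => f z • F z where
  contDiff := hf.contDiff.smul hF.contDiff
  time_periodic t x := by rw [hf.time_periodic, hF.time_periodic]
  space_periodic t x k := congrArg₂ _ (hf.space_periodic t x k) (hF.space_periodic t x k)

@[fun_prop]
theorem mul (hf : SmoothPeriodic f) (hg : SmoothPeriodic g) : SmoothPeriodic fun z => f z * g z :=
  hf.smul hg

@[fun_prop]
theorem neg (hF : SmoothPeriodic F) : SmoothPeriodic fun z => -F z := by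
  simpa using (const (d := d) (0 : E)).sub hF

@[fun_prop]
theorem pow (hf : SmoothPeriodic f) (n : ℕ) : SmoothPeriodic fun z => f z ^ n where
  contDiff := hf.contDiff.pow n
  time_periodic t x := by rw [hf.time_periodic]
  space_periodic t x k := congrArg (· ^ n) (hf.space_periodic t x k)

theorem sum {ι : Type*} {s : Finset ι} {F : ι → SpaceTime d → E}
    (h : ∀ i ∈ s, SmoothPeriodic (F i)) : SmoothPeriodic fun z => ∑ i ∈ s, F i z where
  contDiff := ContDiff.sum fun i hi => (h i hi).contDiff
  time_periodic t x := Finset.sum_congr rfl fun i hi => (h i hi).time_periodic t x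
  space_periodic t x k := Finset.sum_congr rfl fun i hi => (h i hi).space_periodic t x k

theorem prod {ι : Type*} {s : Finset ι} {F : ι → SpaceTime d → ℝ}
    (h : ∀ i ∈ s, SmoothPeriodic (F i)) : SmoothPeriodic fun z => ∏ i ∈ s, F i z where
  contDiff := contDiff_prod fun i hi => (h i hi).contDiff
  time_periodic t x := Finset.prod_congr rfl fun i hi => (h i hi).time_periodic t x
  space_periodic t x k := Finset.prod_congr rfl fun i hi => (h i hi).space_periodic t x k

theorem pi {F : SpaceTime d → Vec d} (h : ∀ k, SmoothPeriodic fun z => F z k) :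
    SmoothPeriodic F where
  contDiff := contDiff_pi.2 fun k => (h k).contDiff
  time_periodic t x := funext fun k => (h k).time_periodic t x
  space_periodic t x n := funext fun k => (h k).space_periodic t x n

theorem apply {F : SpaceTime d → Vec d} (hF : SmoothPeriodic F) (k : Fin d) :
    SmoothPeriodic fun z => F z k where
  contDiff := contDiff_pi.1 hF.contDiff k
  time_periodic t x := congrFun (hF.time_periodic t x) k
  space_periodic t x n := congrFun (hF.space_periodic t x n) k

@[fun_prop]
theorem single (i : Fin d) (hf : SmoothPeriodic f) :
    SmoothPeriodic fun z => (Pi.single i (f z) : Vec d) := by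
  refine pi fun k => ?_
  rcases eq_or_ne k i with rfl | hk
  · simpa using hf
  · simpa [hk] using const 0

theorem rpow_const (hf : SmoothPeriodic f) (h0 : ∀ z, 0 < f z) (a : ℝ) :
    SmoothPeriodic fun z => f z ^ a where
  contDiff := hf.contDiff.rpow_const_of_ne fun z => (h0 z).ne'
  time_periodic t x := by rw [hf.time_periodic]
  space_periodic t x k := congrArg (· ^ a) (hf.space_periodic t x k)

theorem comp_fst {h : ℝ → ℝ} (hh : ContDiff ℝ (⊤ : ℕ∞) h) (hper : ∀ t, h (t + 1) = h t) :
    SmoothPeriodic fun z : SpaceTime d => h z.1 :=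
  ⟨hh.comp contDiff_fst, fun t _ => hper t, fun _ _ _ => rfl⟩

theorem comp_snd_apply {h : ℝ → ℝ} (hh : ContDiff ℝ (⊤ : ℕ∞) h)
    (hper : ∀ y (k : ℤ), h (y + k) = h y) (l : Fin d) :
    SmoothPeriodic fun z : SpaceTime d => h (z.2 l) :=
  ⟨hh.comp ((contDiff_apply ℝ ℝ l).comp contDiff_snd), fun _ _ => rfl, fun _ _ _ => hper _ _⟩

protected theorem fderiv (hF : SmoothPeriodic F) : SmoothPeriodic (fderiv ℝ F) where
  contDiff := hF.contDiff.fderiv_right le_rfl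
  time_periodic t x := by
    have hper : (fun z => F (z + (1, 0))) = F := funext fun z => by
      simpa [Prod.add_def] using hF.time_periodic z.1 z.2
    simpa [hper] using (fderiv_comp_add_right (𝕜 := ℝ) (f := F) (x := (t, x)) (1, 0)).symm
  space_periodic t x k := by
    have hper : (fun z => F (z + (0, fun i => (k i : ℝ)))) = F := funext fun z => by
      simpa [Prod.add_def] using hF.space_periodic z.1 z.2 k
    simpa [hper] using
      (fderiv_comp_add_right (𝕜 := ℝ) (f := F) (x := (t, x)) (0, fun i => (k i : ℝ))).symm

@[fun_prop]
protected theorem dirDeriv (v : SpaceTime d) (hf : SmoothPeriodic f) :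
    SmoothPeriodic (dirDeriv v f) where
  contDiff := hf.fderiv.contDiff.clm_apply contDiff_const
  time_periodic t x := by rw [dirDeriv, hf.fderiv.time_periodic, dirDeriv]
  space_periodic t x k := congrArg (· v) (hf.fderiv.space_periodic t x k)

theorem exists_norm_le (hF : SmoothPeriodic F) : ∃ C : ℝ, 0 < C ∧ ∀ z, ‖F z‖ ≤ C := by
  obtain ⟨C, hC⟩ := (isCompact_Icc.prod isCompact_Icc :
    IsCompact (Set.Icc (0 : ℝ) 1 ×ˢ fundCube d)).exists_bound_of_continuousOn
      hF.continuous.continuousOn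
  refine ⟨max C 1, by positivity, fun ⟨t, x⟩ => ?_⟩
  have hfract : F (t, x) = F (Int.fract t, fun i => Int.fract (x i)) := by
    have ht : Function.Periodic (fun t => F (t, x)) 1 := fun t => hF.time_periodic t x
    have hx := hF.space_periodic (Int.fract t) (fun i => Int.fract (x i)) fun i => ⌊x i⌋
    rw [show (fun i => Int.fract (x i)) + (fun i => (⌊x i⌋ : ℝ)) = x from
      funext fun i => Int.fract_add_floor (x i)] at hx
    have hfloor := (ht.sub_zsmul_eq (x := t) ⌊t⌋).symm
    rw [zsmul_one, Int.self_sub_floor] at hfloor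
    exact hfloor.trans hx
  rw [hfract]
  exact (hC _ ⟨⟨Int.fract_nonneg _, (Int.fract_lt_one _).le⟩, fun i => Int.fract_nonneg _,
    fun i => (Int.fract_lt_one _).le⟩).trans (le_max_left _ _)

theorem exists_norm_sub_le (hF : SmoothPeriodic F) :
    ∃ C : ℝ, 0 < C ∧ ∀ z z', ‖F z' - F z‖ ≤ C * ‖z' - z‖ := by
  obtain ⟨C, hC0, hC⟩ := hF.fderiv.exists_norm_le
  exact ⟨C, hC0, fun z z' => convex_univ.norm_image_sub_le_of_norm_fderiv_le
    (fun x _ => hF.differentiable x) (fun x _ => hC x) trivial trivial⟩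

end SmoothPeriodic

section DirDeriv

variable {d : ℕ} {F G : SpaceTime d → ℝ} (v : SpaceTime d)

theorem dirDeriv_add (hF : SmoothPeriodic F) (hG : SmoothPeriodic G) (z : SpaceTime d) :
    dirDeriv v (fun z => F z + G z) z = dirDeriv v F z + dirDeriv v G z := by
  rw [dirDeriv, fderiv_fun_add (hF.differentiable z) (hG.differentiable z)]
  rfl

theorem dirDeriv_sub (hF : SmoothPeriodic F) (hG : SmoothPeriodic G) (z : SpaceTime d) :
    dirDeriv v (fun z => F z - G z) z = dirDeriv v F z - dirDeriv v G z := by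
  rw [dirDeriv, fderiv_fun_sub (hF.differentiable z) (hG.differentiable z)]
  rfl

theorem dirDeriv_neg (z : SpaceTime d) : dirDeriv v (fun z => -F z) z = -dirDeriv v F z := by
  rw [dirDeriv, fderiv_fun_neg]
  rfl

theorem dirDeriv_mul (hF : SmoothPeriodic F) (hG : SmoothPeriodic G) (z : SpaceTime d) :
    dirDeriv v (fun z => F z * G z) z = dirDeriv v F z * G z + F z * dirDeriv v G z := by
  rw [dirDeriv, fderiv_fun_mul (hF.differentiable z) (hG.differentiable z)]
  simp only [dirDeriv, add_apply, smul_apply, smul_eq_mul]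
  ring

theorem dirDeriv_const_mul (c : ℝ) (hF : SmoothPeriodic F) (z : SpaceTime d) :
    dirDeriv v (fun z => c * F z) z = c * dirDeriv v F z := by
  rw [dirDeriv, fderiv_const_mul (hF.differentiable z)]
  rfl

theorem dirDeriv_sum {ι : Type*} {s : Finset ι} {F : ι → SpaceTime d → ℝ}
    (h : ∀ i ∈ s, SmoothPeriodic (F i)) (z : SpaceTime d) :
    dirDeriv v (fun z => ∑ i ∈ s, F i z) z = ∑ i ∈ s, dirDeriv v (F i) z := by
  rw [dirDeriv, fderiv_fun_sum fun i hi => (h i hi).differentiable z]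
  simp only [sum_apply, dirDeriv]

theorem dirDeriv_prod {ι : Type*} [DecidableEq ι] {s : Finset ι} {F : ι → SpaceTime d → ℝ}
    (h : ∀ i ∈ s, SmoothPeriodic (F i)) (z : SpaceTime d) :
    dirDeriv v (fun z => ∏ i ∈ s, F i z) z =
      ∑ i ∈ s, (∏ j ∈ s.erase i, F j z) * dirDeriv v (F i) z := by
  rw [dirDeriv, (HasFDerivAt.finsetProd fun i hi =>
    ((h i hi).differentiable z).hasFDerivAt).fderiv]
  simp only [sum_apply, smul_apply, smul_eq_mul, dirDeriv]

theorem dirDeriv_comm (hF : SmoothPeriodic F) (v w : SpaceTime d) (z : SpaceTime d) :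
    dirDeriv v (dirDeriv w F) z = dirDeriv w (dirDeriv v F) z := by
  have hsymm : IsSymmSndFDerivAt ℝ F z :=
    hF.contDiff.contDiffAt.isSymmSndFDerivAt (by
      rw [minSmoothness_of_isRCLikeNormedField]
      exact WithTop.coe_le_coe.2 le_top)
  have hsecond (a b : SpaceTime d) : dirDeriv a (dirDeriv b F) z = fderiv ℝ (fderiv ℝ F) z a b := by
    unfold dirDeriv
    rw [fderiv_clm_apply (hF.fderiv.differentiable z) (differentiableAt_const b)]
    simp
  rw [hsecond, hsecond, hsymm v w]

theorem dirDeriv_comp_fst {f f' : ℝ → ℝ} (hf : ∀ t, HasDerivAt f (f' t) t) (z : SpaceTime d) :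
    dirDeriv v (fun z : SpaceTime d => f z.1) z = v.1 * f' z.1 := by
  have h := (hf z.1).comp_hasFDerivAt z (hasFDerivAt_fst (𝕜 := ℝ) (E := ℝ) (F := Vec d) (p := z))
  rw [dirDeriv, show (fun z : SpaceTime d => f z.1) = f ∘ Prod.fst from rfl, h.fderiv]
  simp [mul_comm]

theorem dirDeriv_comp_snd_apply {f f' : ℝ → ℝ} (hf : ∀ t, HasDerivAt f (f' t) t) (l : Fin d)
    (z : SpaceTime d) :
    dirDeriv v (fun z : SpaceTime d => f (z.2 l)) z = v.2 l * f' (z.2 l) := by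
  have h := (hf (z.2 l)).comp_hasFDerivAt z ((ContinuousLinearMap.proj (R := ℝ)
    (φ := fun _ : Fin d => ℝ) l).comp (ContinuousLinearMap.snd ℝ ℝ (Vec d))).hasFDerivAt
  rw [dirDeriv, show (fun z : SpaceTime d => f (z.2 l)) = f ∘ ((ContinuousLinearMap.proj (R := ℝ)
    (φ := fun _ : Fin d => ℝ) l).comp (ContinuousLinearMap.snd ℝ ℝ (Vec d))) from rfl, h.fderiv]
  simp [mul_comm]

theorem fderiv_slice_single (hF : SmoothPeriodic F) (t : ℝ) (x : Vec d) (k : Fin d) :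
    fderiv ℝ (fun x => F (t, x)) x (Pi.single k 1) = dirDeriv (spaceDir k) F (t, x) := by
  have h := (hF.differentiable (t, x)).hasFDerivAt.comp x
    (hasFDerivAt_prodMk_right (𝕜 := ℝ) t x)
  rw [show (fun x => F (t, x)) = F ∘ Prod.mk t from rfl, h.fderiv]
  simp [dirDeriv, spaceDir]

theorem hasDerivAt_slice (hF : SmoothPeriodic F) (t : ℝ) (x : Vec d) :
    HasDerivAt (fun t => F (t, x)) (dirDeriv (timeDir d) F (t, x)) t :=
  (hF.differentiable (t, x)).hasFDerivAt.comp_hasDerivAt t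
    ((hasDerivAt_id t).prodMk (hasDerivAt_const t x))

end DirDeriv

section Integration

variable {d : ℕ} {F : SpaceTime d → ℝ}

theorem integrableOn_fundCube {f : Vec d → ℝ} (hf : Continuous f) :
    IntegrableOn f (fundCube d) := hf.continuousOn.integrableOn_compact isCompact_Icc

theorem SmoothPeriodic.hasDerivAt_integral (hF : SmoothPeriodic F) (t : ℝ) :
    HasDerivAt (fun t => ∫ x in fundCube d, F (t, x))
      (∫ x in fundCube d, dirDeriv (timeDir d) F (t, x)) t := by
  obtain ⟨C, -, hC⟩ := (hF.dirDeriv (timeDir d)).exists_norm_le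
  exact (hasDerivAt_integral_of_dominated_loc_of_deriv_le Filter.univ_mem
    (.of_forall fun t => (hF.continuous_slice t).aestronglyMeasurable)
    (integrableOn_fundCube (hF.continuous_slice t))
    ((hF.dirDeriv (timeDir d)).continuous_slice t).aestronglyMeasurable
    (ae_of_all _ fun x t _ => hC (t, x)) (integrable_const C)
    (ae_of_all _ fun x t _ => hasDerivAt_slice hF t x)).2

theorem SmoothPeriodic.contDiff_integral (hF : SmoothPeriodic F) :
    ContDiff ℝ (⊤ : ℕ∞) fun t => ∫ x in fundCube d, F (t, x) := by
  refine contDiff_infty.2 fun n => ?_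
  induction n generalizing F with
  | zero =>
    rw [Nat.cast_zero, contDiff_zero]
    exact continuous_iff_continuousAt.2 fun t => (hF.hasDerivAt_integral t).continuousAt
  | succ n ih =>
    push_cast
    rw [contDiff_succ_iff_deriv, funext fun t => (hF.hasDerivAt_integral t).deriv]
    exact ⟨fun t => (hF.hasDerivAt_integral t).differentiableAt, by simp, ih (hF.dirDeriv _)⟩

theorem SmoothPeriodic.integral_space (hF : SmoothPeriodic F) :
    SmoothPeriodic fun z : SpaceTime d => ∫ x in fundCube d, F (z.1, x) :=
  .comp_fst hF.contDiff_integral fun t => by simp only [hF.time_periodic]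

/-- Differentiate the constant function `s ↦ ∫ f (x + s v) dx` at `s = 0`. -/
theorem ZPer.integral_fderiv_eq_zero {f : Vec d → ℝ} (hf : ContDiff ℝ (⊤ : ℕ∞) f) (hper : ZPer f)
    (v : Vec d) : ∫ x in fundCube d, fderiv ℝ f x v = 0 := by
  have hsp : SmoothPeriodic fun z : SpaceTime d => f z.2 :=
    ⟨hf.comp contDiff_snd, fun _ _ => rfl, fun _ => hper⟩
  have hline (x : Vec d) (s : ℝ) :
      HasDerivAt (fun s : ℝ => f (x + s • v)) (fderiv ℝ f (x + s • v) v) s := by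
    have h : HasDerivAt (fun s : ℝ => x + s • v) v s := by
      simpa using ((hasDerivAt_id s).smul_const v).const_add x
    exact (hf.differentiable (by simp) _).hasFDerivAt.comp_hasDerivAt s h
  obtain ⟨C, hC0, hC⟩ := hsp.exists_norm_sub_le
  have hlip : LipschitzWith C.toNNReal f := LipschitzWith.of_dist_le_mul fun x y => by
    simpa [dist_eq_norm, Prod.norm_def, hC0.le] using hC (0, y) (0, x)
  have hfd : Continuous fun x => fderiv ℝ f x v :=
    (hf.continuous_fderiv (by simp)).clm_apply continuous_const
  have hderiv := (hasDerivAt_integral_of_dominated_loc_of_deriv_le (μ := torusVol d)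
    (F := fun (s : ℝ) x => f (x + s • v)) (x₀ := 0) Filter.univ_mem
    (.of_forall fun s => (hf.continuous.comp (continuous_add_const _)).aestronglyMeasurable)
    (by simpa [IntegrableOn] using integrableOn_fundCube hf.continuous)
    (by simpa using hfd.aestronglyMeasurable)
    (ae_of_all _ fun x s _ => ((fderiv ℝ f _).le_opNorm v).trans
      (mul_le_mul_of_nonneg_right (norm_fderiv_le_of_lipschitz ℝ hlip) (norm_nonneg v)))
    (integrable_const _) (ae_of_all _ fun x s _ => hline x s)).2
  simp only [hper.integral_add_right, zero_smul, add_zero] at hderiv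
  exact hderiv.unique (hasDerivAt_const _ _)

theorem integral_dirDeriv_mul (hF : SmoothPeriodic F) (t : ℝ) (k : Fin d) {φ : Vec d → ℝ}
    (hφ : ContDiff ℝ (⊤ : ℕ∞) φ) (hper : ZPer φ) :
    ∫ x in fundCube d, dirDeriv (spaceDir k) F (t, x) * φ x =
      -∫ x in fundCube d, F (t, x) * fderiv ℝ φ x (Pi.single k 1) := by
  have hfd : Continuous fun x => fderiv ℝ φ x (Pi.single k 1) :=
    (hφ.continuous_fderiv (by simp)).clm_apply continuous_const
  have hleibniz (x : Vec d) : fderiv ℝ (fun x => F (t, x) * φ x) x (Pi.single k 1) =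
      F (t, x) * fderiv ℝ φ x (Pi.single k 1) + dirDeriv (spaceDir k) F (t, x) * φ x := by
    rw [fderiv_fun_mul ((hF.contDiff_slice t).differentiable (by simp) x)
      (hφ.differentiable (by simp) x), ← fderiv_slice_single hF]
    simp only [add_apply, smul_apply, smul_eq_mul]
    ring
  have hzero := ZPer.integral_fderiv_eq_zero ((hF.contDiff_slice t).mul hφ)
    (fun x n => congrArg₂ (· * ·) (hF.space_periodic t x n) (hper x n)) (Pi.single k 1)
  simp_rw [hleibniz] at hzero
  rw [integral_add (integrableOn_fundCube ((hF.continuous_slice t).fun_mul hfd))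
    (integrableOn_fundCube (((hF.dirDeriv _).continuous_slice t).fun_mul hφ.continuous))] at hzero
  linarith

theorem integral_dirDeriv_eq_zero (hF : SmoothPeriodic F) (t : ℝ) (k : Fin d) :
    ∫ x in fundCube d, dirDeriv (spaceDir k) F (t, x) = 0 := by
  simpa using integral_dirDeriv_mul hF t k (φ := fun _ => 1) contDiff_const fun _ _ => rfl

theorem CkN_nonneg (N : ℕ) (φ : Vec d → ℝ) : 0 ≤ CkN N φ :=
  Finset.sum_nonneg fun _ _ => Real.sSup_nonneg (by rintro _ ⟨y, _, rfl⟩; exact norm_nonneg _)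

theorem abs_fderiv_single_le_CkN_one {φ : Vec d → ℝ} (hφ : ContDiff ℝ (⊤ : ℕ∞) φ) {x : Vec d}
    (hx : x ∈ fundCube d) (k : Fin d) : |fderiv ℝ φ x (Pi.single k 1)| ≤ CkN 1 φ := by
  have hcont : Continuous fun x => ‖iteratedFDeriv ℝ 1 φ x‖ :=
    (hφ.continuous_iteratedFDeriv (by simp)).norm
  calc |fderiv ℝ φ x (Pi.single k 1)|
      ≤ ‖fderiv ℝ φ x‖ := by
        simpa [Pi.norm_single] using (fderiv ℝ φ x).le_opNorm (Pi.single k 1)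
    _ = ‖iteratedFDeriv ℝ 1 φ x‖ := by rw [norm_iteratedFDeriv_one]
    _ ≤ sSup ((fun x => ‖iteratedFDeriv ℝ 1 φ x‖) '' fundCube d) :=
        le_csSup (isCompact_Icc.image hcont).bddAbove ⟨x, hx, rfl⟩
    _ ≤ CkN 1 φ := by
        rw [CkN, Finset.sum_range_succ]
        exact le_add_of_nonneg_left (Finset.sum_nonneg fun i _ =>
          Real.sSup_nonneg (by rintro _ ⟨y, _, rfl⟩; exact norm_nonneg _))

end Integration

local notation "∂ₜ" => dirDeriv (timeDir _)
local notation "∂[" k "]" => dirDeriv (spaceDir k)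

/-! ### Divergences and divergence-free fields -/

/-- The spatial divergence of a space-time dependent vector field. -/
noncomputable def spaceDiv {d : ℕ} (F : SpaceTime d → Vec d) (z : SpaceTime d) : ℝ :=
  ∑ k, ∂[k] (fun z => F z k) z

/-- The rotated gradient of `ψ` in the plane spanned by the coordinate directions `i` and `j`. -/
noncomputable def rotGrad {d : ℕ} (i j : Fin d) (ψ : SpaceTime d → ℝ) (z : SpaceTime d) : Vec d :=
  Pi.single i (∂[j] ψ z) - Pi.single j (∂[i] ψ z)

section SpaceDiv

variable {d : ℕ} {F G : SpaceTime d → Vec d} {ψ : SpaceTime d → ℝ}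

theorem divV_slice (hF : SmoothPeriodic F) (t : ℝ) (x : Vec d) :
    divV (fun x => F (t, x)) x = spaceDiv F (t, x) :=
  Finset.sum_congr rfl fun k _ => fderiv_slice_single (hF.apply k) t x k

theorem spaceDiv_zero (z : SpaceTime d) : spaceDiv (fun _ => 0) z = 0 := by
  simp [spaceDiv, dirDeriv]

theorem spaceDiv_add (hF : SmoothPeriodic F) (hG : SmoothPeriodic G) (z : SpaceTime d) :
    spaceDiv (fun z => F z + G z) z = spaceDiv F z + spaceDiv G z := by
  simp only [spaceDiv, ← Finset.sum_add_distrib, Pi.add_apply]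
  exact Finset.sum_congr rfl fun k _ => dirDeriv_add _ (hF.apply k) (hG.apply k) z

theorem spaceDiv_sub (hF : SmoothPeriodic F) (hG : SmoothPeriodic G) (z : SpaceTime d) :
    spaceDiv (fun z => F z - G z) z = spaceDiv F z - spaceDiv G z := by
  simp only [spaceDiv, ← Finset.sum_sub_distrib, Pi.sub_apply]
  exact Finset.sum_congr rfl fun k _ => dirDeriv_sub _ (hF.apply k) (hG.apply k) z

theorem spaceDiv_sum {ι : Type*} {s : Finset ι} {F : ι → SpaceTime d → Vec d}
    (h : ∀ i ∈ s, SmoothPeriodic (F i)) (z : SpaceTime d) :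
    spaceDiv (fun z => ∑ i ∈ s, F i z) z = ∑ i ∈ s, spaceDiv (F i) z := by
  simp only [spaceDiv, Finset.sum_apply]
  rw [Finset.sum_comm]
  exact Finset.sum_congr rfl fun k _ => dirDeriv_sum _ (fun i hi => (h i hi).apply k) z

theorem dirDeriv_single_apply (i k : Fin d) (v z : SpaceTime d) :
    dirDeriv v (fun z => (Pi.single i (ψ z) : Vec d) k) z =
      (Pi.single i (dirDeriv v ψ z) : Vec d) k := by
  rcases eq_or_ne k i with rfl | hk
  · simp only [Pi.single_eq_same]
  · simp [Pi.single_eq_of_ne hk, dirDeriv]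

theorem spaceDiv_single (i : Fin d) (z : SpaceTime d) :
    spaceDiv (fun z => Pi.single i (ψ z)) z = ∂[i] ψ z := by
  simp only [spaceDiv, dirDeriv_single_apply]
  simp [Pi.single_apply]

theorem SmoothPeriodic.rotGrad (i j : Fin d) (hψ : SmoothPeriodic ψ) :
    SmoothPeriodic (rotGrad i j ψ) :=
  ((hψ.dirDeriv _).single i).sub ((hψ.dirDeriv _).single j)

theorem spaceDiv_rotGrad (i j : Fin d) (hψ : SmoothPeriodic ψ) (z : SpaceTime d) :
    spaceDiv (rotGrad i j ψ) z = 0 := by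
  unfold rotGrad
  rw [spaceDiv_sub (by fun_prop) (by fun_prop), spaceDiv_single, spaceDiv_single,
    dirDeriv_comm hψ, sub_self]

end SpaceDiv

section Interaction

variable {d : ℕ} {ρ θ θ' : SpaceTime d → ℝ} {u w w' : SpaceTime d → Vec d}

/-- The flux created by perturbing `(ρ, u)` by `(θ, w)`. -/
def interaction (ρ : SpaceTime d → ℝ) (u : SpaceTime d → Vec d) (θ : SpaceTime d → ℝ)
    (w : SpaceTime d → Vec d) (z : SpaceTime d) : Vec d := θ z • u z + ρ z • w z + θ z • w z

theorem smul_add_eq_add_interaction : (fun z => (ρ z + θ z) • (u z + w z)) =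
    fun z => ρ z • u z + interaction ρ u θ w z := by
  ext1 z
  simp only [interaction]
  module

theorem interaction_add : interaction ρ u (fun z => θ z + θ' z) (fun z => w z + w' z) =
    fun z => interaction ρ u θ w z
      + interaction (fun z => ρ z + θ z) (fun z => u z + w z) θ' w' z := by
  ext1 z
  simp only [interaction]
  module

@[fun_prop]
theorem SmoothPeriodic.interaction (hρ : SmoothPeriodic ρ) (hu : SmoothPeriodic u)
    (hθ : SmoothPeriodic θ) (hw : SmoothPeriodic w) : SmoothPeriodic (interaction ρ u θ w) := by
  unfold _root_.interaction
  fun_prop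

end Interaction

/-! ### Building blocks -/

/-- Parameters of a building block: the direction `i` of the transported defect, the direction `j`
of oscillation, the concentrations `μ` (space) and `κ` (time), the frequencies `lam` (space) and
`σ` (time), and the amplitudes `c₁` (density) and `c₂` (velocity). -/
structure BlockParams (d : ℕ) where
  i : Fin d
  j : Fin d
  j_ne_i : j ≠ i
  μ : ℝ
  one_le_μ : 1 ≤ μ
  κ : ℝ
  one_le_κ : 1 ≤ κ
  σ : ℕ
  one_le_σ : 1 ≤ σ
  lam : ℕ
  one_le_lam : 1 ≤ lam
  c₁ : ℝ
  c₂ : ℝ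
  c₁_pos : 0 < c₁
  c₂_pos : 0 < c₂
  c₁_mul_c₂ : c₁ * c₂ = κ * μ ^ (d - 1)

namespace BlockParams

variable {d : ℕ} (q : BlockParams d)

/-- The spatial length scale of a building block. -/
noncomputable def η : ℝ := (q.lam * q.μ)⁻¹

/-- The `n`-th derivative profile, concentrated and oscillating in time. -/
noncomputable def timeProf (n : ℕ) (z : SpaceTime d) : ℝ := conc n q.κ (q.σ * z.1)

/-- A periodic primitive (up to the factor `σ`) of `κ * timeProf 1 ^ 2 - 1`. -/
noncomputable def timePrim (z : SpaceTime d) : ℝ := concPrim q.κ (q.σ * z.1)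

/-- The `n`-th derivative profile, concentrated and oscillating in the coordinate `x l`. -/
noncomputable def coordProf (n : ℕ) (l : Fin d) (z : SpaceTime d) : ℝ :=
  conc n q.μ (q.lam * z.2 l)

/-- The normalized mass density `μ * coordProf 1 l ^ 2` in the coordinate `x l`. -/
noncomputable def coordMass (l : Fin d) (z : SpaceTime d) : ℝ := q.μ * q.coordProf 1 l z ^ 2

/-- A periodic primitive (up to the factor `lam`) of `coordMass l - 1` in the coordinate `x l`. -/
noncomputable def coordPrim (l : Fin d) (z : SpaceTime d) : ℝ := concPrim q.μ (q.lam * z.2 l)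

/-- The directions transverse to `i`. -/
def transverse : Finset (Fin d) := Finset.univ.erase q.i

/-- The product of the coordinate profiles of orders `a l` over the transverse directions. -/
noncomputable def pipe (a : Fin d → ℕ) (z : SpaceTime d) : ℝ :=
  ∏ l ∈ q.transverse, q.coordProf (a l) l z

/-- The profile of the potentials; differentiating it in direction `j` gives `pipe 1`. -/
noncomputable def pipePot : SpaceTime d → ℝ := q.pipe (Function.update 1 q.j 0)

/-- The directions transverse to `i` that precede `l`. -/
def transverseBelow (l : Fin d) : Finset (Fin d) := q.transverse.filter (· < l)

/-- The `l`-th term of the telescoping primitive of `∏ coordMass - 1`. -/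
noncomputable def pipePrim (l : Fin d) (z : SpaceTime d) : ℝ :=
  (∏ m ∈ q.transverseBelow l, q.coordMass m z) * q.coordPrim l z

theorem lam_pos : (0 : ℝ) < q.lam := by exact_mod_cast q.one_le_lam

theorem σ_pos : (0 : ℝ) < q.σ := by exact_mod_cast q.one_le_σ

theorem μ_pos : 0 < q.μ := one_pos.trans_le q.one_le_μ

theorem κ_pos : 0 < q.κ := one_pos.trans_le q.one_le_κ

theorem η_pos : 0 < q.η := inv_pos.2 (mul_pos q.lam_pos q.μ_pos)

theorem η_mul : q.η * (q.lam * q.μ) = 1 := inv_mul_cancel₀ (mul_pos q.lam_pos q.μ_pos).ne'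

theorem j_mem_transverse : q.j ∈ q.transverse := by simp [transverse, q.j_ne_i]

theorem ne_i_of_mem_transverse {l : Fin d} (hl : l ∈ q.transverse) : l ≠ q.i :=
  (Finset.mem_erase.1 hl).1

theorem card_transverse : q.transverse.card = d - 1 := by simp [transverse]

end BlockParams

theorem spaceDir_snd {d : ℕ} (k l : Fin d) :
    (spaceDir k : SpaceTime d).2 l = if l = k then 1 else 0 := by simp [spaceDir, Pi.single_apply]

section Rescaling

variable {f f' : ℝ → ℝ}

theorem hasDerivAt_comp_const_mul (hf : ∀ y, HasDerivAt f (f' y) y) (n t : ℝ) :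
    HasDerivAt (fun t => f (n * t)) (n * f' (n * t)) t := by
  simpa [mul_comm, Function.comp_def] using (hf (n * t)).comp t ((hasDerivAt_id t).const_mul n)

theorem comp_natCast_mul_add_int (hf : ∀ y (k : ℤ), f (y + k) = f y) (n : ℕ) (y : ℝ) (k : ℤ) :
    f (n * (y + k)) = f (n * y) := by
  rw [← hf (n * y) (n * k)]
  push_cast
  ring_nf

end Rescaling

namespace BlockParams

variable {d : ℕ} (q : BlockParams d)

@[fun_prop]
theorem smoothPeriodic_timeProf (n : ℕ) : SmoothPeriodic (q.timeProf n) :=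
  .comp_fst ((contDiff_conc q.one_le_κ n).comp (by fun_prop)) fun t => by
    simpa using comp_natCast_mul_add_int (conc_add_int n q.κ) q.σ t 1

@[fun_prop]
theorem smoothPeriodic_timePrim : SmoothPeriodic q.timePrim :=
  .comp_fst ((contDiff_concPrim q.one_le_κ).comp (by fun_prop)) fun t => by
    simpa using comp_natCast_mul_add_int (concPrim_add_int q.one_le_κ) q.σ t 1

@[fun_prop]
theorem smoothPeriodic_coordProf (n : ℕ) (l : Fin d) : SmoothPeriodic (q.coordProf n l) :=
  .comp_snd_apply (h := fun y => conc n q.μ (q.lam * y))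
    ((contDiff_conc q.one_le_μ n).comp (by fun_prop))
    (comp_natCast_mul_add_int (conc_add_int n q.μ) q.lam) l

@[fun_prop]
theorem smoothPeriodic_coordPrim (l : Fin d) : SmoothPeriodic (q.coordPrim l) :=
  .comp_snd_apply (h := fun y => concPrim q.μ (q.lam * y))
    ((contDiff_concPrim q.one_le_μ).comp (by fun_prop))
    (comp_natCast_mul_add_int (concPrim_add_int q.one_le_μ) q.lam) l

@[fun_prop]
theorem smoothPeriodic_coordMass (l : Fin d) : SmoothPeriodic (q.coordMass l) := by
  unfold coordMass
  fun_prop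

@[fun_prop]
theorem smoothPeriodic_pipe (a : Fin d → ℕ) : SmoothPeriodic (q.pipe a) :=
  .prod fun l _ => q.smoothPeriodic_coordProf _ l

@[fun_prop]
theorem smoothPeriodic_pipePot : SmoothPeriodic q.pipePot := q.smoothPeriodic_pipe _

@[fun_prop]
theorem smoothPeriodic_pipePrim (l : Fin d) : SmoothPeriodic (q.pipePrim l) :=
  (SmoothPeriodic.prod fun m _ => q.smoothPeriodic_coordMass m).mul (q.smoothPeriodic_coordPrim l)

section Derivatives

variable (v : SpaceTime d) (z : SpaceTime d)

theorem dirDeriv_timeProf (n : ℕ) :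
    dirDeriv v (q.timeProf n) z = v.1 * (q.σ * (q.κ * q.timeProf (n + 1) z)) :=
  dirDeriv_comp_fst v (hasDerivAt_comp_const_mul (hasDerivAt_conc q.one_le_κ n) q.σ) z

theorem dirDeriv_timePrim :
    dirDeriv v q.timePrim z = v.1 * (q.σ * (q.κ * q.timeProf 1 z ^ 2 - 1)) :=
  dirDeriv_comp_fst v (hasDerivAt_comp_const_mul (hasDerivAt_concPrim q.one_le_κ) q.σ) z

theorem dirDeriv_coordProf (n : ℕ) (l : Fin d) :
    dirDeriv v (q.coordProf n l) z = v.2 l * (q.lam * (q.μ * q.coordProf (n + 1) l z)) :=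
  dirDeriv_comp_snd_apply (f := fun y => conc n q.μ (q.lam * y)) v
    (hasDerivAt_comp_const_mul (hasDerivAt_conc q.one_le_μ n) q.lam) l z

theorem dirDeriv_coordPrim (l : Fin d) :
    dirDeriv v (q.coordPrim l) z = v.2 l * (q.lam * (q.coordMass l z - 1)) :=
  dirDeriv_comp_snd_apply (f := fun y => concPrim q.μ (q.lam * y)) v
    (hasDerivAt_comp_const_mul (hasDerivAt_concPrim q.one_le_μ) q.lam) l z

theorem dirDeriv_coordMass_eq_zero {l : Fin d} (hv : v.2 l = 0) :
    dirDeriv v (q.coordMass l) z = 0 := by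
  unfold coordMass
  simp only [pow_two]
  rw [dirDeriv_const_mul _ _ (by fun_prop), dirDeriv_mul _ (by fun_prop) (by fun_prop),
    dirDeriv_coordProf, hv]
  ring

theorem dirDeriv_pipe_eq_zero (hv : ∀ l ∈ q.transverse, v.2 l = 0) (a : Fin d → ℕ) :
    dirDeriv v (q.pipe a) z = 0 := by
  unfold pipe
  rw [dirDeriv_prod _ fun l _ => q.smoothPeriodic_coordProf _ l]
  exact Finset.sum_eq_zero fun l hl => by rw [dirDeriv_coordProf, hv l hl]; ring

theorem dirDeriv_spaceDir_pipe {k : Fin d} (hk : k ∈ q.transverse) (a : Fin d → ℕ) :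
    ∂[k] (q.pipe a) z = q.lam * q.μ * q.pipe (Function.update a k (a k + 1)) z := by
  unfold pipe
  rw [dirDeriv_prod _ fun l _ => q.smoothPeriodic_coordProf _ l, Finset.sum_eq_single_of_mem k hk]
  · have hrest : ∏ l ∈ q.transverse.erase k, q.coordProf (Function.update a k (a k + 1) l) l z =
        ∏ l ∈ q.transverse.erase k, q.coordProf (a l) l z :=
      Finset.prod_congr rfl fun l hl => by rw [Function.update_of_ne (Finset.ne_of_mem_erase hl)]
    rw [dirDeriv_coordProf, spaceDir_snd, if_pos rfl, ← Finset.mul_prod_erase _ _ hk,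
      Function.update_self, hrest]
    ring
  · intro l _ hl
    rw [dirDeriv_coordProf, spaceDir_snd, if_neg hl]
    ring

theorem dirDeriv_i_pipe (a : Fin d → ℕ) : ∂[q.i] (q.pipe a) z = 0 :=
  q.dirDeriv_pipe_eq_zero _ z
    (fun l hl => by rw [spaceDir_snd, if_neg (q.ne_i_of_mem_transverse hl)]) a

theorem dirDeriv_j_pipePot : ∂[q.j] q.pipePot z = q.lam * q.μ * q.pipe 1 z := by
  rw [pipePot, dirDeriv_spaceDir_pipe _ _ q.j_mem_transverse, Function.update_self,
    Function.update_idem, zero_add, ← Pi.one_apply (M := fun _ => ℕ) q.j, Function.update_eq_self]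

theorem dirDeriv_pipePrim {l : Fin d} (hv : ∀ m ∈ q.transverseBelow l, v.2 m = 0) :
    dirDeriv v (q.pipePrim l) z = v.2 l *
      (q.lam * ((∏ m ∈ q.transverseBelow l, q.coordMass m z) * (q.coordMass l z - 1))) := by
  unfold pipePrim
  rw [dirDeriv_mul _ (.prod fun m _ => q.smoothPeriodic_coordMass m) (by fun_prop),
    dirDeriv_coordPrim, dirDeriv_prod _ fun m _ => q.smoothPeriodic_coordMass m,
    Finset.sum_eq_zero fun m hm => by rw [q.dirDeriv_coordMass_eq_zero v z (hv m hm), mul_zero]]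
  ring

theorem dirDeriv_self_pipePrim (l : Fin d) : ∂[l] (q.pipePrim l) z =
    q.lam * ((∏ m ∈ q.transverseBelow l, q.coordMass m z) * (q.coordMass l z - 1)) := by
  rw [dirDeriv_pipePrim, spaceDir_snd, if_pos rfl, one_mul]
  exact fun m hm => by rw [spaceDir_snd, if_neg (Finset.mem_filter.1 hm).2.ne]

theorem dirDeriv_i_pipePrim {l : Fin d} (hl : l ∈ q.transverse) : ∂[q.i] (q.pipePrim l) z = 0 := by
  rw [dirDeriv_pipePrim, spaceDir_snd, if_neg (q.ne_i_of_mem_transverse hl), zero_mul]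
  exact fun m hm => by
    rw [spaceDir_snd, if_neg (q.ne_i_of_mem_transverse (Finset.mem_filter.1 hm).1)]

theorem prod_coordMass :
    ∏ l ∈ q.transverse, q.coordMass l z = q.μ ^ (d - 1) * q.pipe 1 z ^ 2 := by
  simp only [coordMass, pipe, Pi.one_apply, Finset.prod_mul_distrib, Finset.prod_const,
    q.card_transverse, Finset.prod_pow]

theorem sum_telescope :
    ∑ l ∈ q.transverse, (∏ m ∈ q.transverseBelow l, q.coordMass m z) * (q.coordMass l z - 1) =
      q.μ ^ (d - 1) * q.pipe 1 z ^ 2 - 1 := by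
  have h := Finset.prod_sub_ordered q.transverse (fun _ => (1 : ℝ)) fun l => 1 - q.coordMass l z
  simp only [_root_.sub_sub_cancel, Finset.prod_const_one, mul_one, prod_coordMass] at h
  rw [h, sub_sub_cancel_left, ← Finset.sum_neg_distrib]
  exact Finset.sum_congr rfl fun l _ => by rw [transverseBelow]; ring

end Derivatives

/-! ### The corrector of a single defect -/

section Corrector

/-- The potential of amplitude `c` modulated by the slow function `A`. -/
noncomputable def potential (c : ℝ) (A : SpaceTime d → ℝ) (z : SpaceTime d) : ℝ :=
  c * q.η * (q.timeProf 1 z * (A z * q.pipePot z))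

/-- The potential of the temporal corrector. -/
noncomputable def timeCorr (f : SpaceTime d → ℝ) (z : SpaceTime d) : ℝ :=
  (q.σ : ℝ)⁻¹ * (q.timePrim z * f z)

/-- The potentials of the spatial corrector. -/
noncomputable def pipeCorr (f : SpaceTime d → ℝ) (l : Fin d) (z : SpaceTime d) : ℝ :=
  (q.lam : ℝ)⁻¹ * q.κ * (q.timeProf 1 z * q.timeProf 1 z * (f z * q.pipePrim l z))

/-- The slow flux `-A B` cancelled by the interaction of density and velocity. -/
def flux (A B : SpaceTime d → ℝ) (z : SpaceTime d) : ℝ := -(A z * B z)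

/-- The density perturbation. -/
noncomputable def density (A B : SpaceTime d → ℝ) (z : SpaceTime d) : ℝ :=
  ∂[q.j] (q.potential q.c₁ A) z + ∂[q.i] (q.timeCorr (flux A B)) z

/-- The velocity perturbation. -/
noncomputable def velocity (B : SpaceTime d → ℝ) : SpaceTime d → Vec d :=
  rotGrad q.i q.j (q.potential q.c₂ B)

/-- The new defect field. -/
noncomputable def defect (A B ρ : SpaceTime d → ℝ) (u : SpaceTime d → Vec d) (z : SpaceTime d) :
    Vec d :=
  interaction ρ u (q.density A B) (q.velocity B) z + Pi.single q.i (flux A B z)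
    + Pi.single q.i (∂ₜ (q.timeCorr (flux A B)) z) + Pi.single q.j (∂ₜ (q.potential q.c₁ A) z)
    + ∑ l ∈ q.transverse, rotGrad q.i l (q.pipeCorr (flux A B) l) z

variable {A B ρ f : SpaceTime d → ℝ} {u : SpaceTime d → Vec d}

@[fun_prop]
theorem smoothPeriodic_flux (hA : SmoothPeriodic A) (hB : SmoothPeriodic B) :
    SmoothPeriodic (flux A B) := (hA.mul hB).neg

@[fun_prop]
theorem smoothPeriodic_potential (c : ℝ) (hA : SmoothPeriodic A) :
    SmoothPeriodic (q.potential c A) := by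
  unfold potential
  fun_prop

@[fun_prop]
theorem smoothPeriodic_timeCorr (hf : SmoothPeriodic f) : SmoothPeriodic (q.timeCorr f) := by
  unfold timeCorr
  fun_prop

@[fun_prop]
theorem smoothPeriodic_pipeCorr (hf : SmoothPeriodic f) (l : Fin d) :
    SmoothPeriodic (q.pipeCorr f l) := by
  unfold pipeCorr
  fun_prop

@[fun_prop]
theorem smoothPeriodic_density (hA : SmoothPeriodic A) (hB : SmoothPeriodic B) :
    SmoothPeriodic (q.density A B) := by
  unfold density
  fun_prop

@[fun_prop]
theorem smoothPeriodic_velocity (hB : SmoothPeriodic B) : SmoothPeriodic (q.velocity B) :=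
  .rotGrad _ _ (q.smoothPeriodic_potential _ hB)

theorem smoothPeriodic_sum_rotGrad (hf : SmoothPeriodic f) :
    SmoothPeriodic fun z => ∑ l ∈ q.transverse, rotGrad q.i l (q.pipeCorr f l) z :=
  .sum fun l _ => .rotGrad _ _ (q.smoothPeriodic_pipeCorr hf l)

theorem smoothPeriodic_defect (hA : SmoothPeriodic A) (hB : SmoothPeriodic B)
    (hρ : SmoothPeriodic ρ) (hu : SmoothPeriodic u) : SmoothPeriodic (q.defect A B ρ u) := by
  have := q.smoothPeriodic_sum_rotGrad (smoothPeriodic_flux hA hB)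
  unfold defect
  fun_prop

theorem spaceDiv_velocity (hB : SmoothPeriodic B) (z : SpaceTime d) :
    spaceDiv (q.velocity B) z = 0 :=
  spaceDiv_rotGrad _ _ (q.smoothPeriodic_potential _ hB) z

theorem spaceDiv_defect (hA : SmoothPeriodic A) (hB : SmoothPeriodic B) (hρ : SmoothPeriodic ρ)
    (hu : SmoothPeriodic u) (z : SpaceTime d) :
    ∂ₜ (q.density A B) z + spaceDiv (interaction ρ u (q.density A B) (q.velocity B)) z
      - ∂[q.i] (fun z => A z * B z) z = spaceDiv (q.defect A B ρ u) z := by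
  have hsum := q.smoothPeriodic_sum_rotGrad (smoothPeriodic_flux hA hB)
  have hdensity : ∂ₜ (q.density A B) z = ∂[q.j] (∂ₜ (q.potential q.c₁ A)) z
      + ∂[q.i] (∂ₜ (q.timeCorr (flux A B))) z := by
    unfold density
    rw [dirDeriv_add _ (by fun_prop) (by fun_prop), dirDeriv_comm (by fun_prop),
      dirDeriv_comm (v := timeDir d) (by fun_prop)]
  have hflux : ∂[q.i] (flux A B) z = -∂[q.i] (fun z => A z * B z) z := dirDeriv_neg _ z
  have hpipe : spaceDiv (fun z => ∑ l ∈ q.transverse, rotGrad q.i l (q.pipeCorr (flux A B) l) z) z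
      = 0 := by
    rw [spaceDiv_sum fun l _ => .rotGrad _ _ (by fun_prop)]
    exact Finset.sum_eq_zero fun l _ => spaceDiv_rotGrad _ _ (by fun_prop) z
  unfold defect
  rw [spaceDiv_add (by fun_prop) hsum, hpipe, spaceDiv_add (by fun_prop) (by fun_prop),
    spaceDiv_add (by fun_prop) (by fun_prop), spaceDiv_add (by fun_prop) (by fun_prop),
    spaceDiv_single, spaceDiv_single, spaceDiv_single, hdensity, hflux]
  ring

end Corrector

end BlockParams

/-! ### Pointwise bounds -/

theorem abs_mul_le_of_abs_le {a b c e : ℝ} (h : |a| ≤ c) (h' : |b| ≤ e) : |a * b| ≤ c * e :=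
  (abs_mul a b).trans_le (mul_le_mul h h' (abs_nonneg _) ((abs_nonneg _).trans h))

theorem abs_add_le_of_abs_le {a b c e : ℝ} (h : |a| ≤ c) (h' : |b| ≤ e) : |a + b| ≤ c + e :=
  (abs_add_le a b).trans (add_le_add h h')

theorem norm_smul_le_of_le {E : Type*} [NormedAddCommGroup E] [NormedSpace ℝ E] {a c e : ℝ} {v : E}
    (h : |a| ≤ c) (h' : ‖v‖ ≤ e) : ‖a • v‖ ≤ c * e :=
  (norm_smul_le a v).trans (mul_le_mul h h' (norm_nonneg _) ((abs_nonneg _).trans h))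

theorem SmoothPeriodic.eventually_norm_le {d : ℕ} {E : Type*} [NormedAddCommGroup E]
    [NormedSpace ℝ E] {F : SpaceTime d → E} (hF : SmoothPeriodic F) :
    ∀ᶠ C : ℝ in Filter.atTop, ∀ z, ‖F z‖ ≤ C := by
  obtain ⟨C₀, -, hC₀⟩ := hF.exists_norm_le
  exact (Filter.eventually_ge_atTop C₀).mono fun C hC z => (hC₀ z).trans hC

/-- A common bound for the slow functions entering a corrector and their derivatives. -/
structure SlowBound {d : ℕ} (A B ρ : SpaceTime d → ℝ) (u : SpaceTime d → Vec d) (C : ℝ) :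
    Prop where
  one_le : 1 ≤ C
  abs_A_le : ∀ z, |A z| ≤ C
  abs_B_le : ∀ z, |B z| ≤ C
  abs_flux_le : ∀ z, |BlockParams.flux A B z| ≤ C
  abs_ρ_le : ∀ z, |ρ z| ≤ C
  norm_u_le : ∀ z, ‖u z‖ ≤ C
  space_A_le : ∀ k z, |∂[k] A z| ≤ C
  space_B_le : ∀ k z, |∂[k] B z| ≤ C
  space_flux_le : ∀ k z, |∂[k] (BlockParams.flux A B) z| ≤ C
  time_A_le : ∀ z, |∂ₜ A z| ≤ C
  time_flux_le : ∀ z, |∂ₜ (BlockParams.flux A B) z| ≤ C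
  space_space_B_le : ∀ k l z, |∂[k] (∂[l] B) z| ≤ C

theorem exists_slowBound {d : ℕ} {A B ρ : SpaceTime d → ℝ} {u : SpaceTime d → Vec d}
    (hA : SmoothPeriodic A) (hB : SmoothPeriodic B) (hρ : SmoothPeriodic ρ)
    (hu : SmoothPeriodic u) : ∃ C, SlowBound A B ρ u C := by
  have hf := BlockParams.smoothPeriodic_flux hA hB
  have hall : ∀ {F : Fin d → SpaceTime d → ℝ}, (∀ k, SmoothPeriodic (F k)) →
      ∀ᶠ C : ℝ in Filter.atTop, ∀ k z, ‖F k z‖ ≤ C := fun h =>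
    Filter.eventually_all.2 fun k => (h k).eventually_norm_le
  obtain ⟨C, h1, hA0, hB0, hf0, hρ0, hu0, hA1, hB1, hf1, hAt, hft, hB2⟩ :=
    ((Filter.eventually_ge_atTop (1 : ℝ)).and <| hA.eventually_norm_le.and <|
      hB.eventually_norm_le.and <| hf.eventually_norm_le.and <| hρ.eventually_norm_le.and <|
      hu.eventually_norm_le.and <| (hall fun k => hA.dirDeriv (spaceDir k)).and <|
      (hall fun k => hB.dirDeriv (spaceDir k)).and <|
      (hall fun k => hf.dirDeriv (spaceDir k)).and <|
      (hA.dirDeriv (timeDir d)).eventually_norm_le.and <|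
      (hf.dirDeriv (timeDir d)).eventually_norm_le.and <|
      Filter.eventually_all.2 fun k =>
        hall fun l => (hB.dirDeriv (spaceDir l)).dirDeriv (spaceDir k)).exists
  exact ⟨C, h1, hA0, hB0, hf0, hρ0, hu0, hA1, hB1, hf1, hAt, hft, hB2⟩

/-- The bound for products of profiles in dimension `d`. -/
noncomputable def blockBound (d : ℕ) : ℝ := profileBound ^ (2 * d + 2)

theorem one_le_blockBound (d : ℕ) : 1 ≤ blockBound d := one_le_pow₀ one_le_profileBound

namespace BlockParams

variable {d : ℕ} (q : BlockParams d)

/-- The indicator of the region where a building block is active. -/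
noncomputable def active (z : SpaceTime d) : ℝ :=
  concInd q.κ (q.σ * z.1) * boxInd q.transverse q.μ (q.lam • z.2)

/-- The size of `pipePrim l` on its support, cut off to the active times. -/
noncomputable def activeBelow (l : Fin d) (z : SpaceTime d) : ℝ :=
  concInd q.κ (q.σ * z.1) *
    (q.μ ^ (q.transverseBelow l).card * boxInd (q.transverseBelow l) q.μ (q.lam • z.2))

theorem active_nonneg (z : SpaceTime d) : 0 ≤ q.active z :=
  mul_nonneg (concInd_nonneg _ _) (boxInd_nonneg _ _ _)

theorem active_mul_self (z : SpaceTime d) : q.active z * q.active z = q.active z := by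
  rw [active, mul_mul_mul_comm, concInd_mul_self, boxInd_mul_self]

theorem activeBelow_nonneg (l : Fin d) (z : SpaceTime d) : 0 ≤ q.activeBelow l z :=
  mul_nonneg (concInd_nonneg _ _) (mul_nonneg (pow_nonneg q.μ_pos.le _) (boxInd_nonneg _ _ _))

theorem one_le_lam_mul_μ : 1 ≤ q.lam * q.μ :=
  one_le_mul_of_one_le_of_one_le (by exact_mod_cast q.one_le_lam) q.one_le_μ

theorem η_le_one : q.η ≤ 1 := inv_le_one_of_one_le₀ q.one_le_lam_mul_μ

theorem inv_σ_le_one : (q.σ : ℝ)⁻¹ ≤ 1 := inv_le_one_of_one_le₀ (by exact_mod_cast q.one_le_σ)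

section Bounds

variable (z : SpaceTime d)

theorem abs_timeProf_le {n : ℕ} (hn : n ≤ 3) :
    |q.timeProf n z| ≤ profileBound * concInd q.κ (q.σ * z.1) := abs_conc_le q.one_le_κ hn _

theorem abs_coordProf_le {n : ℕ} (hn : n ≤ 3) (l : Fin d) :
    |q.coordProf n l z| ≤ profileBound * concInd q.μ (q.lam * z.2 l) := abs_conc_le q.one_le_μ hn _

theorem abs_timePrim_le : |q.timePrim z| ≤ 2 := abs_concPrim_le q.one_le_κ _

theorem abs_pipe_le {a : Fin d → ℕ} (ha : ∀ l, a l ≤ 3) :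
    |q.pipe a z| ≤ profileBound ^ d * boxInd q.transverse q.μ (q.lam • z.2) := by
  have hcard : q.transverse.card ≤ d := by simpa using Finset.card_le_univ q.transverse
  calc |q.pipe a z| = ∏ l ∈ q.transverse, |q.coordProf (a l) l z| := Finset.abs_prod _ _
    _ ≤ ∏ l ∈ q.transverse, profileBound * concInd q.μ (q.lam * z.2 l) :=
      Finset.prod_le_prod (fun _ _ => abs_nonneg _) fun l _ => q.abs_coordProf_le z (ha l) l
    _ = profileBound ^ q.transverse.card * boxInd q.transverse q.μ (q.lam • z.2) := by
      simp [Finset.prod_mul_distrib, boxInd]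
    _ ≤ profileBound ^ d * boxInd q.transverse q.μ (q.lam • z.2) :=
      mul_le_mul_of_nonneg_right (pow_le_pow_right₀ one_le_profileBound hcard) (boxInd_nonneg _ _ _)

theorem abs_timeProf_mul_pipe_le {n : ℕ} (hn : n ≤ 3) {a : Fin d → ℕ} (ha : ∀ l, a l ≤ 3) :
    |q.timeProf n z * q.pipe a z| ≤ blockBound d * q.active z := by
  calc |q.timeProf n z * q.pipe a z|
      ≤ (profileBound * concInd q.κ (q.σ * z.1)) *
        (profileBound ^ d * boxInd q.transverse q.μ (q.lam • z.2)) :=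
        abs_mul_le_of_abs_le (q.abs_timeProf_le z hn) (q.abs_pipe_le z ha)
    _ = profileBound ^ (d + 1) * q.active z := by rw [active]; ring
    _ ≤ blockBound d * q.active z := mul_le_mul_of_nonneg_right
      (pow_le_pow_right₀ one_le_profileBound (by omega)) (q.active_nonneg z)

theorem abs_coordMass_le (l : Fin d) :
    |q.coordMass l z| ≤ profileBound ^ 2 * (q.μ * concInd q.μ (q.lam * z.2 l)) := by
  have h := q.abs_coordProf_le z (n := 1) (by norm_num) l
  calc |q.coordMass l z| = q.μ * (|q.coordProf 1 l z| * |q.coordProf 1 l z|) := by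
        rw [coordMass, abs_mul, abs_of_pos q.μ_pos, abs_pow, pow_two]
    _ ≤ q.μ * ((profileBound * concInd q.μ (q.lam * z.2 l)) *
        (profileBound * concInd q.μ (q.lam * z.2 l))) :=
      mul_le_mul_of_nonneg_left
        (mul_le_mul h h (abs_nonneg _) ((abs_nonneg _).trans h)) q.μ_pos.le
    _ = profileBound ^ 2 * (q.μ * concInd q.μ (q.lam * z.2 l)) := by
      rw [mul_mul_mul_comm, concInd_mul_self]
      ring

theorem abs_pipePrim_le (l : Fin d) : |q.pipePrim l z| ≤ 2 * profileBound ^ (2 * d) *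
    (q.μ ^ (q.transverseBelow l).card * boxInd (q.transverseBelow l) q.μ (q.lam • z.2)) := by
  have hcard : (q.transverseBelow l).card ≤ d := by
    simpa using Finset.card_le_univ (q.transverseBelow l)
  have hmass : |∏ m ∈ q.transverseBelow l, q.coordMass m z| ≤ profileBound ^ (2 * d) *
      (q.μ ^ (q.transverseBelow l).card * boxInd (q.transverseBelow l) q.μ (q.lam • z.2)) := by
    calc |∏ m ∈ q.transverseBelow l, q.coordMass m z|
        = ∏ m ∈ q.transverseBelow l, |q.coordMass m z| := Finset.abs_prod _ _
      _ ≤ ∏ m ∈ q.transverseBelow l, profileBound ^ 2 * (q.μ * concInd q.μ (q.lam * z.2 m)) :=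
        Finset.prod_le_prod (fun _ _ => abs_nonneg _) fun m _ => q.abs_coordMass_le z m
      _ = profileBound ^ (2 * (q.transverseBelow l).card) *
          (q.μ ^ (q.transverseBelow l).card * boxInd (q.transverseBelow l) q.μ (q.lam • z.2)) := by
        simp [Finset.prod_mul_distrib, boxInd, pow_mul]
      _ ≤ _ := mul_le_mul_of_nonneg_right
        (pow_le_pow_right₀ one_le_profileBound (by omega))
        (mul_nonneg (pow_nonneg q.μ_pos.le _) (boxInd_nonneg _ _ _))
  exact (abs_mul_le_of_abs_le hmass (abs_concPrim_le q.one_le_μ _)).trans_eq (by ring)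

theorem abs_timeProf_sq_mul_pipePrim_le (l : Fin d) :
    |q.timeProf 1 z * q.timeProf 1 z * q.pipePrim l z| ≤ 2 * blockBound d * q.activeBelow l z := by
  have h := q.abs_timeProf_le z (n := 1) (by norm_num)
  refine (abs_mul_le_of_abs_le (abs_mul_le_of_abs_le h h) (q.abs_pipePrim_le z l)).trans_eq ?_
  calc _ = 2 * profileBound ^ (2 * d + 2) * ((concInd q.κ (q.σ * z.1) * concInd q.κ (q.σ * z.1)) *
        (q.μ ^ (q.transverseBelow l).card *
          boxInd (q.transverseBelow l) q.μ (q.lam • z.2))) := by ring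
    _ = 2 * blockBound d * q.activeBelow l z := by rw [concInd_mul_self]; rfl

end Bounds

end BlockParams

theorem norm_rotGrad_le {d : ℕ} {i j : Fin d} {ψ : SpaceTime d → ℝ} {z : SpaceTime d} {M : ℝ}
    (hi : |∂[i] ψ z| ≤ M) (hj : |∂[j] ψ z| ≤ M) : ‖rotGrad i j ψ z‖ ≤ M := by
  have hM := (abs_nonneg _).trans hi
  refine (pi_norm_le_iff_of_nonneg hM).2 fun k => ?_
  rw [rotGrad, Pi.sub_apply, Pi.single_apply, Pi.single_apply, Real.norm_eq_abs]
  split_ifs with hki hkj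
  · subst hki hkj
    simpa using hM
  · simpa using hj
  · simpa using hi
  · simpa using hM

namespace BlockParams

variable {d : ℕ} (q : BlockParams d)

section Derivatives

variable {A B f : SpaceTime d → ℝ} (z : SpaceTime d) (k l : Fin d)

theorem dirDeriv_spaceDir_timeProf (n : ℕ) : ∂[k] (q.timeProf n) z = 0 := by
  rw [dirDeriv_timeProf]
  exact zero_mul _

theorem exists_dirDeriv_pipe_eq (a : Fin d → ℕ) : ∃ (c : ℝ) (b : Fin d → ℕ),
    |c| ≤ q.lam * q.μ ∧ (∀ l, b l ≤ a l + 1) ∧ ∂[k] (q.pipe a) = fun z => c * q.pipe b z := by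
  have hpos : 0 ≤ q.lam * q.μ := zero_le_one.trans q.one_le_lam_mul_μ
  by_cases hk : k ∈ q.transverse
  · refine ⟨q.lam * q.μ, Function.update a k (a k + 1), (abs_of_nonneg hpos).le, fun l => ?_,
      funext fun z => q.dirDeriv_spaceDir_pipe z hk a⟩
    rcases eq_or_ne l k with rfl | hl
    · rw [Function.update_self]
    · rw [Function.update_of_ne hl]
      exact Nat.le_succ _
  · refine ⟨0, a, by simpa using hpos, fun l => Nat.le_succ _, funext fun z => ?_⟩
    rw [zero_mul]
    refine q.dirDeriv_pipe_eq_zero _ z (fun l hl => ?_) a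
    rw [spaceDir_snd, if_neg (ne_of_mem_of_not_mem hl hk)]

theorem dirDeriv_potential (c : ℝ) (hA : SmoothPeriodic A) :
    ∂[k] (q.potential c A) z =
      c * q.η * (q.timeProf 1 z * (∂[k] A z * q.pipePot z + A z * ∂[k] q.pipePot z)) := by
  unfold potential
  rw [dirDeriv_const_mul _ _ (by fun_prop), dirDeriv_mul _ (by fun_prop) (by fun_prop),
    dirDeriv_mul _ hA (by fun_prop), dirDeriv_spaceDir_timeProf]
  ring

theorem dirDeriv_i_potential (c : ℝ) (hA : SmoothPeriodic A) :
    ∂[q.i] (q.potential c A) z = c * q.η * (∂[q.i] A z * (q.timeProf 1 z * q.pipePot z)) := by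
  rw [dirDeriv_potential _ _ _ _ hA, pipePot, dirDeriv_i_pipe]
  ring

theorem dirDeriv_j_potential (c : ℝ) (hA : SmoothPeriodic A) :
    ∂[q.j] (q.potential c A) z = c * (A z * (q.timeProf 1 z * q.pipe 1 z)
      + q.η * (∂[q.j] A z * (q.timeProf 1 z * q.pipePot z))) := by
  rw [dirDeriv_potential _ _ _ _ hA, dirDeriv_j_pipePot]
  linear_combination (c * q.timeProf 1 z * A z * q.pipe 1 z) * q.η_mul

theorem dirDeriv_dirDeriv_potential (c : ℝ) (hA : SmoothPeriodic A) :
    ∂[l] (∂[k] (q.potential c A)) z = c * q.η *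
      (∂[l] (∂[k] A) z * (q.timeProf 1 z * q.pipePot z)
        + ∂[k] A z * (q.timeProf 1 z * ∂[l] q.pipePot z)
        + (∂[l] A z * (q.timeProf 1 z * ∂[k] q.pipePot z)
          + A z * (q.timeProf 1 z * ∂[l] (∂[k] q.pipePot) z))) := by
  rw [show ∂[k] (q.potential c A) = _ from funext fun z => q.dirDeriv_potential z k c hA,
    dirDeriv_const_mul _ _ (by fun_prop), dirDeriv_mul _ (by fun_prop) (by fun_prop),
    dirDeriv_add _ (by fun_prop) (by fun_prop), dirDeriv_mul _ (by fun_prop) (by fun_prop),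
    dirDeriv_mul _ hA (by fun_prop), dirDeriv_spaceDir_timeProf]
  ring

theorem dirDeriv_timeDir_potential (c : ℝ) (hA : SmoothPeriodic A) :
    ∂ₜ (q.potential c A) z = c * q.η * (q.σ * q.κ * (A z * (q.timeProf 2 z * q.pipePot z))
      + ∂ₜ A z * (q.timeProf 1 z * q.pipePot z)) := by
  unfold potential
  rw [dirDeriv_const_mul _ _ (by fun_prop), dirDeriv_mul _ (by fun_prop) (by fun_prop),
    dirDeriv_mul _ hA (by fun_prop), dirDeriv_timeProf, pipePot,
    dirDeriv_pipe_eq_zero _ _ _ (fun _ _ => rfl)]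
  simp only [timeDir]
  ring

theorem dirDeriv_spaceDir_timeCorr (hf : SmoothPeriodic f) :
    ∂[k] (q.timeCorr f) z = (q.σ : ℝ)⁻¹ * (q.timePrim z * ∂[k] f z) := by
  unfold timeCorr
  rw [dirDeriv_const_mul _ _ (by fun_prop), dirDeriv_mul _ (by fun_prop) hf, dirDeriv_timePrim]
  simp only [spaceDir]
  ring

theorem dirDeriv_timeDir_timeCorr (hf : SmoothPeriodic f) : ∂ₜ (q.timeCorr f) z =
    (q.κ * q.timeProf 1 z ^ 2 - 1) * f z + (q.σ : ℝ)⁻¹ * (q.timePrim z * ∂ₜ f z) := by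
  have hσ := q.σ_pos
  unfold timeCorr
  rw [dirDeriv_const_mul _ _ (by fun_prop), dirDeriv_mul _ (by fun_prop) hf, dirDeriv_timePrim]
  simp only [timeDir]
  field_simp

theorem dirDeriv_pipeCorr (hf : SmoothPeriodic f) :
    ∂[k] (q.pipeCorr f l) z = (q.lam : ℝ)⁻¹ * q.κ *
      (∂[k] f z * (q.timeProf 1 z * q.timeProf 1 z * q.pipePrim l z)
        + q.timeProf 1 z ^ 2 * f z * ∂[k] (q.pipePrim l) z) := by
  unfold pipeCorr
  rw [dirDeriv_const_mul _ _ (by fun_prop), dirDeriv_mul _ (by fun_prop) (by fun_prop),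
    dirDeriv_mul _ (by fun_prop) (by fun_prop), dirDeriv_mul _ hf (by fun_prop),
    dirDeriv_spaceDir_timeProf]
  ring

theorem sum_dirDeriv_pipeCorr (hf : SmoothPeriodic f) :
    ∑ l ∈ q.transverse, ∂[l] (q.pipeCorr f l) z =
      (q.lam : ℝ)⁻¹ * q.κ * ∑ l ∈ q.transverse,
        ∂[l] f z * (q.timeProf 1 z * q.timeProf 1 z * q.pipePrim l z)
      + q.κ * q.timeProf 1 z ^ 2 * f z * (q.μ ^ (d - 1) * q.pipe 1 z ^ 2 - 1) := by
  have hlam := q.lam_pos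
  rw [← sum_telescope, Finset.mul_sum, Finset.mul_sum, ← Finset.sum_add_distrib]
  refine Finset.sum_congr rfl fun l _ => ?_
  rw [dirDeriv_pipeCorr _ _ _ _ hf, dirDeriv_self_pipePrim]
  field_simp

/-- The principal part of the defect, in the direction `i`, once the correctors have been added. -/
noncomputable def principal (A B : SpaceTime d → ℝ) (z : SpaceTime d) : ℝ :=
  ∂[q.j] (q.potential q.c₁ A) z * ∂[q.j] (q.potential q.c₂ B) z + flux A B z
    + ∂ₜ (q.timeCorr (flux A B)) z + ∑ l ∈ q.transverse, ∂[l] (q.pipeCorr (flux A B) l) z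

-- The mean `A B` of the product of the potentials' leading terms cancels against the flux, its
-- oscillation in space against the sum over `l`, and that in time against `timeCorr`.
theorem principal_eq (hA : SmoothPeriodic A) (hB : SmoothPeriodic B) :
    q.principal A B z = q.c₁ * q.c₂ * (
        q.η * (A z * (q.timeProf 1 z * q.pipe 1 z) *
          (∂[q.j] B z * (q.timeProf 1 z * q.pipePot z)))
        + q.η * (∂[q.j] A z * (q.timeProf 1 z * q.pipePot z) *
          (B z * (q.timeProf 1 z * q.pipe 1 z)))
        + q.η * q.η * (∂[q.j] A z * (q.timeProf 1 z * q.pipePot z) *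
          (∂[q.j] B z * (q.timeProf 1 z * q.pipePot z))))
      + (q.σ : ℝ)⁻¹ * (q.timePrim z * ∂ₜ (flux A B) z)
      + (q.lam : ℝ)⁻¹ * q.κ * ∑ l ∈ q.transverse,
        ∂[l] (flux A B) z * (q.timeProf 1 z * q.timeProf 1 z * q.pipePrim l z) := by
  rw [principal, dirDeriv_j_potential _ _ _ hA, dirDeriv_j_potential _ _ _ hB,
    dirDeriv_timeDir_timeCorr _ _ (by fun_prop), sum_dirDeriv_pipeCorr _ _ (by fun_prop)]
  have hflux : flux A B z = -(A z * B z) := rfl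
  rw [hflux]
  linear_combination (q.timeProf 1 z ^ 2 * A z * B z * q.pipe 1 z ^ 2) * q.c₁_mul_c₂

theorem defect_eq {ρ : SpaceTime d → ℝ} {u : SpaceTime d → Vec d} :
    q.defect A B ρ u z = q.density A B z • u z + ρ z • q.velocity B z
      + ∂[q.i] (q.timeCorr (flux A B)) z • q.velocity B z
      + Pi.single q.i (q.principal A B z)
      + Pi.single q.j (∂ₜ (q.potential q.c₁ A) z
        - ∂[q.j] (q.potential q.c₁ A) z * ∂[q.i] (q.potential q.c₂ B) z)
      - ∑ l ∈ q.transverse, Pi.single l (∂[q.i] (q.pipeCorr (flux A B) l) z) := by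
  have hsum : ∑ l ∈ q.transverse, rotGrad q.i l (q.pipeCorr (flux A B) l) z =
      Pi.single q.i (∑ l ∈ q.transverse, ∂[l] (q.pipeCorr (flux A B) l) z)
        - ∑ l ∈ q.transverse, Pi.single l (∂[q.i] (q.pipeCorr (flux A B) l) z) := by
    simp only [rotGrad, Finset.sum_sub_distrib]
    congr 1
    exact (map_sum (AddMonoidHom.single (fun _ : Fin d => ℝ) q.i) _ _).symm
  rw [defect, hsum, interaction, principal]
  ext k
  simp only [density, velocity, rotGrad, Pi.add_apply, Pi.sub_apply, Pi.smul_apply, smul_eq_mul,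
    Pi.single_apply, Finset.sum_apply]
  split_ifs <;> ring

end Derivatives

end BlockParams

namespace BlockParams

variable {d : ℕ} (q : BlockParams d)

section Bounds

variable (z : SpaceTime d) (k l : Fin d)

theorem pipePot_order_le (m : Fin d) : (Function.update 1 q.j 0 : Fin d → ℕ) m ≤ 1 := by
  rw [Function.update_apply]
  split_ifs <;> simp

theorem abs_timeProf_mul_pipePot_le {n : ℕ} (hn : n ≤ 3) :
    |q.timeProf n z * q.pipePot z| ≤ blockBound d * q.active z :=
  q.abs_timeProf_mul_pipe_le z hn fun m => (q.pipePot_order_le m).trans (by norm_num)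

theorem abs_timeProf_mul_dirDeriv_pipePot_le : |q.timeProf 1 z * ∂[k] q.pipePot z| ≤
    q.lam * q.μ * (blockBound d * q.active z) := by
  obtain ⟨c, b, hc, hb, hpot⟩ := q.exists_dirDeriv_pipe_eq k (Function.update 1 q.j 0)
  rw [pipePot, hpot, mul_left_comm]
  exact abs_mul_le_of_abs_le hc (q.abs_timeProf_mul_pipe_le z (by norm_num) fun m =>
    (hb m).trans (by have := q.pipePot_order_le m; omega))

theorem abs_timeProf_mul_dirDeriv_dirDeriv_pipePot_le :
    |q.timeProf 1 z * ∂[l] (∂[k] q.pipePot) z| ≤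
      q.lam * q.μ * (q.lam * q.μ * (blockBound d * q.active z)) := by
  obtain ⟨c, b, hc, hb, hpot⟩ := q.exists_dirDeriv_pipe_eq k (Function.update 1 q.j 0)
  obtain ⟨c', b', hc', hb', hpipe⟩ := q.exists_dirDeriv_pipe_eq l b
  rw [pipePot, hpot, dirDeriv_const_mul _ _ (by fun_prop), hpipe, mul_left_comm,
    mul_left_comm (q.timeProf 1 z)]
  exact abs_mul_le_of_abs_le hc (abs_mul_le_of_abs_le hc'
    (q.abs_timeProf_mul_pipe_le z (by norm_num) fun m =>
      (hb' m).trans (by have := hb m; have := q.pipePot_order_le m; omega)))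

variable {A B ρ f : SpaceTime d → ℝ} {u : SpaceTime d → Vec d} {c C : ℝ}

theorem abs_potential_le (hc : 0 ≤ c) (hA : |A z| ≤ C) :
    |q.potential c A z| ≤ C * blockBound d * (c * q.η * q.active z) := by
  rw [potential, mul_left_comm (q.timeProf 1 z)]
  exact (abs_mul_le_of_abs_le (abs_of_nonneg (mul_nonneg hc q.η_pos.le)).le
    (abs_mul_le_of_abs_le hA (q.abs_timeProf_mul_pipePot_le z (by norm_num)))).trans_eq (by ring)

theorem abs_dirDeriv_potential_le (hc : 0 ≤ c) (hA : SmoothPeriodic A) (hdA : |∂[k] A z| ≤ C) :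
    |∂[k] (q.potential c A) z| ≤ blockBound d * (c * (q.active z * (|A z| + q.η * C))) := by
  rw [q.dirDeriv_potential _ _ _ hA, mul_add, mul_left_comm, mul_left_comm _ (A z)]
  refine (abs_mul_le_of_abs_le (abs_of_nonneg (mul_nonneg hc q.η_pos.le)).le
    (abs_add_le_of_abs_le
      (abs_mul_le_of_abs_le hdA (q.abs_timeProf_mul_pipePot_le z (by norm_num)))
      (abs_mul_le_of_abs_le le_rfl (q.abs_timeProf_mul_dirDeriv_pipePot_le z k)))).trans_eq ?_
  linear_combination (c * |A z| * blockBound d * q.active z) * q.η_mul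

theorem abs_dirDeriv_potential_le_two_mul (hc : 0 ≤ c) (hA : SmoothPeriodic A) (hA0 : |A z| ≤ C)
    (hdA : |∂[k] A z| ≤ C) :
    |∂[k] (q.potential c A) z| ≤ 2 * (C * blockBound d) * (c * q.active z) := by
  refine (q.abs_dirDeriv_potential_le z k hc hA hdA).trans ?_
  have hK := zero_le_one.trans (one_le_blockBound d)
  have hact := q.active_nonneg z
  have hηC : q.η * C ≤ 1 * C :=
    mul_le_mul_of_nonneg_right q.η_le_one ((abs_nonneg _).trans hA0)
  calc blockBound d * (c * (q.active z * (|A z| + q.η * C)))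
      ≤ blockBound d * (c * (q.active z * (C + 1 * C))) := by gcongr
    _ = 2 * (C * blockBound d) * (c * q.active z) := by ring

theorem abs_dirDeriv_dirDeriv_potential_le (hc : 0 ≤ c) (hA : SmoothPeriodic A) (hA0 : |A z| ≤ C)
    (hdA : ∀ k, |∂[k] A z| ≤ C) (hddA : |∂[l] (∂[k] A) z| ≤ C) :
    |∂[l] (∂[k] (q.potential c A)) z| ≤
      4 * C * blockBound d * (c * (q.lam * q.μ) * q.active z) := by
  have hC := (abs_nonneg _).trans hA0
  have hK := zero_le_one.trans (one_le_blockBound d)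
  have hact := q.active_nonneg z
  have hm := q.one_le_lam_mul_μ
  rw [q.dirDeriv_dirDeriv_potential _ _ _ _ hA]
  refine (abs_mul_le_of_abs_le (abs_of_nonneg (mul_nonneg hc q.η_pos.le)).le <|
    abs_add_le_of_abs_le
      (abs_add_le_of_abs_le
        (abs_mul_le_of_abs_le hddA (q.abs_timeProf_mul_pipePot_le z (by norm_num)))
        (abs_mul_le_of_abs_le (hdA k) (q.abs_timeProf_mul_dirDeriv_pipePot_le z l)))
      (abs_add_le_of_abs_le
        (abs_mul_le_of_abs_le (hdA l) (q.abs_timeProf_mul_dirDeriv_pipePot_le z k))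
        (abs_mul_le_of_abs_le hA0
          (q.abs_timeProf_mul_dirDeriv_dirDeriv_pipePot_le z k l)))).trans ?_
  calc _ = C * blockBound d * (c * q.active z) * (q.η * (1 + q.lam * q.μ) ^ 2) := by ring
    _ ≤ C * blockBound d * (c * q.active z) * (q.η * (q.lam * q.μ + q.lam * q.μ) ^ 2) := by
      have := q.η_pos
      gcongr
    _ = 4 * C * blockBound d * (c * (q.lam * q.μ) * q.active z) := by
      linear_combination
        (4 * C * blockBound d * (c * q.active z) * (q.lam * q.μ)) * q.η_mul

theorem abs_timeCorr_le (hf : |f z| ≤ C) : |q.timeCorr f z| ≤ 2 * C * (q.σ : ℝ)⁻¹ :=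
  (abs_mul_le_of_abs_le (abs_of_pos (inv_pos.2 q.σ_pos)).le
    (abs_mul_le_of_abs_le (q.abs_timePrim_le z) hf)).trans_eq (by ring)

theorem abs_dirDeriv_timeCorr_le (hf : SmoothPeriodic f) (hdf : |∂[k] f z| ≤ C) :
    |∂[k] (q.timeCorr f) z| ≤ 2 * C * (q.σ : ℝ)⁻¹ := by
  rw [q.dirDeriv_spaceDir_timeCorr _ _ hf]
  exact q.abs_timeCorr_le z hdf

theorem norm_velocity_le (hB : SmoothPeriodic B) (hdB : ∀ k, |∂[k] B z| ≤ C) :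
    ‖q.velocity B z‖ ≤ blockBound d * (q.c₂ * (q.active z * (|B z| + q.η * C))) :=
  norm_rotGrad_le (q.abs_dirDeriv_potential_le z _ q.c₂_pos.le hB (hdB _))
    (q.abs_dirDeriv_potential_le z _ q.c₂_pos.le hB (hdB _))

end Bounds

end BlockParams

namespace BlockParams

variable {d : ℕ} (q : BlockParams d)

/-- The combined size of `activeBelow l` over the transverse directions `l`. -/
noncomputable def activeBelowSum (z : SpaceTime d) : ℝ := ∑ l ∈ q.transverse, q.activeBelow l z

/-- The pointwise size of `defect`, up to a factor depending only on the slow functions. -/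
noncomputable def defectEnvelope (z : SpaceTime d) : ℝ :=
  (q.c₁ + q.c₂ + q.c₁ * q.c₂ * q.η + q.c₁ * q.η * q.σ * q.κ) * q.active z
    + (q.σ : ℝ)⁻¹ + (q.lam : ℝ)⁻¹ * q.κ * q.activeBelowSum z

theorem activeBelowSum_nonneg (z : SpaceTime d) : 0 ≤ q.activeBelowSum z :=
  Finset.sum_nonneg fun l _ => q.activeBelow_nonneg l z

section Defect

variable {A B ρ : SpaceTime d → ℝ} {u : SpaceTime d → Vec d} {C : ℝ} (hA : SmoothPeriodic A)
  (hB : SmoothPeriodic B) (h : SlowBound A B ρ u C) (z : SpaceTime d)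

include h

theorem one_le_mul_blockBound : 1 ≤ C * blockBound d :=
  one_le_mul_of_one_le_of_one_le h.one_le (one_le_blockBound d)

theorem le_mul_blockBound : C ≤ C * blockBound d :=
  le_mul_of_one_le_right (zero_le_one.trans h.one_le) (one_le_blockBound d)

theorem abs_sum_flux_mul_pipePrim_le : |∑ l ∈ q.transverse, ∂[l] (flux A B) z *
    (q.timeProf 1 z * q.timeProf 1 z * q.pipePrim l z)| ≤
    2 * (C * blockBound d) * q.activeBelowSum z := by
  rw [activeBelowSum, Finset.mul_sum]
  refine (Finset.abs_sum_le_sum_abs _ _).trans (Finset.sum_le_sum fun l _ => ?_)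
  exact (abs_mul_le_of_abs_le (h.space_flux_le l z)
    (q.abs_timeProf_sq_mul_pipePrim_le z l)).trans_eq (by ring)

include hA hB

theorem abs_principal_le : |q.principal A B z| ≤
    3 * (C * blockBound d) ^ 2 * (q.c₁ * q.c₂ * q.η * q.active z)
      + 2 * (C * blockBound d) * (q.σ : ℝ)⁻¹
      + 2 * (C * blockBound d) * ((q.lam : ℝ)⁻¹ * q.κ * q.activeBelowSum z) := by
  have hpos := mul_pos q.c₁_pos q.c₂_pos
  have hη := q.η_pos
  have hlamκ := mul_pos (inv_pos.2 q.lam_pos) q.κ_pos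
  have hσ := inv_pos.2 q.σ_pos
  have hact := q.active_nonneg z
  have hΛ := one_le_mul_blockBound h
  have hCΛ := le_mul_blockBound h
  have hpipe : ∀ {a}, |a| ≤ C → |a * (q.timeProf 1 z * q.pipe 1 z)| ≤
      C * (blockBound d * q.active z) := fun ha =>
    abs_mul_le_of_abs_le ha (q.abs_timeProf_mul_pipe_le z (by norm_num) fun _ => by simp)
  have hpot : ∀ {a}, |a| ≤ C → |a * (q.timeProf 1 z * q.pipePot z)| ≤
      C * (blockBound d * q.active z) := fun ha =>
    abs_mul_le_of_abs_le ha (q.abs_timeProf_mul_pipePot_le z (by norm_num))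
  rw [q.principal_eq z hA hB]
  refine (abs_add_le_of_abs_le (abs_add_le_of_abs_le
    (abs_mul_le_of_abs_le (abs_of_pos hpos).le (abs_add_le_of_abs_le (abs_add_le_of_abs_le
      (abs_mul_le_of_abs_le (abs_of_pos hη).le
        (abs_mul_le_of_abs_le (hpipe (h.abs_A_le z)) (hpot (h.space_B_le _ z))))
      (abs_mul_le_of_abs_le (abs_of_pos hη).le
        (abs_mul_le_of_abs_le (hpot (h.space_A_le _ z)) (hpipe (h.abs_B_le z)))))
      (abs_mul_le_of_abs_le (abs_of_pos (mul_pos hη hη)).le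
        (abs_mul_le_of_abs_le (hpot (h.space_A_le _ z)) (hpot (h.space_B_le _ z))))))
    (abs_mul_le_of_abs_le (abs_of_pos hσ).le
      (abs_mul_le_of_abs_le (q.abs_timePrim_le z) (h.time_flux_le z))))
    (abs_mul_le_of_abs_le (abs_of_pos hlamκ).le (q.abs_sum_flux_mul_pipePrim_le h z))).trans ?_
  have hη1 : q.η * q.η ≤ q.η * 1 := mul_le_mul_of_nonneg_left q.η_le_one hη.le
  calc _ = (C * blockBound d) ^ 2 * (q.c₁ * q.c₂ * (2 * q.η + q.η * q.η) *
          (q.active z * q.active z)) + 2 * C * (q.σ : ℝ)⁻¹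
        + 2 * (C * blockBound d) * ((q.lam : ℝ)⁻¹ * q.κ * q.activeBelowSum z) := by ring
    _ ≤ (C * blockBound d) ^ 2 * (q.c₁ * q.c₂ * (2 * q.η + q.η * 1) * q.active z)
        + 2 * (C * blockBound d) * (q.σ : ℝ)⁻¹
        + 2 * (C * blockBound d) * ((q.lam : ℝ)⁻¹ * q.κ * q.activeBelowSum z) := by
      rw [q.active_mul_self]
      gcongr
    _ = _ := by ring

omit hB in
theorem abs_dirDeriv_timeDir_potential_le : |∂ₜ (q.potential q.c₁ A) z| ≤
    2 * (C * blockBound d) * (q.c₁ * q.η * q.σ * q.κ * q.active z) := by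
  have hc := mul_pos q.c₁_pos q.η_pos
  have hσκ : 1 ≤ q.σ * q.κ :=
    one_le_mul_of_one_le_of_one_le (by exact_mod_cast q.one_le_σ) q.one_le_κ
  have hact := q.active_nonneg z
  have hΛ := zero_le_one.trans (one_le_mul_blockBound h)
  rw [q.dirDeriv_timeDir_potential _ _ hA]
  refine (abs_mul_le_of_abs_le (abs_of_pos hc).le (abs_add_le_of_abs_le
    (abs_mul_le_of_abs_le (abs_of_pos (one_pos.trans_le hσκ)).le (abs_mul_le_of_abs_le
      (h.abs_A_le z) (q.abs_timeProf_mul_pipePot_le z (by norm_num))))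
    (abs_mul_le_of_abs_le (h.time_A_le z)
      (q.abs_timeProf_mul_pipePot_le z (by norm_num))))).trans ?_
  calc _ = q.c₁ * q.η * ((C * blockBound d) * ((q.σ * q.κ + 1) * q.active z)) := by ring
    _ ≤ q.c₁ * q.η * ((C * blockBound d) * ((q.σ * q.κ + q.σ * q.κ) * q.active z)) := by gcongr
    _ = _ := by ring

theorem abs_cross_potential_le :
    |∂[q.j] (q.potential q.c₁ A) z * ∂[q.i] (q.potential q.c₂ B) z| ≤
      2 * (C * blockBound d) ^ 2 * (q.c₁ * q.c₂ * q.η * q.active z) := by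
  rw [q.dirDeriv_i_potential _ _ hB]
  refine (abs_mul_le_of_abs_le (q.abs_dirDeriv_potential_le_two_mul z _ q.c₁_pos.le hA
    (h.abs_A_le z) (h.space_A_le _ z)) (abs_mul_le_of_abs_le
    (abs_of_pos (mul_pos q.c₂_pos q.η_pos)).le (abs_mul_le_of_abs_le (h.space_B_le _ z)
      (q.abs_timeProf_mul_pipePot_le z (by norm_num))))).trans_eq ?_
  linear_combination
    2 * (C * blockBound d) ^ 2 * (q.c₁ * q.c₂ * q.η) * q.active_mul_self z

theorem norm_sum_single_dirDeriv_pipeCorr_le :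
    ‖∑ l ∈ q.transverse, (Pi.single l (∂[q.i] (q.pipeCorr (flux A B) l) z) : Vec d)‖ ≤
      2 * (C * blockBound d) * ((q.lam : ℝ)⁻¹ * q.κ * q.activeBelowSum z) := by
  have hpos := mul_pos (inv_pos.2 q.lam_pos) q.κ_pos
  calc _ ≤ ∑ l ∈ q.transverse, ‖(Pi.single l (∂[q.i] (q.pipeCorr (flux A B) l) z) : Vec d)‖ :=
        norm_sum_le _ _
    _ ≤ ∑ l ∈ q.transverse,
        (q.lam : ℝ)⁻¹ * q.κ * (C * (2 * blockBound d * q.activeBelow l z)) := by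
      refine Finset.sum_le_sum fun l hl => ?_
      rw [Pi.norm_single, Real.norm_eq_abs, q.dirDeriv_pipeCorr _ _ _ (by fun_prop),
        q.dirDeriv_i_pipePrim _ hl, mul_zero, add_zero]
      exact abs_mul_le_of_abs_le (abs_of_pos hpos).le (abs_mul_le_of_abs_le
        (h.space_flux_le _ z) (q.abs_timeProf_sq_mul_pipePrim_le z l))
    _ = _ := by
      rw [activeBelowSum, Finset.mul_sum, Finset.mul_sum]
      exact Finset.sum_congr rfl fun l _ => by ring

theorem norm_density_smul_le : ‖q.density A B z • u z‖ ≤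
    2 * (C * blockBound d) ^ 2 * (q.c₁ * q.active z + (q.σ : ℝ)⁻¹) := by
  have hσ := inv_pos.2 q.σ_pos
  have hC := zero_le_one.trans h.one_le
  have hΛ := zero_le_one.trans (one_le_mul_blockBound h)
  have hCΛ := le_mul_blockBound h
  have hy := mul_nonneg q.c₁_pos.le (q.active_nonneg z)
  have hdens := abs_add_le_of_abs_le
    (q.abs_dirDeriv_potential_le_two_mul z q.j q.c₁_pos.le hA (h.abs_A_le z) (h.space_A_le _ z))
    (q.abs_dirDeriv_timeCorr_le z q.i (smoothPeriodic_flux hA hB) (h.space_flux_le _ z))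
  calc ‖q.density A B z • u z‖ ≤ _ * C :=
        norm_smul_le_of_le hdens (h.norm_u_le z)
    _ = 2 * (C * blockBound d * (q.c₁ * q.active z) + C * (q.σ : ℝ)⁻¹) * C := by ring
    _ ≤ 2 * (C * blockBound d * (q.c₁ * q.active z) + C * blockBound d * (q.σ : ℝ)⁻¹) *
        (C * blockBound d) := by gcongr
    _ = _ := by ring

omit hA in
theorem norm_velocity_le_two_mul :
    ‖q.velocity B z‖ ≤ 2 * (C * blockBound d) * (q.c₂ * q.active z) :=
  norm_rotGrad_le
    (q.abs_dirDeriv_potential_le_two_mul z _ q.c₂_pos.le hB (h.abs_B_le z) (h.space_B_le _ z))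
    (q.abs_dirDeriv_potential_le_two_mul z _ q.c₂_pos.le hB (h.abs_B_le z) (h.space_B_le _ z))

theorem norm_smul_velocity_add_le :
    ‖ρ z • q.velocity B z + ∂[q.i] (q.timeCorr (flux A B)) z • q.velocity B z‖ ≤
      6 * (C * blockBound d) ^ 2 * (q.c₂ * q.active z) := by
  have hΛ := zero_le_one.trans (one_le_mul_blockBound h)
  have hCΛ := le_mul_blockBound h
  have hy := mul_nonneg q.c₂_pos.le (q.active_nonneg z)
  have hσ := q.inv_σ_le_one
  have hcoef := abs_add_le_of_abs_le (h.abs_ρ_le z)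
    (q.abs_dirDeriv_timeCorr_le z q.i (smoothPeriodic_flux hA hB) (h.space_flux_le _ z))
  rw [← add_smul]
  calc _ ≤ (C + 2 * C * (q.σ : ℝ)⁻¹) * (2 * (C * blockBound d) * (q.c₂ * q.active z)) :=
        norm_smul_le_of_le hcoef (q.norm_velocity_le_two_mul hB h z)
    _ ≤ (C * blockBound d + 2 * (C * blockBound d) * 1) *
        (2 * (C * blockBound d) * (q.c₂ * q.active z)) := by gcongr
    _ = _ := by ring

theorem norm_defect_le : ‖q.defect A B ρ u z‖ ≤
    6 * (C * blockBound d) ^ 2 * q.defectEnvelope z := by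
  have hΛ := one_le_mul_blockBound h
  have hΛsq : C * blockBound d ≤ (C * blockBound d) ^ 2 := le_self_pow₀ hΛ two_ne_zero
  have hcη := mul_nonneg (mul_pos (mul_pos q.c₁_pos q.c₂_pos) q.η_pos).le (q.active_nonneg z)
  have hσκ := mul_nonneg (mul_pos (mul_pos (mul_pos q.c₁_pos q.η_pos) q.σ_pos) q.κ_pos).le
    (q.active_nonneg z)
  have hbelow := mul_nonneg (mul_pos (inv_pos.2 q.lam_pos) q.κ_pos).le (q.activeBelowSum_nonneg z)
  have hσ := inv_pos.2 q.σ_pos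
  have hc₁ := mul_nonneg q.c₁_pos.le (q.active_nonneg z)
  rw [q.defect_eq, add_assoc (q.density A B z • u z)]
  refine (norm_sub_le_of_le (norm_add_le_of_le (norm_add_le_of_le (norm_add_le_of_le
    (q.norm_density_smul_le hA hB h z) (q.norm_smul_velocity_add_le hA hB h z))
    ((Pi.norm_single _).trans_le (q.abs_principal_le hA hB h z)))
    ((Pi.norm_single _).trans_le (norm_sub_le_of_le
      (q.abs_dirDeriv_timeDir_potential_le hA h z) (q.abs_cross_potential_le hA hB h z))))
    (q.norm_sum_single_dirDeriv_pipeCorr_le hA hB h z)).trans ?_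
  rw [defectEnvelope]
  nlinarith [mul_nonneg (sub_nonneg.2 hΛsq) hσκ, mul_nonneg (sub_nonneg.2 hΛsq) hbelow,
    mul_nonneg (sub_nonneg.2 hΛsq) hσ.le, mul_nonneg (sq_nonneg (C * blockBound d)) hσκ,
    mul_nonneg (sq_nonneg (C * blockBound d)) hbelow,
    mul_nonneg (sq_nonneg (C * blockBound d)) hσ.le,
    mul_nonneg (sq_nonneg (C * blockBound d)) hc₁, mul_nonneg (sq_nonneg (C * blockBound d)) hcη]

end Defect

section VelocityDerivative

variable {B : SpaceTime d → ℝ} {C : ℝ} {z : SpaceTime d}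

theorem dirDeriv_rotGrad_apply {ψ : SpaceTime d → ℝ} (hψ : SmoothPeriodic ψ) (i j k : Fin d)
    (v z : SpaceTime d) :
    dirDeriv v (fun z => rotGrad i j ψ z k) z = rotGrad i j (dirDeriv v ψ) z k := by
  simp only [rotGrad, Pi.sub_apply]
  rw [dirDeriv_sub _ (((hψ.dirDeriv _).single i).apply k) (((hψ.dirDeriv _).single j).apply k),
    dirDeriv_single_apply, dirDeriv_single_apply, dirDeriv_comm hψ, dirDeriv_comm hψ v]

theorem opNorm_le_of_apply_single_le {E : Type*} [NormedAddCommGroup E] [NormedSpace ℝ E]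
    {L : Vec d →L[ℝ] E} {M : ℝ} (h : ∀ l, ‖L (Pi.single l 1)‖ ≤ M) : ‖L‖ ≤ d * M := by
  have hsum : ∑ l, ‖L (Pi.single l 1)‖ ≤ d * M :=
    (Finset.sum_le_card_nsmul _ _ M fun l _ => h l).trans_eq (by simp)
  refine L.opNorm_le_bound ((Finset.sum_nonneg fun l _ => norm_nonneg _).trans hsum) fun v => ?_
  calc ‖L v‖ = ‖∑ l, v l • L (Pi.single l 1)‖ := by
        conv_lhs => rw [← Finset.univ_sum_single v, map_sum]
        simp only [← map_smul, ← Pi.single_smul, smul_eq_mul, mul_one]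
    _ ≤ ∑ l, ‖v‖ * ‖L (Pi.single l 1)‖ := (norm_sum_le _ _).trans <|
      Finset.sum_le_sum fun l _ => (norm_smul_le _ _).trans <|
        mul_le_mul_of_nonneg_right (norm_le_pi_norm v l) (norm_nonneg _)
    _ ≤ d * M * ‖v‖ := by
      rw [← Finset.mul_sum, mul_comm]
      exact mul_le_mul_of_nonneg_right hsum (norm_nonneg _)

theorem norm_fderiv_slice_le {F : SpaceTime d → Vec d} (hF : SmoothPeriodic F) {t : ℝ} {x : Vec d}
    {M : ℝ} (hM : 0 ≤ M) (h : ∀ k l, |∂[l] (fun z => F z k) (t, x)| ≤ M) :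
    ‖fderiv ℝ (fun x => F (t, x)) x‖ ≤ d * M := by
  refine opNorm_le_of_apply_single_le fun l => (pi_norm_le_iff_of_nonneg hM).2 fun k => ?_
  rw [fderiv_pi fun k => ((hF.apply k).contDiff_slice t).differentiable (by simp) x]
  exact (congrArg norm (fderiv_slice_single (hF.apply k) t x l)).trans_le (h k l)

theorem norm_fderiv_velocity_le (hB : SmoothPeriodic B) (hB0 : ∀ z, |B z| ≤ C)
    (hB1 : ∀ k z, |∂[k] B z| ≤ C) (hB2 : ∀ k l z, |∂[k] (∂[l] B) z| ≤ C) (t : ℝ) (x : Vec d) :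
    ‖fderiv ℝ (fun x => q.velocity B (t, x)) x‖ ≤
      d * (4 * C * blockBound d * (q.c₂ * (q.lam * q.μ) * q.active (t, x))) := by
  have hbound : ∀ k l, |∂[k] (∂[l] (q.potential q.c₂ B)) (t, x)| ≤
      4 * C * blockBound d * (q.c₂ * (q.lam * q.μ) * q.active (t, x)) := fun k l =>
    q.abs_dirDeriv_dirDeriv_potential_le _ l k q.c₂_pos.le hB (hB0 _) (hB1 · _) (hB2 k l _)
  refine norm_fderiv_slice_le (q.smoothPeriodic_velocity hB)
    ((abs_nonneg _).trans (hbound q.i q.j)) fun k l => ?_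
  unfold velocity
  rw [dirDeriv_rotGrad_apply (q.smoothPeriodic_potential _ hB), ← Real.norm_eq_abs]
  exact (norm_le_pi_norm _ k).trans (norm_rotGrad_le (hbound _ _) (hbound _ _))

end VelocityDerivative

end BlockParams

/-! ### Mixed norms of concentrated functions -/

section MixedNorm

variable {d : ℕ} {E E' : Type*} [NormedAddCommGroup E] [NormedAddCommGroup E'] {e r : ℝ≥0∞}

/-- The norm of `L^e` in time with values in `L^r(𝕋^d)`. -/
noncomputable def mixedNorm (e r : ℝ≥0∞) (F : SpaceTime d → E) : ℝ≥0∞ :=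
  eLpNorm (fun t => eLpNorm (fun x => F (t, x)) r (torusVol d)) e periodVol

theorem measurable_eLpNorm_slice {F : SpaceTime d → E} (hF : StronglyMeasurable F) (hr : r ≠ ∞) :
    Measurable fun t => eLpNorm (fun x => F (t, x)) r (torusVol d) := by
  rcases eq_or_ne r 0 with rfl | hr0
  · simp
  · simp only [eLpNorm_eq_lintegral_rpow_enorm_toReal hr0 hr]
    exact (hF.enorm.pow_const _).lintegral_prod_right'.pow_const _

theorem mixedNorm_le_mul {F : SpaceTime d → E} {G : SpaceTime d → E'} {a : ℝ}
    (h : ∀ z, ‖F z‖ ≤ a * ‖G z‖) : mixedNorm e r F ≤ ENNReal.ofReal a * mixedNorm e r G :=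
  eLpNorm_le_mul_eLpNorm_of_ae_le_mul' (c := a.toNNReal) (.of_forall fun t =>
    eLpNorm_le_mul_eLpNorm_of_ae_le_mul (.of_forall fun x => h (t, x)) r) e

theorem mixedNorm_mono {F : SpaceTime d → E} {G : SpaceTime d → E'}
    (h : ∀ z, ‖F z‖ ≤ ‖G z‖) : mixedNorm e r F ≤ mixedNorm e r G := by
  simpa using mixedNorm_le_mul (a := 1) fun z => by simpa using h z

theorem mixedNorm_add_le {F G : SpaceTime d → E} (hF : StronglyMeasurable F)
    (hG : StronglyMeasurable G) (he : 1 ≤ e) (hr : 1 ≤ r) (hr' : r ≠ ∞) :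
    mixedNorm e r (fun z => F z + G z) ≤ mixedNorm e r F + mixedNorm e r G := by
  refine le_trans (eLpNorm_mono_enorm fun t => ?_) (eLpNorm_add_le
    (measurable_eLpNorm_slice hF hr').aestronglyMeasurable
    (measurable_eLpNorm_slice hG hr').aestronglyMeasurable he)
  exact eLpNorm_add_le (hF.comp_measurable measurable_prodMk_left).aestronglyMeasurable
    (hG.comp_measurable measurable_prodMk_left).aestronglyMeasurable hr

theorem mixedNorm_sum_le {ι : Type*} (S : Finset ι) {F : ι → SpaceTime d → E}
    (hF : ∀ l, StronglyMeasurable (F l)) (he : 1 ≤ e) (hr : 1 ≤ r) (hr' : r ≠ ∞) :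
    mixedNorm e r (fun z => ∑ l ∈ S, F l z) ≤ ∑ l ∈ S, mixedNorm e r (F l) := by
  classical
  induction S using Finset.induction_on with
  | empty => simp [mixedNorm]
  | insert l S hl ih =>
    simp only [Finset.sum_insert hl]
    exact (mixedNorm_add_le (hF l) (Finset.stronglyMeasurable_fun_sum _ fun k _ => hF k) he hr
      hr').trans (add_le_add_right ih _)

theorem mixedNorm_const (c : E) (he : e ≠ 0) (hr : r ≠ 0) :
    mixedNorm e r (fun _ : SpaceTime d => c) = ‖c‖ₑ := by
  simp [mixedNorm, eLpNorm_const, he, hr, IsProbabilityMeasure.ne_zero]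

theorem mixedNorm_le_of_norm_le {F : SpaceTime d → E} {a : ℝ} (he : e ≠ 0) (hr : r ≠ 0)
    (h : ∀ z, ‖F z‖ ≤ a) : mixedNorm e r F ≤ ENNReal.ofReal a := by
  refine (mixedNorm_le_mul (G := fun _ => (1 : ℝ)) (a := a) (by simpa using h)).trans ?_
  simp [mixedNorm_const _ he hr]

end MixedNorm

section Concentration

variable {d : ℕ} {m : ℝ} {n : ℕ} {r : ℝ≥0∞}

theorem eLpNorm_boxInd_mul_le (A : Finset (Fin d)) (hm : 1 ≤ m) (hn : n ≠ 0)
    {F F' : Vec d → ℝ≥0∞} (hF' : Measurable F') (hF : ZPer F)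
    (hFF' : ∀ x z, ‖z‖ ≤ 1 → F (x + (n : ℝ)⁻¹ • z) ≤ F' x) (hr : r ≠ 0) :
    eLpNorm (fun x => ENNReal.ofReal ((m ^ A.card) ^ r.toReal⁻¹) *
      (ENNReal.ofReal (boxInd A m (n • x)) * F x)) r (torusVol d) ≤ eLpNorm F' r (torusVol d) := by
  have hdom := isAddFundamentalDomain_intLattice d
  simp only [← restrict_fundamentalDomain_eq_torusVol]
  refine eLpNorm_le_of_concentrated (S := fun x => ENNReal.ofReal (boxInd A m x)) hdom ?_ ?_ hn
    hF' (measurable_boxInd A m).ennreal_ofReal hF.intLattice_add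
    (fun g hg x => by rw [(zPer_boxInd A m).intLattice_add g hg]) (fun x => ?_) hFF' hr
    (N := m ^ A.card) (by positivity) ?_ fun _ => le_rfl
  · rw [← Measure.restrict_apply_univ, restrict_fundamentalDomain_eq_torusVol, measure_univ]
  · rw [ZSpan.fundamentalDomain_pi_basisFun]
    refine fun z hz => (pi_norm_le_iff_of_nonneg zero_le_one).2 fun k => ?_
    rw [Real.norm_of_nonneg (hz k trivial).1]
    exact (hz k trivial).2.le
  · rcases IsIdempotentElem.iff_eq_zero_or_one.1 (boxInd_mul_self A m x) with h | h <;> simp [h]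
  · have hint := integral_boxInd A hm
    rw [restrict_fundamentalDomain_eq_torusVol, ← hint]
    refine (ofReal_integral_eq_lintegral_ofReal (.of_integral_ne_zero ?_)
      (.of_forall (boxInd_nonneg A m))).ge
    rw [hint]
    positivity

theorem eLpNorm_concInd_mul_le (hm : 1 ≤ m) (hn : n ≠ 0)
    {F F' : ℝ → ℝ≥0∞} (hF' : Measurable F') (hF : Function.Periodic F 1)
    (hFF' : ∀ t τ, |τ| ≤ 1 → F (t + (n : ℝ)⁻¹ * τ) ≤ F' t) (hr : r ≠ 0) :
    eLpNorm (fun t => ENNReal.ofReal (m ^ r.toReal⁻¹) *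
      (ENNReal.ofReal (concInd m (n * t)) * F t)) r periodVol ≤ eLpNorm F' r periodVol := by
  have hdom := isAddFundamentalDomain_Ioc one_pos (0 : ℝ)
  rw [zero_add] at hdom
  have hper (f : ℝ → ℝ≥0∞) (hf : Function.Periodic f 1) (g : ℝ)
      (hg : g ∈ AddSubgroup.zmultiples (1 : ℝ)) (t : ℝ) : f (g + t) = f t := by
    obtain ⟨k, rfl⟩ := AddSubgroup.mem_zmultiples_iff.1 hg
    rw [add_comm, hf.zsmul]
  have hSper : Function.Periodic (fun t => ENNReal.ofReal (concInd m t)) 1 := fun t => by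
    simpa using congrArg ENNReal.ofReal (concInd_add_int m t 1)
  rw [periodVol, Measure.restrict_congr_set Ioo_ae_eq_Ioc]
  refine eLpNorm_le_of_concentrated (S := fun t => ENNReal.ofReal (concInd m t)) hdom (by simp)
    (fun t ht => by simpa [abs_of_pos ht.1] using ht.2) hn hF' (measurable_concInd m).ennreal_ofReal
    (hper F hF) (hper _ hSper) (fun t => ?_)
    (by simpa using hFF') hr (N := m) (by positivity) ?_ fun t => by rw [nsmul_eq_mul]
  · rcases IsIdempotentElem.iff_eq_zero_or_one.1 (concInd_mul_self m t) with h | h <;> simp [h]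
  · have hint := integral_concInd hm
    rw [← Measure.restrict_congr_set Ioo_ae_eq_Ioc, ← hint]
    refine (ofReal_integral_eq_lintegral_ofReal (.of_integral_ne_zero ?_)
      (.of_forall (concInd_nonneg m))).ge
    rw [hint]
    positivity

variable {E : Type*} [NormedAddCommGroup E] {e : ℝ≥0∞} {κ ε a : ℝ} {σ : ℕ}

theorem mixedNorm_abs_add_le {F : SpaceTime d → ℝ} (hF : SmoothPeriodic F) (he : 1 ≤ e)
    (hr : 1 ≤ r) (hr' : r ≠ ∞) :
    mixedNorm e r (fun z => |F z| + a) ≤ mixedNorm e r F + ENNReal.ofReal |a| := by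
  refine (mixedNorm_add_le hF.continuous.abs.stronglyMeasurable stronglyMeasurable_const he hr
    hr').trans (add_le_add (mixedNorm_mono fun z => ?_) ?_)
  · rw [Real.norm_eq_abs, abs_abs, Real.norm_eq_abs]
  · exact mixedNorm_le_of_norm_le (zero_lt_one.trans_le he).ne' (zero_lt_one.trans_le hr).ne'
      fun _ => le_rfl

theorem eLpNorm_slice_le_of_concentrated (A : Finset (Fin d)) (hm : 1 ≤ m) (hn : n ≠ 0)
    (hr : r ≠ 0) {F : SpaceTime d → ℝ} (hF : SmoothPeriodic F) (hε : 0 ≤ ε)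
    (hslow : ∀ z z', ‖z' - z‖ ≤ (n : ℝ)⁻¹ → |F z'| ≤ |F z| + ε) (t : ℝ) :
    eLpNorm (fun x => (m ^ A.card) ^ r.toReal⁻¹ * (boxInd A m (n • x) * (|F (t, x)| + ε))) r
      (torusVol d) ≤ eLpNorm (fun x => |F (t, x)| + 2 * ε) r (torusVol d) := by
  have hn' : (0 : ℝ) ≤ (n : ℝ)⁻¹ := by positivity
  refine le_trans (eLpNorm_mono_enorm fun x => ?_) (eLpNorm_boxInd_mul_le A hm hn
    (F := fun x => ENNReal.ofReal (|F (t, x)| + ε)) (F' := fun x => ‖|F (t, x)| + 2 * ε‖ₑ)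
    ?_ (fun x k => by simp only [hF.space_periodic t x k]) (fun x z hz => ?_) hr)
  · rw [Real.enorm_of_nonneg (mul_nonneg (by positivity) (mul_nonneg (boxInd_nonneg A m _)
      (by positivity))), ENNReal.ofReal_mul (by positivity),
      ENNReal.ofReal_mul (boxInd_nonneg A m _), enorm_eq_self]
  · exact ((hF.continuous_slice t).abs.add continuous_const).enorm.measurable
  · rw [Real.enorm_of_nonneg (by positivity)]
    refine ENNReal.ofReal_le_ofReal ?_
    have := hslow (t, x) (t, x + (n : ℝ)⁻¹ • z) (by
      simpa [norm_smul] using mul_le_mul_of_nonneg_left hz hn')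
    linarith

theorem mixedNorm_concInd_mul_boxInd_mul_le (A : Finset (Fin d)) (hκ : 1 ≤ κ) (hm : 1 ≤ m)
    (hσ : σ ≠ 0) (hn : n ≠ 0) (he : e ≠ 0) (hr : r ≠ 0) (hr' : r ≠ ∞) {F : SpaceTime d → ℝ}
    (hF : SmoothPeriodic F) (hε : 0 ≤ ε)
    (hslow : ∀ z z', ‖z' - z‖ ≤ max (σ : ℝ)⁻¹ (n : ℝ)⁻¹ → |F z'| ≤ |F z| + ε) :
    mixedNorm e r (fun z => κ ^ e.toReal⁻¹ * concInd κ (σ * z.1) *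
        ((m ^ A.card) ^ r.toReal⁻¹ * (boxInd A m (n • z.2) * (|F z| + ε)))) ≤
      mixedNorm e r (fun z => |F z| + 3 * ε) := by
  have hσ' : (0 : ℝ) ≤ (σ : ℝ)⁻¹ := by positivity
  set Φ : ℝ → ℝ → ℝ≥0∞ := fun k t => eLpNorm (fun x => |F (t, x)| + k * ε) r (torusVol d)
  let g (t : ℝ) (x : Vec d) : ℝ :=
    (m ^ A.card) ^ r.toReal⁻¹ * (boxInd A m (n • x) * (|F (t, x)| + ε))
  have hspace (t : ℝ) :
      eLpNorm ((κ ^ e.toReal⁻¹ * concInd κ (σ * t)) • g t) r (torusVol d) ≤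
      ENNReal.ofReal (κ ^ e.toReal⁻¹) * (ENNReal.ofReal (concInd κ (σ * t)) * Φ 2 t) := by
    have := eLpNorm_slice_le_of_concentrated A hm hn hr hF hε
      (fun z z' h => hslow z z' (h.trans (le_max_right _ _))) t
    rw [eLpNorm_const_smul, Real.enorm_of_nonneg (mul_nonneg (by positivity) (concInd_nonneg _ _)),
      ENNReal.ofReal_mul (by positivity), mul_assoc]
    gcongr
  have htime (t τ : ℝ) (hτ : |τ| ≤ 1) : Φ 2 (t + (σ : ℝ)⁻¹ * τ) ≤ Φ 3 t := by
    refine eLpNorm_mono_real fun x => ?_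
    have hclose := hslow (t, x) (t + (σ : ℝ)⁻¹ * τ, x) (by
      simpa [Prod.norm_def, abs_mul] using .inl (mul_le_of_le_one_right hσ' hτ))
    rw [Real.norm_of_nonneg (by positivity)]
    linarith
  refine le_trans (eLpNorm_mono_enorm hspace) (eLpNorm_concInd_mul_le hκ hσ ?_ (fun t => ?_)
    htime he)
  · exact measurable_eLpNorm_slice (F := fun z => |F z| + 3 * ε)
      (hF.continuous.abs.add continuous_const).stronglyMeasurable hr'
  · simp only [Φ, hF.time_periodic]

theorem mixedNorm_le_of_concentrated (A : Finset (Fin d)) (hκ : 1 ≤ κ) (hm : 1 ≤ m) (hσ : σ ≠ 0)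
    (hn : n ≠ 0) (he : 1 ≤ e) (hr : 1 ≤ r) (hr' : r ≠ ∞) {F : SpaceTime d → ℝ}
    (hF : SmoothPeriodic F) (hε : 0 ≤ ε)
    (hslow : ∀ z z', ‖z' - z‖ ≤ max (σ : ℝ)⁻¹ (n : ℝ)⁻¹ → |F z'| ≤ |F z| + ε)
    {G : SpaceTime d → E} (hG : ∀ z, ‖G z‖ ≤ a * (κ ^ e.toReal⁻¹ * concInd κ (σ * z.1) *
      ((m ^ A.card) ^ r.toReal⁻¹ * (boxInd A m (n • z.2) * (|F z| + ε))))) :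
    mixedNorm e r G ≤ ENNReal.ofReal a * (mixedNorm e r F + ENNReal.ofReal (3 * ε)) := by
  set H : SpaceTime d → ℝ := fun z => κ ^ e.toReal⁻¹ * concInd κ (σ * z.1) *
    ((m ^ A.card) ^ r.toReal⁻¹ * (boxInd A m (n • z.2) * (|F z| + ε)))
  have hG' (z : SpaceTime d) : ‖G z‖ ≤ a * ‖H z‖ := by
    rw [Real.norm_of_nonneg]
    · exact hG z
    · exact mul_nonneg (mul_nonneg (by positivity) (concInd_nonneg _ _))
        (mul_nonneg (by positivity) (mul_nonneg (boxInd_nonneg A m _) (by positivity)))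
  have hH : mixedNorm e r H ≤ mixedNorm e r (fun z => |F z| + 3 * ε) :=
    mixedNorm_concInd_mul_boxInd_mul_le A hκ hm hσ hn (zero_lt_one.trans_le he).ne'
      (zero_lt_one.trans_le hr).ne' hr' hF hε hslow
  calc mixedNorm e r G ≤ ENNReal.ofReal a * mixedNorm e r H := mixedNorm_le_mul hG'
    _ ≤ ENNReal.ofReal a * mixedNorm e r (fun z => |F z| + 3 * ε) := mul_le_mul_right hH _
    _ ≤ ENNReal.ofReal a * (mixedNorm e r F + ENNReal.ofReal |3 * ε|) :=
      mul_le_mul_right (mixedNorm_abs_add_le hF he hr hr') _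
    _ = _ := by rw [abs_of_nonneg (by positivity : 0 ≤ 3 * ε)]

end Concentration

/-! ### Norms of the corrector -/

section SobolevNorm

variable {d : ℕ} {E : Type*} [NormedAddCommGroup E] [NormedSpace ℝ E] {e r : ℝ≥0∞}
  {F G : SpaceTime d → E}

/-- The spatial derivative of a function on space-time. -/
noncomputable def spaceGrad (F : SpaceTime d → E) (z : SpaceTime d) : Vec d →L[ℝ] E :=
  fderiv ℝ (fun x => F (z.1, x)) z.2

/-- The norm of `L^e` in time with values in `W^{1,r}(𝕋^d)`. -/
noncomputable def mixedW1Norm (e r : ℝ≥0∞) (F : SpaceTime d → E) : ℝ≥0∞ :=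
  mixedNorm e r F + mixedNorm e r (spaceGrad F)

theorem SmoothPeriodic.continuous_spaceGrad (hF : SmoothPeriodic F) : Continuous (spaceGrad F) := by
  have hgrad : spaceGrad F = fun z => (fderiv ℝ F z).comp (.inr ℝ ℝ (Vec d)) := funext fun z =>
    ((hF.differentiable z).hasFDerivAt.comp z.2 (hasFDerivAt_prodMk_right z.1 z.2)).fderiv
  rw [hgrad]
  exact hF.fderiv.continuous.clm_comp continuous_const

theorem mixedW1Norm_add_le (hF : SmoothPeriodic F) (hG : SmoothPeriodic G) (he : 1 ≤ e)
    (hr : 1 ≤ r) (hr' : r ≠ ∞) :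
    mixedW1Norm e r (fun z => F z + G z) ≤ mixedW1Norm e r F + mixedW1Norm e r G := by
  have hgrad : spaceGrad (fun z => F z + G z) = fun z => spaceGrad F z + spaceGrad G z :=
    funext fun z => fderiv_fun_add ((hF.contDiff_slice z.1).differentiable (by simp) z.2)
      ((hG.contDiff_slice z.1).differentiable (by simp) z.2)
  rw [mixedW1Norm, hgrad, mixedW1Norm, mixedW1Norm, add_add_add_comm]
  exact add_le_add (mixedNorm_add_le hF.continuous.stronglyMeasurable
    hG.continuous.stronglyMeasurable he hr hr') (mixedNorm_add_le
    hF.continuous_spaceGrad.stronglyMeasurable hG.continuous_spaceGrad.stronglyMeasurable he hr hr')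

end SobolevNorm

section PairingBound

variable {d : ℕ} {F : SpaceTime d → ℝ}

theorem abs_integral_dirDeriv_mul_le (hF : SmoothPeriodic F) {t b : ℝ} (hb : 0 ≤ b)
    (hFb : eLpNorm (fun x => F (t, x)) 1 (torusVol d) ≤ ENNReal.ofReal b) (k : Fin d)
    {φ : Vec d → ℝ} (hφ : ContDiff ℝ (⊤ : ℕ∞) φ) (hper : ZPer φ) :
    |∫ x in fundCube d, ∂[k] F (t, x) * φ x| ≤ b * CkN 1 φ := by
  have hint : Integrable (fun x => F (t, x)) (torusVol d) :=
    integrableOn_fundCube (hF.continuous_slice t)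
  have hL1 : ∫ x in fundCube d, |F (t, x)| ≤ b := by
    rw [eLpNorm_one_eq_lintegral_enorm, ← ofReal_integral_norm_eq_lintegral_enorm hint] at hFb
    exact (ENNReal.ofReal_le_ofReal_iff hb).1 hFb
  rw [integral_dirDeriv_mul hF t k hφ hper, abs_neg]
  calc |∫ x in fundCube d, F (t, x) * fderiv ℝ φ x (Pi.single k 1)|
      ≤ ∫ x in fundCube d, |F (t, x)| * CkN 1 φ := by
        rw [← Real.norm_eq_abs]
        refine norm_integral_le_of_norm_le (hint.abs.mul_const _)
          ((ae_restrict_mem measurableSet_Icc).mono fun x hx => ?_)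
        rw [norm_mul]
        exact mul_le_mul_of_nonneg_left (abs_fderiv_single_le_CkN_one hφ hx k) (abs_nonneg _)
    _ = (∫ x in fundCube d, |F (t, x)|) * CkN 1 φ := integral_mul_const _ _
    _ ≤ b * CkN 1 φ := mul_le_mul_of_nonneg_right hL1 (CkN_nonneg 1 φ)

end PairingBound

namespace BlockParams

variable {d : ℕ} (q : BlockParams d)

section Active

variable {E : Type*} [NormedAddCommGroup E] {e r : ℝ≥0∞} {G : SpaceTime d → E} {a : ℝ}

theorem mixedNorm_le_of_norm_le_indicator (A : Finset (Fin d)) (he : 1 ≤ e) (hr : 1 ≤ r)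
    (hr' : r ≠ ∞) (hG : ∀ z, ‖G z‖ ≤
      a * (concInd q.κ (q.σ * z.1) * boxInd A q.μ (q.lam • z.2))) :
    mixedNorm e r G ≤ ENNReal.ofReal
      (a * ((q.κ ^ e.toReal⁻¹)⁻¹ * ((q.μ ^ A.card) ^ r.toReal⁻¹)⁻¹)) := by
  have hκ := Real.rpow_pos_of_pos q.κ_pos e.toReal⁻¹
  have hμ := Real.rpow_pos_of_pos (pow_pos q.μ_pos A.card) r.toReal⁻¹
  have halg {K M : ℝ} (hK : 0 < K) (hM : 0 < M) (x y : ℝ) :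
      a * (x * y) = a * (K⁻¹ * M⁻¹) * (K * x * (M * (y * (|1| + 0)))) := by
    rw [abs_one]
    field_simp
    ring
  have h := mixedNorm_le_of_concentrated A q.one_le_κ q.one_le_μ (σ := q.σ) (n := q.lam)
    (Nat.one_le_iff_ne_zero.1 q.one_le_σ) (Nat.one_le_iff_ne_zero.1 q.one_le_lam) he hr hr'
    (SmoothPeriodic.const (1 : ℝ)) le_rfl (fun _ _ _ => by simp) (G := G)
    (a := a * ((q.κ ^ e.toReal⁻¹)⁻¹ * ((q.μ ^ A.card) ^ r.toReal⁻¹)⁻¹))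
    fun z => (hG z).trans_eq (halg hκ hμ _ _)
  simpa [mixedNorm_const _ (zero_lt_one.trans_le he).ne' (zero_lt_one.trans_le hr).ne'] using h

/-- The norm of `active` in `L^e` in time with values in `L^r(𝕋^d)`. -/
noncomputable def activeNorm (e r : ℝ≥0∞) : ℝ :=
  (q.κ ^ e.toReal⁻¹)⁻¹ * ((q.μ ^ (d - 1)) ^ r.toReal⁻¹)⁻¹

theorem mixedNorm_le_of_norm_le_active (he : 1 ≤ e) (hr : 1 ≤ r) (hr' : r ≠ ∞)
    (hG : ∀ z, ‖G z‖ ≤ a * q.active z) :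
    mixedNorm e r G ≤ ENNReal.ofReal (a * q.activeNorm e r) := by
  have h := q.mixedNorm_le_of_norm_le_indicator q.transverse he hr hr' hG
  rwa [card_transverse] at h

theorem mixedNorm_activeBelow_le (l : Fin d) :
    mixedNorm 1 1 (q.activeBelow l) ≤ ENNReal.ofReal q.κ⁻¹ := by
  have hμ := pow_pos q.μ_pos (q.transverseBelow l).card
  refine (q.mixedNorm_le_of_norm_le_indicator (q.transverseBelow l) le_rfl le_rfl one_ne_top
    (a := q.μ ^ (q.transverseBelow l).card) fun z => ?_).trans_eq ?_
  · rw [Real.norm_of_nonneg (q.activeBelow_nonneg l z), activeBelow, mul_left_comm]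
  · congr 1
    simp only [toReal_one, inv_one, Real.rpow_one]
    field_simp

end Active

section Estimates

variable {A B ρ : SpaceTime d → ℝ} {u : SpaceTime d → Vec d} {C : ℝ} {e r : ℝ≥0∞}

theorem stronglyMeasurable_concInd_mul_boxInd (S : Finset (Fin d)) (c : ℝ) :
    StronglyMeasurable fun z : SpaceTime d =>
      concInd q.κ (q.σ * z.1) * (c * boxInd S q.μ (q.lam • z.2)) :=
  (((measurable_concInd _).comp (by fun_prop)).mul
    (((measurable_boxInd _ _).comp (by fun_prop)).const_mul _)).stronglyMeasurable

theorem stronglyMeasurable_active : StronglyMeasurable q.active := by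
  have h := q.stronglyMeasurable_concInd_mul_boxInd q.transverse 1
  simp only [one_mul] at h
  exact h

theorem stronglyMeasurable_activeBelow (l : Fin d) : StronglyMeasurable (q.activeBelow l) :=
  q.stronglyMeasurable_concInd_mul_boxInd (q.transverseBelow l) _

theorem mixedNorm_activeBelowSum_le :
    mixedNorm 1 1 q.activeBelowSum ≤ ENNReal.ofReal (d * q.κ⁻¹) := by
  have hκ := inv_pos.2 q.κ_pos
  have hcard : (q.transverse.card : ℝ) ≤ d := by
    exact_mod_cast (Finset.card_le_univ q.transverse).trans_eq (Fintype.card_fin d)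
  calc mixedNorm 1 1 q.activeBelowSum
      ≤ ∑ l ∈ q.transverse, mixedNorm 1 1 (q.activeBelow l) :=
        mixedNorm_sum_le _ q.stronglyMeasurable_activeBelow le_rfl le_rfl one_ne_top
    _ ≤ q.transverse.card • ENNReal.ofReal q.κ⁻¹ :=
        Finset.sum_le_card_nsmul _ _ _ fun l _ => q.mixedNorm_activeBelow_le l
    _ = ENNReal.ofReal (q.transverse.card * q.κ⁻¹) := by
        rw [← ENNReal.ofReal_nsmul, nsmul_eq_mul]
    _ ≤ ENNReal.ofReal (d * q.κ⁻¹) := by gcongr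

/-- The bound of the `L^1` norm of `defectEnvelope`. -/
noncomputable def defectMass : ℝ :=
  (q.c₁ + q.c₂ + q.c₁ * q.c₂ * q.η + q.c₁ * q.η * q.σ * q.κ) * q.activeNorm 1 1
    + (q.σ : ℝ)⁻¹ + (q.lam : ℝ)⁻¹ * d

theorem activeNorm_pos : 0 < q.activeNorm e r :=
  mul_pos (inv_pos.2 (Real.rpow_pos_of_pos q.κ_pos _))
    (inv_pos.2 (Real.rpow_pos_of_pos (pow_pos q.μ_pos _) _))

theorem mixedNorm_defectEnvelope_le :
    mixedNorm 1 1 q.defectEnvelope ≤ ENNReal.ofReal q.defectMass := by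
  have hκ := q.κ_pos
  have hσ := inv_pos.2 q.σ_pos
  have hlam := inv_pos.2 q.lam_pos
  have hη := q.η_pos
  have hc₁ := q.c₁_pos
  have hc₂ := q.c₂_pos
  have hσ' := q.σ_pos
  have hN := q.activeNorm_pos (e := 1) (r := 1)
  set a := q.c₁ + q.c₂ + q.c₁ * q.c₂ * q.η + q.c₁ * q.η * q.σ * q.κ
  have ha0 : 0 < a := by positivity
  have hbelow : mixedNorm 1 1 (fun z => (q.lam : ℝ)⁻¹ * q.κ * q.activeBelowSum z) ≤
      ENNReal.ofReal ((q.lam : ℝ)⁻¹ * d) := by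
    refine (mixedNorm_le_mul (G := q.activeBelowSum) (a := (q.lam : ℝ)⁻¹ * q.κ) fun z => ?_).trans
      ((mul_le_mul_right q.mixedNorm_activeBelowSum_le _).trans_eq ?_)
    · rw [norm_mul, Real.norm_of_nonneg (by positivity : 0 ≤ (q.lam : ℝ)⁻¹ * q.κ)]
    · rw [← ENNReal.ofReal_mul (by positivity)]
      congr 1
      field_simp
  have hactive : mixedNorm 1 1 (fun z => a * q.active z) ≤
      ENNReal.ofReal (a * q.activeNorm 1 1) :=
    q.mixedNorm_le_of_norm_le_active le_rfl le_rfl one_ne_top fun z =>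
      (Real.norm_of_nonneg (mul_nonneg ha0.le (q.active_nonneg z))).le
  have hmeas := q.stronglyMeasurable_active.const_mul a
  have hmeasBelow : StronglyMeasurable q.activeBelowSum :=
    Finset.stronglyMeasurable_fun_sum _ fun l _ => q.stronglyMeasurable_activeBelow l
  rw [defectMass, ENNReal.ofReal_add (by positivity) (by positivity),
    ENNReal.ofReal_add (by positivity) (by positivity)]
  refine (mixedNorm_add_le (hmeas.add stronglyMeasurable_const) (hmeasBelow.const_mul _) le_rfl
    le_rfl one_ne_top).trans (add_le_add ((mixedNorm_add_le hmeas stronglyMeasurable_const le_rfl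
    le_rfl one_ne_top).trans (add_le_add hactive ?_)) hbelow)
  exact mixedNorm_le_of_norm_le one_ne_zero one_ne_zero fun _ => (Real.norm_of_nonneg hσ.le).le

theorem mixedNorm_defect_le (hA : SmoothPeriodic A) (hB : SmoothPeriodic B)
    (h : SlowBound A B ρ u C) : mixedNorm 1 1 (q.defect A B ρ u) ≤
    ENNReal.ofReal (6 * (C * blockBound d) ^ 2 * q.defectMass) := by
  rw [ENNReal.ofReal_mul (by positivity)]
  exact (mixedNorm_le_mul fun z => (q.norm_defect_le hA hB h z).trans
    (mul_le_mul_of_nonneg_left (Real.le_norm_self _) (by positivity))).trans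
    (mul_le_mul_right q.mixedNorm_defectEnvelope_le _)

theorem mixedW1Norm_velocity_le (hB : SmoothPeriodic B) (h : SlowBound A B ρ u C) (he : 1 ≤ e)
    (hr : 1 ≤ r) (hr' : r ≠ ∞) : mixedW1Norm e r (q.velocity B) ≤ ENNReal.ofReal
      ((4 * d + 2) * (C * blockBound d) * (q.c₂ * (q.lam * q.μ)) * q.activeNorm e r) := by
  have hΛ := zero_le_one.trans (one_le_mul_blockBound h)
  have hc₂ := q.c₂_pos
  have := q.lam_pos
  have := q.μ_pos
  have hN := (q.activeNorm_pos (e := e) (r := r)).le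
  have hvel (z : SpaceTime d) : ‖q.velocity B z‖ ≤
      2 * (C * blockBound d) * (q.c₂ * (q.lam * q.μ)) * q.active z := by
    have hact := q.active_nonneg z
    calc ‖q.velocity B z‖ ≤ 2 * (C * blockBound d) * (q.c₂ * 1 * q.active z) := by
          simpa using norm_velocity_le_two_mul q hB h z
      _ ≤ 2 * (C * blockBound d) * (q.c₂ * (q.lam * q.μ) * q.active z) := by
          gcongr
          exact q.one_le_lam_mul_μ
      _ = _ := by ring
  have hgrad (z : SpaceTime d) : ‖spaceGrad (q.velocity B) z‖ ≤
      4 * d * (C * blockBound d) * (q.c₂ * (q.lam * q.μ)) * q.active z :=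
    (q.norm_fderiv_velocity_le hB h.abs_B_le h.space_B_le h.space_space_B_le z.1 z.2).trans_eq
      (by ring)
  refine (add_le_add (q.mixedNorm_le_of_norm_le_active he hr hr' hvel)
    (q.mixedNorm_le_of_norm_le_active he hr hr' hgrad)).trans_eq ?_
  rw [← ENNReal.ofReal_add (by positivity) (by positivity)]
  congr 1
  ring

end Estimates

end BlockParams

namespace BlockParams

variable {d : ℕ} (q : BlockParams d)

section Concentrated

variable {A B ρ F : SpaceTime d → ℝ} {u : SpaceTime d → Vec d} {C ε : ℝ} {e r : ℝ≥0∞}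

theorem mixedNorm_le_of_norm_le_slow {E : Type*} [NormedAddCommGroup E] {G : SpaceTime d → E}
    {a c : ℝ} (he : 1 ≤ e) (hr : 1 ≤ r) (hr' : r ≠ ∞) (hF : SmoothPeriodic F)
    (hslow : ∀ z z', ‖z' - z‖ ≤ max (q.σ : ℝ)⁻¹ (q.lam : ℝ)⁻¹ → |F z'| ≤ |F z| + ε)
    (hC : 0 ≤ C) (hη : q.η * C ≤ ε) (ha : 0 ≤ a) (hc : c * q.activeNorm e r ≤ 1)
    (hG : ∀ z, ‖G z‖ ≤ a * (c * (q.active z * (|F z| + q.η * C)))) :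
    mixedNorm e r G ≤ ENNReal.ofReal a * (mixedNorm e r F + ENNReal.ofReal (3 * ε)) := by
  have hκ := Real.rpow_pos_of_pos q.κ_pos e.toReal⁻¹
  have hμ := Real.rpow_pos_of_pos (pow_pos q.μ_pos (d - 1)) r.toReal⁻¹
  have hηC := mul_nonneg q.η_pos.le hC
  have hc' : c ≤ q.κ ^ e.toReal⁻¹ * (q.μ ^ (d - 1)) ^ r.toReal⁻¹ := by
    rwa [activeNorm, ← mul_inv, ← div_eq_mul_inv, div_le_one (mul_pos hκ hμ)] at hc
  refine mixedNorm_le_of_concentrated q.transverse q.one_le_κ q.one_le_μ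
    (Nat.one_le_iff_ne_zero.1 q.one_le_σ) (Nat.one_le_iff_ne_zero.1 q.one_le_lam) he hr hr' hF
    (hηC.trans hη) hslow fun z => (hG z).trans ?_
  have hact := q.active_nonneg z
  calc a * (c * (q.active z * (|F z| + q.η * C)))
      ≤ a * (q.κ ^ e.toReal⁻¹ * (q.μ ^ (d - 1)) ^ r.toReal⁻¹ * (q.active z * (|F z| + ε))) := by
        gcongr
    _ = _ := by
        rw [card_transverse, active]
        ring

theorem mixedNorm_density_le (hA : SmoothPeriodic A) (hB : SmoothPeriodic B)
    (h : SlowBound A B ρ u C) (he : 1 ≤ e) (hr : 1 ≤ r) (hr' : r ≠ ∞)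
    (hslow : ∀ z z', ‖z' - z‖ ≤ max (q.σ : ℝ)⁻¹ (q.lam : ℝ)⁻¹ → |A z'| ≤ |A z| + ε)
    (hη : q.η * C ≤ ε) (hc₁ : q.c₁ * q.activeNorm e r ≤ 1) :
    mixedNorm e r (q.density A B) ≤
      ENNReal.ofReal (blockBound d) * (mixedNorm e r A + ENNReal.ofReal (3 * ε))
        + ENNReal.ofReal (2 * C * (q.σ : ℝ)⁻¹) := by
  have hpot := (q.smoothPeriodic_potential q.c₁ hA).dirDeriv (spaceDir q.j)
  have hcorr := (q.smoothPeriodic_timeCorr (smoothPeriodic_flux hA hB)).dirDeriv (spaceDir q.i)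
  refine (mixedNorm_add_le hpot.continuous.stronglyMeasurable
    hcorr.continuous.stronglyMeasurable he hr hr').trans (add_le_add ?_ ?_)
  · exact q.mixedNorm_le_of_norm_le_slow he hr hr' hA hslow (zero_le_one.trans h.one_le) hη
      (zero_le_one.trans (one_le_blockBound d)) hc₁ fun z =>
        q.abs_dirDeriv_potential_le z _ q.c₁_pos.le hA (h.space_A_le _ z)
  · exact mixedNorm_le_of_norm_le (zero_lt_one.trans_le he).ne' (zero_lt_one.trans_le hr).ne'
      fun z => q.abs_dirDeriv_timeCorr_le z _ (by fun_prop) (h.space_flux_le _ z)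

theorem mixedNorm_velocity_le (hB : SmoothPeriodic B) (h : SlowBound A B ρ u C) (he : 1 ≤ e)
    (hr : 1 ≤ r) (hr' : r ≠ ∞)
    (hslow : ∀ z z', ‖z' - z‖ ≤ max (q.σ : ℝ)⁻¹ (q.lam : ℝ)⁻¹ → |B z'| ≤ |B z| + ε)
    (hη : q.η * C ≤ ε) (hc₂ : q.c₂ * q.activeNorm e r ≤ 1) :
    mixedNorm e r (q.velocity B) ≤
      ENNReal.ofReal (blockBound d) * (mixedNorm e r B + ENNReal.ofReal (3 * ε)) :=
  q.mixedNorm_le_of_norm_le_slow he hr hr' hB hslow (zero_le_one.trans h.one_le) hη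
    (zero_le_one.trans (one_le_blockBound d)) hc₂ fun z =>
      q.norm_velocity_le z hB fun k => h.space_B_le k z

end Concentrated

section Pairing

variable {A B ρ : SpaceTime d → ℝ} {u : SpaceTime d → Vec d} {C : ℝ}

theorem integral_density_eq_zero (hA : SmoothPeriodic A) (hB : SmoothPeriodic B) (t : ℝ) :
    ∫ x in fundCube d, q.density A B (t, x) = 0 := by
  have hpot := q.smoothPeriodic_potential q.c₁ hA
  have hcorr := q.smoothPeriodic_timeCorr (smoothPeriodic_flux hA hB)
  unfold density
  rw [integral_add (integrableOn_fundCube ((hpot.dirDeriv _).continuous_slice t))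
      (integrableOn_fundCube ((hcorr.dirDeriv _).continuous_slice t)),
    integral_dirDeriv_eq_zero hpot, integral_dirDeriv_eq_zero hcorr, add_zero]

theorem density_eq_zero (hA : SmoothPeriodic A) (hB : SmoothPeriodic B) {t : ℝ}
    (hAt : ∀ x, A (t, x) = 0) (x : Vec d) : q.density A B (t, x) = 0 := by
  unfold density
  rw [← fderiv_slice_single (by fun_prop), ← fderiv_slice_single (by fun_prop)]
  simp [potential, timeCorr, flux, hAt]

theorem eLpNorm_one_active_le (t : ℝ) :
    eLpNorm (fun x => q.active (t, x)) 1 (torusVol d) ≤ ENNReal.ofReal (q.μ ^ (d - 1))⁻¹ := by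
  have hμ := pow_pos q.μ_pos (d - 1)
  have hbox := eLpNorm_slice_le_of_concentrated q.transverse q.one_le_μ
    (Nat.one_le_iff_ne_zero.1 q.one_le_lam) one_ne_zero (SmoothPeriodic.const (1 : ℝ)) le_rfl
    (fun _ _ _ => by simp) t
  simp only [abs_one, mul_zero, add_zero, mul_one, toReal_one, inv_one, Real.rpow_one,
    q.card_transverse] at hbox
  refine (eLpNorm_le_mul_eLpNorm_of_ae_le_mul (c := (q.μ ^ (d - 1))⁻¹)
    (ae_of_all _ fun x => ?_) 1).trans ((mul_le_mul_right hbox _).trans_eq ?_)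
  · rw [Real.norm_of_nonneg (q.active_nonneg _), Real.norm_of_nonneg
      (mul_nonneg hμ.le (boxInd_nonneg _ _ _)), inv_mul_cancel_left₀ hμ.ne', active]
    exact mul_le_of_le_one_left (boxInd_nonneg _ _ _) (concInd_le_one _ _)
  · rw [eLpNorm_const _ one_ne_zero (NeZero.ne _)]
    simp

theorem abs_integral_density_mul_le (hA : SmoothPeriodic A) (hB : SmoothPeriodic B)
    (h : SlowBound A B ρ u C) (t : ℝ) {φ : Vec d → ℝ} (hφ : ContDiff ℝ (⊤ : ℕ∞) φ)
    (hper : ZPer φ) : |∫ x in fundCube d, q.density A B (t, x) * φ x| ≤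
      (C * blockBound d * (q.c₁ * q.η) * (q.μ ^ (d - 1))⁻¹ + 2 * C * (q.σ : ℝ)⁻¹) * CkN 1 φ := by
  have hpot := q.smoothPeriodic_potential q.c₁ hA
  have hcorr := q.smoothPeriodic_timeCorr (smoothPeriodic_flux hA hB)
  have hC := zero_le_one.trans h.one_le
  have hK := zero_le_one.trans (one_le_blockBound d)
  have := q.c₁_pos
  have := q.η_pos
  have := q.σ_pos
  have := q.μ_pos
  have hpotL1 : eLpNorm (fun x => q.potential q.c₁ A (t, x)) 1 (torusVol d) ≤
      ENNReal.ofReal (C * blockBound d * (q.c₁ * q.η) * (q.μ ^ (d - 1))⁻¹) := by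
    rw [ENNReal.ofReal_mul (by positivity)]
    refine (eLpNorm_le_mul_eLpNorm_of_ae_le_mul (ae_of_all _ fun x => ?_) 1).trans
      (mul_le_mul_right (q.eLpNorm_one_active_le t) _)
    rw [Real.norm_of_nonneg (q.active_nonneg _), mul_assoc _ _ (q.active _)]
    exact q.abs_potential_le _ q.c₁_pos.le (h.abs_A_le _)
  have hcorrL1 : eLpNorm (fun x => q.timeCorr (flux A B) (t, x)) 1 (torusVol d) ≤
      ENNReal.ofReal (2 * C * (q.σ : ℝ)⁻¹) := by
    simpa using eLpNorm_le_of_ae_bound (μ := torusVol d) (p := 1)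
      (ae_of_all _ fun x => q.abs_timeCorr_le (t, x) (h.abs_flux_le _))
  have hint {F : SpaceTime d → ℝ} (hF : SmoothPeriodic F) (k : Fin d) :
      IntegrableOn (fun x => ∂[k] F (t, x) * φ x) (fundCube d) :=
    integrableOn_fundCube (((hF.dirDeriv _).continuous_slice t).mul hφ.continuous)
  simp only [density, add_mul]
  rw [integral_add (hint hpot _) (hint hcorr _)]
  exact abs_add_le_of_abs_le
    (abs_integral_dirDeriv_mul_le hpot (by positivity) hpotL1 _ hφ hper)
    (abs_integral_dirDeriv_mul_le hcorr (by positivity) hcorrL1 _ hφ hper)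

end Pairing

end BlockParams

/-! ### Choice of the parameters -/

section HolderConjugate

variable {p : ℝ} {p' : ℝ≥0∞}

theorem inv_eq_ofReal_of_conj (hp : 1 ≤ p) (h : 1 / ENNReal.ofReal p + 1 / p' = 1) :
    p'⁻¹ = ENNReal.ofReal (1 - p⁻¹) := by
  rw [one_div, one_div, ← ENNReal.ofReal_inv_of_pos (one_pos.trans_le hp)] at h
  rw [ENNReal.ofReal_sub _ (by positivity), ENNReal.ofReal_one, ← h,
    ENNReal.add_sub_cancel_left ENNReal.ofReal_ne_top]

theorem inv_toReal_of_conj (hp : 1 ≤ p) (h : 1 / ENNReal.ofReal p + 1 / p' = 1) :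
    p'.toReal⁻¹ = 1 - p⁻¹ := by
  rw [← ENNReal.toReal_inv, inv_eq_ofReal_of_conj hp h,
    ENNReal.toReal_ofReal (sub_nonneg.2 (inv_le_one_of_one_le₀ hp))]

theorem one_le_of_conj (h : 1 / ENNReal.ofReal p + 1 / p' = 1) : 1 ≤ p' := by
  rw [← ENNReal.inv_le_one, ← one_div]
  exact le_add_self.trans_eq h

theorem ne_top_of_conj (hp : 1 < p) (h : 1 / ENNReal.ofReal p + 1 / p' = 1) : p' ≠ ∞ := by
  rw [← ENNReal.inv_ne_zero, inv_eq_ofReal_of_conj hp.le h]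
  exact (ENNReal.ofReal_pos.2 (sub_pos.2 (inv_lt_one_of_one_lt₀ hp))).ne'

end HolderConjugate

theorem eventually_mul_inv_natCast_le (K : ℝ) {ε : ℝ} (hε : 0 < ε) :
    ∀ᶠ n : ℕ in Filter.atTop, K * (n : ℝ)⁻¹ ≤ ε := by
  have h := (tendsto_inv_atTop_nhds_zero_nat (𝕜 := ℝ)).const_mul K
  rw [mul_zero] at h
  exact h.eventually_le_const hε

theorem eventually_mul_rpow_le (K : ℝ) {x ε : ℝ} (hx : x < 0) (hε : 0 < ε) :
    ∀ᶠ μ : ℝ in Filter.atTop, K * μ ^ x ≤ ε := by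
  have h := (tendsto_rpow_neg_atTop (neg_pos.2 hx)).const_mul K
  rw [mul_zero, neg_neg] at h
  exact h.eventually_le_const hε

/-- The exponents of the iteration: the density is perturbed in `L^s_t L^p_x`, the velocity in
`L^{s'}_t L^{p'}_x` and in `L^{st}_t W^{1,q}_x`. -/
structure IterationExponents (d : ℕ) where
  two_le_d : 2 ≤ d
  p : ℝ
  q : ℝ
  s : ℝ
  st : ℝ
  p' : ℝ≥0∞
  s' : ℝ≥0∞
  one_lt_p : 1 < p
  one_le_q : 1 ≤ q
  one_le_s : 1 ≤ s
  one_le_st : 1 ≤ st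
  conj_p : 1 / ENNReal.ofReal p + 1 / p' = 1
  conj_s : 1 / ENNReal.ofReal s + 1 / s' = 1
  gap : 1 + (d - 1) * (1 - 1 / p - 1 / q) < (1 - s + s / st) * (1 + (d - 1) * (1 - 1 / p))

namespace IterationExponents

variable {d : ℕ} (X : IterationExponents d)

/-- A rate `m`, for temporal concentration `κ = μ ^ (m * s)`, that makes the defect and the
velocity gradient small as `μ → ∞`. -/
structure IsRate (m : ℝ) : Prop where
  pos : 0 < m
  lt : m < 1 + (d - 1) * (1 - X.p⁻¹)
  gradient : m * (X.s - 1) + (d - 1) * (1 - X.p⁻¹) + 1 < m * X.s * X.st⁻¹ + (d - 1) * X.q⁻¹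

include X in
theorem dim_pos : (0 : ℝ) < d - 1 := by
  have : (2 : ℝ) ≤ d := by exact_mod_cast X.two_le_d
  linarith

theorem inv_p_pos : 0 < X.p⁻¹ := inv_pos.2 (one_pos.trans X.one_lt_p)

theorem one_sub_inv_p_pos : 0 < 1 - X.p⁻¹ := sub_pos.2 (inv_lt_one_of_one_lt₀ X.one_lt_p)

theorem exists_isRate : ∃ m, X.IsRate m := by
  set P : ℝ := 1 + (d - 1) * (1 - X.p⁻¹) with _hP
  have hPpos : 0 < P := add_pos one_pos (mul_pos X.dim_pos X.one_sub_inv_p_pos)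
  have hcont : Filter.Tendsto (fun m : ℝ => (1 - X.s + X.s * X.st⁻¹) * m) (nhdsWithin P (Set.Iio P))
      (nhds ((1 - X.s + X.s * X.st⁻¹) * P)) :=
    (Continuous.tendsto (by fun_prop) P).mono_left nhdsWithin_le_nhds
  have hgap : P - (d - 1) * X.q⁻¹ < (1 - X.s + X.s * X.st⁻¹) * P := by
    have := X.gap
    simp only [div_eq_mul_inv, one_mul] at this
    linear_combination this
  obtain ⟨m, hm, hm0, hmP⟩ := ((hcont.eventually (lt_mem_nhds hgap)).and
    (Ioo_mem_nhdsLT hPpos)).exists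
  exact ⟨m, hm0, hmP, by linear_combination hm⟩

theorem IsRate.exists_scale {X : IterationExponents d} {m : ℝ} (hm : X.IsRate m) (a b : ℝ) {ε : ℝ}
    (hε : 0 < ε) :
    ∃ μ : ℝ, 1 ≤ μ ∧ (μ ^ (m + (d - 1) * X.p⁻¹))⁻¹ ≤ ε ∧
      (μ ^ (m * (X.s - 1) + (d - 1) * (1 - X.p⁻¹)))⁻¹ ≤ ε ∧
      a * μ ^ (m - (1 + (d - 1) * (1 - X.p⁻¹))) ≤ ε ∧
      b * μ ^ (m * (X.s - 1) + (d - 1) * (1 - X.p⁻¹) + 1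
        + (-(m * X.s * X.st⁻¹) - (d - 1) * X.q⁻¹)) ≤ ε := by
  have hc₁ : 0 < m + (d - 1) * X.p⁻¹ := add_pos hm.pos (mul_pos X.dim_pos X.inv_p_pos)
  have hc₂ : 0 < m * (X.s - 1) + (d - 1) * (1 - X.p⁻¹) :=
    add_pos_of_nonneg_of_pos (mul_nonneg hm.pos.le (sub_nonneg.2 X.one_le_s))
      (mul_pos X.dim_pos X.one_sub_inv_p_pos)
  have hexp : m * (X.s - 1) + (d - 1) * (1 - X.p⁻¹) + 1
      + (-(m * X.s * X.st⁻¹) - (d - 1) * X.q⁻¹) < 0 := by linarith [hm.gradient]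
  obtain ⟨μ, hμ, h₁, h₂, hmean, hgrad⟩ := ((Filter.eventually_ge_atTop 1).and
    ((eventually_mul_rpow_le 1 (neg_neg_of_pos hc₁) hε).and
    ((eventually_mul_rpow_le 1 (neg_neg_of_pos hc₂) hε).and
    ((eventually_mul_rpow_le a (sub_neg.2 hm.lt) hε).and
    (eventually_mul_rpow_le b hexp hε))))).exists
  rw [one_mul, Real.rpow_neg (one_pos.trans_le hμ).le] at h₁ h₂
  exact ⟨μ, hμ, h₁, h₂, hmean, hgrad⟩

end IterationExponents

namespace BlockParams

variable {d : ℕ}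

section Scale

variable (X : IterationExponents d) {i j : Fin d} (hji : j ≠ i) {m μ : ℝ} (hm : 0 ≤ m)
  (hμ : 1 ≤ μ) {σ lam : ℕ} (hσ : 1 ≤ σ) (hlam : 1 ≤ lam)

/-- The parameters at the spatial scale `μ`: the amplitudes normalize the density in `L^s_t L^p_x`
and the velocity in `L^{s'}_t L^{p'}_x`. -/
@[simps]
noncomputable def ofScale : BlockParams d where
  i := i
  j := j
  j_ne_i := hji
  μ := μ
  one_le_μ := hμ
  κ := μ ^ (m * X.s)
  one_le_κ := Real.one_le_rpow hμ (mul_nonneg hm (zero_le_one.trans X.one_le_s))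
  σ := σ
  one_le_σ := hσ
  lam := lam
  one_le_lam := hlam
  c₁ := μ ^ (m + (d - 1) * X.p⁻¹)
  c₂ := μ ^ (m * (X.s - 1) + (d - 1) * (1 - X.p⁻¹))
  c₁_pos := Real.rpow_pos_of_pos (one_pos.trans_le hμ) _
  c₂_pos := Real.rpow_pos_of_pos (one_pos.trans_le hμ) _
  c₁_mul_c₂ := by
    have hμ0 := one_pos.trans_le hμ
    rw [← Real.rpow_natCast, Nat.cast_pred (one_pos.trans X.two_le_d), ← Real.rpow_add hμ0,
      ← Real.rpow_add hμ0]
    ring_nf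

local notation "Q" => ofScale X hji hm hμ hσ hlam

theorem activeNorm_ofScale (e r : ℝ≥0∞) :
    (Q).activeNorm e r = μ ^ (-(m * X.s * e.toReal⁻¹) - (d - 1) * r.toReal⁻¹) := by
  have hμ0 := one_pos.trans_le hμ
  rw [activeNorm, ofScale_κ, ofScale_μ, ← Real.rpow_natCast,
    Nat.cast_pred (one_pos.trans X.two_le_d), ← Real.rpow_mul hμ0.le, ← Real.rpow_mul hμ0.le,
    ← Real.rpow_neg hμ0.le, ← Real.rpow_neg hμ0.le, ← Real.rpow_add hμ0]
  ring_nf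

theorem c₁_mul_activeNorm_ofScale :
    (Q).c₁ * (Q).activeNorm (ENNReal.ofReal X.s) (ENNReal.ofReal X.p) = 1 := by
  have hs := one_pos.trans_le X.one_le_s
  rw [activeNorm_ofScale, ofScale_c₁, ← Real.rpow_add (one_pos.trans_le hμ),
    ENNReal.toReal_ofReal hs.le, ENNReal.toReal_ofReal (one_pos.trans X.one_lt_p).le,
    mul_inv_cancel_right₀ hs.ne']
  simp

theorem c₂_mul_activeNorm_ofScale : (Q).c₂ * (Q).activeNorm X.s' X.p' = 1 := by
  have hs := (one_pos.trans_le X.one_le_s).ne'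
  rw [activeNorm_ofScale, ofScale_c₂, ← Real.rpow_add (one_pos.trans_le hμ),
    inv_toReal_of_conj X.one_le_s X.conj_s, inv_toReal_of_conj X.one_lt_p.le X.conj_p,
    show m * (X.s - 1) + (d - 1) * (1 - X.p⁻¹)
      + (-(m * X.s * (1 - X.s⁻¹)) - (d - 1) * (1 - X.p⁻¹)) = 0 by field_simp; ring,
    Real.rpow_zero]

theorem c₂_mul_lam_mul_activeNorm_ofScale (e r : ℝ≥0∞) :
    (Q).c₂ * ((Q).lam * (Q).μ) * (Q).activeNorm e r =
      lam * μ ^ (m * (X.s - 1) + (d - 1) * (1 - X.p⁻¹) + 1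
        + (-(m * X.s * e.toReal⁻¹) - (d - 1) * r.toReal⁻¹)) := by
  have hμ0 := one_pos.trans_le hμ
  rw [activeNorm_ofScale, ofScale_c₂, ofScale_lam, ofScale_μ, Real.rpow_add hμ0 (_ + 1),
    Real.rpow_add_one hμ0.ne']
  ring

theorem c₁_mul_η_ofScale :
    (Q).c₁ * (Q).η * ((Q).μ ^ (d - 1))⁻¹ =
      (lam : ℝ)⁻¹ * μ ^ (m - (1 + (d - 1) * (1 - X.p⁻¹))) := by
  have hμ0 := one_pos.trans_le hμ
  have hexp : m - (1 + ((d : ℝ) - 1) * (1 - X.p⁻¹)) = m + (d - 1) * X.p⁻¹ - (d - 1 : ℕ) - 1 := by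
    rw [Nat.cast_pred (one_pos.trans X.two_le_d)]
    ring
  rw [hexp, Real.rpow_sub_one hμ0.ne', Real.rpow_sub_natCast hμ0.ne', η, ofScale_c₁, ofScale_lam,
    ofScale_μ]
  field_simp

end Scale

theorem defectMass_eq (q : BlockParams d) : q.defectMass =
    q.c₂⁻¹ + q.c₁⁻¹ + q.η + q.σ * (q.c₁ * q.η * (q.μ ^ (d - 1))⁻¹) + (q.σ : ℝ)⁻¹
      + (q.lam : ℝ)⁻¹ * d := by
  have hc₁ := q.c₁_pos.ne'
  have hc₂ := q.c₂_pos.ne'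
  have hκ := q.κ_pos.ne'
  have hactive : q.activeNorm 1 1 = (q.c₁ * q.c₂)⁻¹ := by
    simp [activeNorm, q.c₁_mul_c₂, mul_comm]
  have hκ_mul : q.κ * q.activeNorm 1 1 = (q.μ ^ (d - 1))⁻¹ := by
    simp [activeNorm, hκ]
  calc q.defectMass = (q.c₁ + q.c₂ + q.c₁ * q.c₂ * q.η) * q.activeNorm 1 1
        + q.σ * (q.c₁ * q.η * (q.κ * q.activeNorm 1 1)) + (q.σ : ℝ)⁻¹ + (q.lam : ℝ)⁻¹ * d := by
          rw [defectMass]; ring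
    _ = _ := by rw [hκ_mul, hactive]; field_simp

/-- Parameters for which all error terms of the corrector are at most `ε`, while its main terms are
normalized in their spaces. -/
structure IsFine (q : BlockParams d) (X : IterationExponents d) (ε : ℝ) : Prop where
  inv_σ_le : (q.σ : ℝ)⁻¹ ≤ ε
  inv_lam_le : (q.lam : ℝ)⁻¹ ≤ ε
  η_le : q.η ≤ ε
  defectMass_le : q.defectMass ≤ ε
  mean_le : q.c₁ * q.η * (q.μ ^ (d - 1))⁻¹ ≤ ε
  gradient_le : q.c₂ * (q.lam * q.μ) *
    q.activeNorm (ENNReal.ofReal X.st) (ENNReal.ofReal X.q) ≤ ε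
  density_le : q.c₁ * q.activeNorm (ENNReal.ofReal X.s) (ENNReal.ofReal X.p) ≤ 1
  velocity_le : q.c₂ * q.activeNorm X.s' X.p' ≤ 1

theorem exists_isFine (X : IterationExponents d) (i : Fin d) {ε : ℝ} (hε : 0 < ε) :
    ∃ q : BlockParams d, q.i = i ∧ q.IsFine X ε := by
  have : Nontrivial (Fin d) := Fin.nontrivial_iff_two_le.2 X.two_le_d
  obtain ⟨j, hji⟩ := exists_ne i
  obtain ⟨m, hm⟩ := X.exists_isRate
  have hε6 : 0 < ε / 6 := by positivity
  obtain ⟨σ, hσ, hσε⟩ := ((Filter.eventually_ge_atTop 1).and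
    (eventually_mul_inv_natCast_le 1 hε6)).exists
  obtain ⟨lam, hlam, hlamε, hlamd⟩ := ((Filter.eventually_ge_atTop 1).and
    ((eventually_mul_inv_natCast_le 1 hε6).and (eventually_mul_inv_natCast_le d hε6))).exists
  obtain ⟨μ, hμ, hc₁, hc₂, hmean, hgrad⟩ := hm.exists_scale (σ * (lam : ℝ)⁻¹) lam hε6
  rw [one_mul] at hσε hlamε
  have hη : (ofScale X hji hm.pos.le hμ hσ hlam).η ≤ ε / 6 := by
    rw [η, ofScale_lam, ofScale_μ, mul_inv]
    exact (mul_le_of_le_one_right (by positivity) (inv_le_one_of_one_le₀ hμ)).trans hlamε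
  have hmean' : (lam : ℝ)⁻¹ * μ ^ (m - (1 + (d - 1) * (1 - X.p⁻¹))) ≤ ε / 6 := by
    refine le_trans ?_ hmean
    gcongr
    exact le_mul_of_one_le_left (by positivity) (by exact_mod_cast hσ)
  refine ⟨ofScale X hji hm.pos.le hμ hσ hlam, rfl, by simpa using hσε.trans (by linarith),
    by simpa using hlamε.trans (by linarith), hη.trans (by linarith), ?_, ?_, ?_,
    (c₁_mul_activeNorm_ofScale X hji hm.pos.le hμ hσ hlam).le,
    (c₂_mul_activeNorm_ofScale X hji hm.pos.le hμ hσ hlam).le⟩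
  · rw [defectMass_eq, c₁_mul_η_ofScale, ofScale_c₁, ofScale_c₂, ofScale_σ, ofScale_lam,
      ← mul_assoc]
    linarith
  · rw [c₁_mul_η_ofScale]
    linarith
  · rw [c₂_mul_lam_mul_activeNorm_ofScale, ENNReal.toReal_ofReal (zero_le_one.trans X.one_le_st),
      ENNReal.toReal_ofReal (zero_le_one.trans X.one_le_q)]
    linarith

end BlockParams

/-! ### Correctors -/

section Corrector

variable {d : ℕ}

/-- Perturbing the density `ρ` and the velocity `u` by `θ` and `w` adds the source `S` to the
continuity equation, up to the divergence of the small field `E`. The perturbations are controlled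
by `a`, `b` and `ε`, and `θ` vanishes at the times in `Z`. -/
structure IsCorrector (X : IterationExponents d) (ρ : SpaceTime d → ℝ) (u : SpaceTime d → Vec d)
    (S : SpaceTime d → ℝ) (Z : Set ℝ) (a b : ℝ≥0∞) (ε : ℝ) (θ : SpaceTime d → ℝ)
    (w E : SpaceTime d → Vec d) : Prop where
  smooth_θ : SmoothPeriodic θ
  smooth_w : SmoothPeriodic w
  smooth_E : SmoothPeriodic E
  spaceDiv_w : ∀ z, spaceDiv w z = 0
  balance : ∀ z, ∂ₜ θ z + spaceDiv (interaction ρ u θ w) z = S z + spaceDiv E z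
  norm_θ_le : mixedNorm (ENNReal.ofReal X.s) (ENNReal.ofReal X.p) θ ≤ a
  norm_w_le : mixedNorm X.s' X.p' w ≤ b
  gradient_w_le : mixedW1Norm (ENNReal.ofReal X.st) (ENNReal.ofReal X.q) w ≤ ENNReal.ofReal ε
  norm_E_le : mixedNorm 1 1 E ≤ ENNReal.ofReal ε
  mean_eq_zero : ∀ t, ∫ x in fundCube d, θ (t, x) = 0
  pairing_le : ∀ t φ, ContDiff ℝ (⊤ : ℕ∞) φ → ZPer φ →
    |∫ x in fundCube d, θ (t, x) * φ x| ≤ ε * CkN 1 φ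
  eq_zero_of_mem : ∀ t ∈ Z, ∀ x, θ (t, x) = 0

variable {X : IterationExponents d} {ρ : SpaceTime d → ℝ} {u : SpaceTime d → Vec d}

theorem BlockParams.IsFine.abs_le_add_of_lipschitz {q : BlockParams d} {F : SpaceTime d → ℝ}
    {C L ε₀ : ℝ} (hq : q.IsFine X ε₀) (hL : 0 ≤ L) (hC : 0 ≤ C)
    (hF : ∀ z z', ‖F z' - F z‖ ≤ L * ‖z' - z‖) (z z' : SpaceTime d)
    (hz : ‖z' - z‖ ≤ max (q.σ : ℝ)⁻¹ (q.lam : ℝ)⁻¹) : |F z'| ≤ |F z| + (L + C) * ε₀ := by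
  have hε₀ : 0 ≤ ε₀ := q.η_pos.le.trans hq.η_le
  have hdist : |F z' - F z| ≤ L * ε₀ := (hF z z').trans
    (mul_le_mul_of_nonneg_left (hz.trans (max_le hq.inv_σ_le hq.inv_lam_le)) hL)
  linarith [abs_sub_abs_le_abs_sub (F z') (F z), mul_nonneg hC hε₀]

theorem BlockParams.IsFine.isCorrector {q : BlockParams d} {A B : SpaceTime d → ℝ} {C L ε₀ ε : ℝ}
    {Z : Set ℝ} (hq : q.IsFine X ε₀) (hρ : SmoothPeriodic ρ) (hu : SmoothPeriodic u)
    (hA : SmoothPeriodic A) (hB : SmoothPeriodic B) (h : SlowBound A B ρ u C) (hL : 0 ≤ L)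
    (hAL : ∀ z z', ‖A z' - A z‖ ≤ L * ‖z' - z‖) (hBL : ∀ z z', ‖B z' - B z‖ ≤ L * ‖z' - z‖)
    (hε : (3 * blockBound d * (L + C) + 2 * C + 6 * (C * blockBound d) ^ 2
      + (4 * d + 2) * (C * blockBound d)) * ε₀ ≤ ε) (hZ : ∀ t ∈ Z, ∀ x, A (t, x) = 0) :
    IsCorrector X ρ u (∂[q.i] fun z => A z * B z) Z
      (ENNReal.ofReal (blockBound d) * mixedNorm (ENNReal.ofReal X.s) (ENNReal.ofReal X.p) A
        + ENNReal.ofReal ε)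
      (ENNReal.ofReal (blockBound d) * mixedNorm X.s' X.p' B + ENNReal.ofReal ε) ε
      (q.density A B) (q.velocity B) (q.defect A B ρ u) := by
  have hC := zero_le_one.trans h.one_le
  have hK := zero_le_one.trans (one_le_blockBound d)
  have hε₀ : 0 ≤ ε₀ := q.η_pos.le.trans hq.η_le
  have h₁ : 0 ≤ 3 * blockBound d * (L + C) * ε₀ := by positivity
  have h₂ : 0 ≤ 2 * C * ε₀ := by positivity
  have h₃ : 0 ≤ 6 * (C * blockBound d) ^ 2 * ε₀ := by positivity
  have h₄ : 0 ≤ (4 * d + 2) * (C * blockBound d) * ε₀ := by positivity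
  have hη : q.η * C ≤ (L + C) * ε₀ := by
    linarith [mul_le_mul_of_nonneg_right hq.η_le hC, mul_nonneg hL hε₀]
  refine ⟨q.smoothPeriodic_density hA hB, q.smoothPeriodic_velocity hB,
    q.smoothPeriodic_defect hA hB hρ hu, q.spaceDiv_velocity hB,
    fun z => sub_eq_iff_eq_add'.1 (q.spaceDiv_defect hA hB hρ hu z), ?_, ?_, ?_, ?_,
    q.integral_density_eq_zero hA hB, fun t φ hφ hper => ?_,
    fun t ht => q.density_eq_zero hA hB (hZ t ht)⟩
  · refine (q.mixedNorm_density_le hA hB h (ENNReal.one_le_ofReal.2 X.one_le_s)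
      (ENNReal.one_le_ofReal.2 X.one_lt_p.le) ofReal_ne_top
      (hq.abs_le_add_of_lipschitz hL hC hAL) hη hq.density_le).trans ?_
    rw [mul_add, ← ENNReal.ofReal_mul hK, add_assoc,
      ← ENNReal.ofReal_add (by positivity) (by positivity)]
    gcongr
    linarith [mul_le_mul_of_nonneg_left hq.inv_σ_le (mul_nonneg zero_le_two hC)]
  · refine (q.mixedNorm_velocity_le hB h (one_le_of_conj X.conj_s) (one_le_of_conj X.conj_p)
      (ne_top_of_conj X.one_lt_p X.conj_p) (hq.abs_le_add_of_lipschitz hL hC hBL) hη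
      hq.velocity_le).trans ?_
    rw [mul_add, ← ENNReal.ofReal_mul hK]
    gcongr
    linarith
  · refine (q.mixedW1Norm_velocity_le hB h (ENNReal.one_le_ofReal.2 X.one_le_st)
      (ENNReal.one_le_ofReal.2 X.one_le_q) ofReal_ne_top).trans (ENNReal.ofReal_le_ofReal ?_)
    rw [mul_assoc]
    linarith [mul_le_mul_of_nonneg_left hq.gradient_le
      (show 0 ≤ (4 * d + 2) * (C * blockBound d) by positivity)]
  · refine (q.mixedNorm_defect_le hA hB h).trans (ENNReal.ofReal_le_ofReal ?_)
    linarith [mul_le_mul_of_nonneg_left hq.defectMass_le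
      (show 0 ≤ 6 * (C * blockBound d) ^ 2 by positivity)]
  · refine (q.abs_integral_density_mul_le hA hB h t hφ hper).trans
      (mul_le_mul_of_nonneg_right ?_ (CkN_nonneg 1 φ))
    linarith [mul_le_mul_of_nonneg_left hq.mean_le (mul_nonneg hC hK),
      mul_le_mul_of_nonneg_left hq.inv_σ_le (mul_nonneg zero_le_two hC),
      show 0 ≤ (4 * d + 1) * (C * blockBound d) * ε₀ by positivity]

theorem exists_isCorrector (hρ : SmoothPeriodic ρ) (hu : SmoothPeriodic u)
    {A B : SpaceTime d → ℝ} (hA : SmoothPeriodic A) (hB : SmoothPeriodic B) {Z : Set ℝ}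
    (hZ : ∀ t ∈ Z, ∀ x, A (t, x) = 0) (i : Fin d) {ε : ℝ} (hε : 0 < ε) :
    ∃ θ w E, IsCorrector X ρ u (∂[i] fun z => A z * B z) Z
      (ENNReal.ofReal (blockBound d) * mixedNorm (ENNReal.ofReal X.s) (ENNReal.ofReal X.p) A
        + ENNReal.ofReal ε)
      (ENNReal.ofReal (blockBound d) * mixedNorm X.s' X.p' B + ENNReal.ofReal ε) ε θ w E := by
  obtain ⟨C, h⟩ := exists_slowBound hA hB hρ hu
  obtain ⟨L, hL, hAL⟩ := hA.exists_norm_sub_le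
  obtain ⟨L', -, hBL⟩ := hB.exists_norm_sub_le
  have hC := one_pos.trans_le h.one_le
  have hK := one_pos.trans_le (one_le_blockBound d)
  have hLmax : 0 < max L L' := lt_max_of_lt_left hL
  have hconst : 0 < 3 * blockBound d * (max L L' + C) + 2 * C + 6 * (C * blockBound d) ^ 2
      + (4 * d + 2) * (C * blockBound d) := by positivity
  obtain ⟨q, rfl, hq⟩ := BlockParams.exists_isFine X i (div_pos hε hconst)
  exact ⟨_, _, _, hq.isCorrector hρ hu hA hB h hLmax.le
    (fun z z' => (hAL z z').trans (by gcongr; exact le_max_left _ _))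
    (fun z z' => (hBL z z').trans (by gcongr; exact le_max_right _ _))
    (mul_div_cancel₀ _ hconst.ne').le hZ⟩

namespace IsCorrector

variable {S S' θ θ' : SpaceTime d → ℝ} {Z : Set ℝ} {a a' b b' : ℝ≥0∞} {ε ε' : ℝ}
  {w w' E E' : SpaceTime d → Vec d}

protected theorem zero : IsCorrector X ρ u 0 Z 0 0 0 (fun _ => 0) (fun _ => 0) (fun _ => 0) where
  smooth_θ := .const 0
  smooth_w := .const 0
  smooth_E := .const 0
  spaceDiv_w := spaceDiv_zero
  balance z := by
    unfold interaction
    simp [dirDeriv, spaceDiv_zero]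
  norm_θ_le := by simp [mixedNorm]
  norm_w_le := by simp [mixedNorm]
  gradient_w_le := by
    have hgrad : spaceGrad (fun _ : SpaceTime d => (0 : Vec d)) = fun _ => 0 :=
      funext fun z => fderiv_const_apply 0
    have hst := (ENNReal.ofReal_pos.2 (one_pos.trans_le X.one_le_st)).ne'
    have hq := (ENNReal.ofReal_pos.2 (one_pos.trans_le X.one_le_q)).ne'
    rw [mixedW1Norm, hgrad, mixedNorm_const 0 hst hq, mixedNorm_const 0 hst hq]
    simp
  norm_E_le := by simp [mixedNorm]
  mean_eq_zero _ := by simp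
  pairing_le _ φ _ _ := by simp
  eq_zero_of_mem _ _ _ := rfl

protected theorem add (hρ : SmoothPeriodic ρ) (hu : SmoothPeriodic u) (hε : 0 ≤ ε) (hε' : 0 ≤ ε')
    (h : IsCorrector X ρ u S Z a b ε θ w E)
    (h' : IsCorrector X (fun z => ρ z + θ z) (fun z => u z + w z) S' Z a' b' ε' θ' w' E') :
    IsCorrector X ρ u (S + S') Z (a + a') (b + b') (ε + ε') (fun z => θ z + θ' z)
      (fun z => w z + w' z) (fun z => E z + E' z) where
  smooth_θ := h.smooth_θ.add h'.smooth_θ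
  smooth_w := h.smooth_w.add h'.smooth_w
  smooth_E := h.smooth_E.add h'.smooth_E
  spaceDiv_w z := by rw [spaceDiv_add h.smooth_w h'.smooth_w, h.spaceDiv_w, h'.spaceDiv_w, add_zero]
  balance z := by
    rw [interaction_add, dirDeriv_add _ h.smooth_θ h'.smooth_θ,
      spaceDiv_add (hρ.interaction hu h.smooth_θ h.smooth_w)
        ((hρ.add h.smooth_θ).interaction (hu.add h.smooth_w) h'.smooth_θ h'.smooth_w),
      spaceDiv_add h.smooth_E h'.smooth_E, Pi.add_apply]
    linear_combination h.balance z + h'.balance z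
  norm_θ_le := (mixedNorm_add_le h.smooth_θ.continuous.stronglyMeasurable
    h'.smooth_θ.continuous.stronglyMeasurable (ENNReal.one_le_ofReal.2 X.one_le_s)
    (ENNReal.one_le_ofReal.2 X.one_lt_p.le) ofReal_ne_top).trans
      (add_le_add h.norm_θ_le h'.norm_θ_le)
  norm_w_le := (mixedNorm_add_le h.smooth_w.continuous.stronglyMeasurable
    h'.smooth_w.continuous.stronglyMeasurable (one_le_of_conj X.conj_s) (one_le_of_conj X.conj_p)
    (ne_top_of_conj X.one_lt_p X.conj_p)).trans (add_le_add h.norm_w_le h'.norm_w_le)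
  gradient_w_le := by
    rw [ENNReal.ofReal_add hε hε']
    exact (mixedW1Norm_add_le h.smooth_w h'.smooth_w (ENNReal.one_le_ofReal.2 X.one_le_st)
      (ENNReal.one_le_ofReal.2 X.one_le_q) ofReal_ne_top).trans
        (add_le_add h.gradient_w_le h'.gradient_w_le)
  norm_E_le := by
    rw [ENNReal.ofReal_add hε hε']
    exact (mixedNorm_add_le h.smooth_E.continuous.stronglyMeasurable
      h'.smooth_E.continuous.stronglyMeasurable le_rfl le_rfl one_ne_top).trans
        (add_le_add h.norm_E_le h'.norm_E_le)
  mean_eq_zero t := by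
    rw [integral_add (integrableOn_fundCube (h.smooth_θ.continuous_slice t))
      (integrableOn_fundCube (h'.smooth_θ.continuous_slice t)), h.mean_eq_zero, h'.mean_eq_zero,
      add_zero]
  pairing_le t φ hφ hper := by
    simp only [add_mul]
    have hint {F : SpaceTime d → ℝ} (hF : SmoothPeriodic F) :
        IntegrableOn (fun x => F (t, x) * φ x) (fundCube d) :=
      integrableOn_fundCube ((hF.continuous_slice t).mul hφ.continuous)
    rw [integral_add (hint h.smooth_θ) (hint h'.smooth_θ)]
    exact (abs_add_le _ _).trans (add_le_add (h.pairing_le t φ hφ hper) (h'.pairing_le t φ hφ hper))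
  eq_zero_of_mem t ht x := by
    rw [h.eq_zero_of_mem t ht, h'.eq_zero_of_mem t ht, add_zero]

end IsCorrector

theorem exists_isCorrector_sum {A B : Fin d → SpaceTime d → ℝ} (hA : ∀ i, SmoothPeriodic (A i))
    (hB : ∀ i, SmoothPeriodic (B i)) {Z : Set ℝ} (hZ : ∀ i, ∀ t ∈ Z, ∀ x, A i (t, x) = 0) {ε : ℝ}
    (hε : 0 < ε) (I : Finset (Fin d)) : ∀ {ρ : SpaceTime d → ℝ} {u : SpaceTime d → Vec d},
    SmoothPeriodic ρ → SmoothPeriodic u →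
    ∃ θ w E, IsCorrector X ρ u (∑ i ∈ I, ∂[i] fun z => A i z * B i z) Z
      (∑ i ∈ I, (ENNReal.ofReal (blockBound d)
        * mixedNorm (ENNReal.ofReal X.s) (ENNReal.ofReal X.p) (A i) + ENNReal.ofReal ε))
      (∑ i ∈ I, (ENNReal.ofReal (blockBound d) * mixedNorm X.s' X.p' (B i) + ENNReal.ofReal ε))
      (∑ _i ∈ I, ε) θ w E := by
  induction I using Finset.induction_on with
  | empty => exact fun _ _ => ⟨_, _, _, IsCorrector.zero⟩
  | insert i I hi ih =>
    intro ρ u hρ hu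
    obtain ⟨θ, w, E, h⟩ := exists_isCorrector (X := X) hρ hu (hA i) (hB i) (hZ i) i hε
    obtain ⟨θ', w', E', h'⟩ := ih (hρ.add h.smooth_θ) (hu.add h.smooth_w)
    simp only [Finset.sum_insert hi]
    exact ⟨_, _, _, h.add hρ hu hε.le (Finset.sum_nonneg fun _ _ => hε.le) h'⟩

end Corrector

/-! ### Amplitudes -/

section Root

variable {d : ℕ} {E : Type*} [NormedAddCommGroup E] {e r : ℝ≥0∞}

theorem eLpNorm_rpow_inv_le {α ι : Type*} [MeasurableSpace α] {μ : Measure α}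
    [IsProbabilityMeasure μ] [ENorm ι] (he : e ≠ 0) (f : α → ι) :
    eLpNorm (fun x => ‖f x‖ₑ ^ e.toReal⁻¹) e μ ≤ eLpNorm f 1 μ ^ e.toReal⁻¹ := by
  rcases eq_or_ne e ∞ with rfl | he'
  · simpa using (eLpNormEssSup_const (1 : ℝ≥0∞) (IsProbabilityMeasure.ne_zero μ)).le
  · have hpos : 0 < e.toReal⁻¹ := inv_pos.2 (ENNReal.toReal_pos he he')
    rw [eLpNorm_enorm_rpow f hpos, ENNReal.ofReal_inv_of_pos (ENNReal.toReal_pos he he'),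
      ENNReal.ofReal_toReal he', ENNReal.mul_inv_cancel he he']

/-- The spatial integral of `g` at the time of `z`. -/
noncomputable def sliceMass (g : SpaceTime d → ℝ) (z : SpaceTime d) : ℝ :=
  ∫ x in fundCube d, g (z.1, x)

variable {g : SpaceTime d → ℝ}

theorem SmoothPeriodic.sliceMass_pos (hg : SmoothPeriodic g) (h0 : ∀ z, 0 < g z)
    (z : SpaceTime d) : 0 < sliceMass g z := by
  have hsupp : Function.support (fun x => g (z.1, x)) = Set.univ :=
    Set.eq_univ_of_forall fun x => (h0 _).ne'
  rw [sliceMass, integral_pos_iff_support_of_nonneg (fun x => (h0 _).le)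
    (integrableOn_fundCube (hg.continuous_slice z.1)), hsupp, measure_univ]
  exact one_pos

theorem SmoothPeriodic.eLpNorm_one_slice (hg : SmoothPeriodic g) (h0 : ∀ z, 0 ≤ g z)
    (z : SpaceTime d) :
    eLpNorm (fun x => g (z.1, x)) 1 (torusVol d) = ENNReal.ofReal (sliceMass g z) := by
  rw [eLpNorm_one_eq_lintegral_enorm, sliceMass, ofReal_integral_eq_lintegral_ofReal
    (integrableOn_fundCube (hg.continuous_slice z.1)) (.of_forall fun x => h0 _)]
  exact lintegral_congr fun x => Real.enorm_of_nonneg (h0 _)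

theorem mixedNorm_le_of_le_root (hg : SmoothPeriodic g) (h0 : ∀ z, 0 < g z) (he : e ≠ 0)
    (hr : r ≠ 0) {c : ℝ} (hc : 0 ≤ c) {F : SpaceTime d → E}
    (hF : ∀ z, ‖F z‖ ≤ c * (sliceMass g z ^ (e.toReal⁻¹ - r.toReal⁻¹) * g z ^ r.toReal⁻¹)) :
    mixedNorm e r F ≤ ENNReal.ofReal c * mixedNorm 1 1 g ^ e.toReal⁻¹ := by
  have hspace (t : ℝ) : eLpNorm (fun x => F (t, x)) r (torusVol d) ≤
      ENNReal.ofReal c * eLpNorm (fun x => g (t, x)) 1 (torusVol d) ^ e.toReal⁻¹ := by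
    have hm := hg.sliceMass_pos h0 (t, 0)
    set m := sliceMass g (t, 0) 
    have hFg (x : Vec d) : ‖F (t, x)‖ ≤
        c * m ^ (e.toReal⁻¹ - r.toReal⁻¹) * ‖g (t, x) ^ r.toReal⁻¹‖ := by
      rw [Real.norm_of_nonneg (Real.rpow_nonneg (h0 _).le _), mul_assoc]
      exact hF (t, x)
    have hroot : eLpNorm (fun x => g (t, x) ^ r.toReal⁻¹) r (torusVol d) ≤
        ENNReal.ofReal m ^ r.toReal⁻¹ := by
      rw [← hg.eLpNorm_one_slice (fun z => (h0 z).le) (t, 0)]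
      refine (eLpNorm_mono_enorm fun x => ?_).trans (eLpNorm_rpow_inv_le hr _)
      rw [enorm_eq_self, Real.enorm_of_nonneg (h0 _).le,
        Real.enorm_of_nonneg (Real.rpow_nonneg (h0 _).le _),
        ENNReal.ofReal_rpow_of_nonneg (h0 _).le (by positivity)]
    calc eLpNorm (fun x => F (t, x)) r (torusVol d)
        ≤ ENNReal.ofReal (c * m ^ (e.toReal⁻¹ - r.toReal⁻¹)) * ENNReal.ofReal m ^ r.toReal⁻¹ :=
          (eLpNorm_le_mul_eLpNorm_of_ae_le_mul (.of_forall hFg) r).trans (mul_le_mul_right hroot _)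
      _ = ENNReal.ofReal c * ENNReal.ofReal m ^ e.toReal⁻¹ := by
          rw [ENNReal.ofReal_mul hc, ← ENNReal.ofReal_rpow_of_pos hm, mul_assoc,
            ← ENNReal.rpow_add _ _ (ENNReal.ofReal_pos.2 hm).ne' ofReal_ne_top, sub_add_cancel]
      _ = _ := by rw [hg.eLpNorm_one_slice (fun z => (h0 z).le) (t, 0)]
  refine (eLpNorm_le_mul_eLpNorm_of_ae_le_mul' (c := c.toNNReal) (g := fun t =>
    ‖eLpNorm (fun x => g (t, x)) 1 (torusVol d)‖ₑ ^ e.toReal⁻¹) (.of_forall hspace) e).trans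
    (mul_le_mul_right (eLpNorm_rpow_inv_le he _) _)

end Root

section Cutoff

/-- A smooth `1`-periodic cutoff in time, vanishing near the integers and tending to `1` elsewhere
as `K → ∞`. -/
noncomputable def timeCutoff (K t : ℝ) : ℝ :=
  Real.smoothTransition (K * Real.sin (Real.pi * t) ^ 2 - 1)

variable {d : ℕ} (K : ℝ)

theorem smoothPeriodic_timeCutoff :
    SmoothPeriodic fun z : SpaceTime d => timeCutoff K z.1 := by
  refine .comp_fst (Real.smoothTransition.contDiff.comp (by fun_prop)) fun t => ?_
  rw [timeCutoff, mul_add, mul_one, Real.sin_add_pi, neg_sq, timeCutoff]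

theorem timeCutoff_nonneg (t : ℝ) : 0 ≤ timeCutoff K t := Real.smoothTransition.nonneg _

theorem timeCutoff_le_one (t : ℝ) : timeCutoff K t ≤ 1 := Real.smoothTransition.le_one _

theorem norm_one_sub_timeCutoff_sq_le (t : ℝ) : ‖1 - timeCutoff K t ^ 2‖ ≤ 1 := by
  have h : timeCutoff K t ^ 2 ≤ 1 := pow_le_one₀ (timeCutoff_nonneg K t) (timeCutoff_le_one K t)
  rw [Real.norm_of_nonneg (sub_nonneg.2 h)]
  exact sub_le_self _ (sq_nonneg _)

theorem exists_timeCutoff_eq_zero : ∃ r : ℝ, 0 < r ∧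
    ∀ t ∈ Set.Icc (0 : ℝ) 1, t ∉ Set.Icc r (1 - r) → timeCutoff K t = 0 := by
  have hlim : Filter.Tendsto (fun t => K * Real.sin (Real.pi * t) ^ 2) (nhds 0) (nhds 0) :=
    Continuous.tendsto' (by fun_prop) _ _ (by simp)
  obtain ⟨r, hr, hsmall⟩ := Metric.eventually_nhds_iff.1 (hlim.eventually (gt_mem_nhds one_pos))
  have hnear {t : ℝ} (h0 : 0 ≤ t) (htr : t < r) : timeCutoff K t = 0 :=
    Real.smoothTransition.zero_of_nonpos
      (sub_nonpos.2 (hsmall (by rwa [Real.dist_0_eq_abs, abs_of_nonneg h0])).le)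
  refine ⟨r, hr, fun t ht hnot => ?_⟩
  rcases lt_or_ge t r with htr | htr
  · exact hnear ht.1 htr
  · have hlt : 1 - r < t := lt_of_not_ge fun h => hnot ⟨htr, h⟩
    rw [← hnear (sub_nonneg.2 ht.2) (sub_lt_comm.1 hlt), timeCutoff, timeCutoff, mul_sub, mul_one,
      Real.sin_pi_sub]

theorem eventually_timeCutoff_eq_one {t : ℝ} (ht : t ∈ Set.Ioo (0 : ℝ) 1) :
    ∀ᶠ n : ℕ in Filter.atTop, timeCutoff n t = 1 := by
  have hsin : 0 < Real.sin (Real.pi * t) := Real.sin_pos_of_pos_of_lt_pi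
    (mul_pos Real.pi_pos ht.1) (mul_lt_of_lt_one_right Real.pi_pos ht.2)
  have hlim := (tendsto_natCast_atTop_atTop (R := ℝ)).atTop_mul_const (pow_pos hsin 2)
  filter_upwards [hlim.eventually_ge_atTop 2] with n hn
  exact Real.smoothTransition.one_of_one_le (by linarith)

theorem tendsto_mixedNorm_one_sub_timeCutoff_sq : Filter.Tendsto
    (fun n : ℕ => mixedNorm 1 1 fun z : SpaceTime d => 1 - timeCutoff n z.1 ^ 2)
    Filter.atTop (nhds 0) := by
  have hslice (n : ℕ) : (mixedNorm 1 1 fun z : SpaceTime d => 1 - timeCutoff n z.1 ^ 2) =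
      ∫⁻ t, ‖1 - timeCutoff n t ^ 2‖ₑ ∂periodVol := by
    simp [mixedNorm, eLpNorm_one_eq_lintegral_enorm]
  simp only [hslice]
  rw [← lintegral_zero (μ := periodVol)]
  refine tendsto_lintegral_of_dominated_convergence (fun _ => 1) (fun n => ?_)
    (fun n => .of_forall fun t => ?_) (by simp)
    ((ae_restrict_iff' measurableSet_Ioo).2 (.of_forall fun t ht => ?_))
  · exact ((smoothPeriodic_timeCutoff (d := 0) n).continuous.comp
      (Continuous.prodMk_left 0)).measurable.pow_const 2 |>.const_sub 1 |>.enorm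
  · change ‖1 - timeCutoff n t ^ 2‖ₑ ≤ 1
    rw [← ofReal_norm, ← ENNReal.ofReal_one]
    exact ENNReal.ofReal_le_ofReal (norm_one_sub_timeCutoff_sq_le n t)
  · refine tendsto_const_nhds.congr' ?_
    filter_upwards [eventually_timeCutoff_eq_one ht] with n hn
    simp [hn]

end Cutoff

section Amplitude

variable {d : ℕ}

/-- A smooth positive substitute for `|f|`. -/
noncomputable def smoothAbs (b : ℝ) (f : SpaceTime d → ℝ) (z : SpaceTime d) : ℝ :=
  (f z * f z + b ^ 2) ^ (2⁻¹ : ℝ)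

section SmoothAbs

variable {b : ℝ} {f : SpaceTime d → ℝ}

theorem smoothAbs_pos (hb : 0 < b) (z : SpaceTime d) : 0 < smoothAbs b f z :=
  Real.rpow_pos_of_pos (add_pos_of_nonneg_of_pos (mul_self_nonneg _) (pow_pos hb 2)) _

theorem SmoothPeriodic.smoothAbs (hf : SmoothPeriodic f) (hb : 0 < b) :
    SmoothPeriodic (smoothAbs b f) :=
  ((hf.mul hf).add (.const (b ^ 2))).rpow_const
    (fun _ => add_pos_of_nonneg_of_pos (mul_self_nonneg _) (pow_pos hb 2)) _

theorem smoothAbs_eq_sqrt (z : SpaceTime d) : smoothAbs b f z = √(f z ^ 2 + b ^ 2) := by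
  rw [Real.sqrt_eq_rpow, one_div, sq (f z), smoothAbs]

theorem abs_le_smoothAbs (z : SpaceTime d) : |f z| ≤ smoothAbs b f z := by
  rw [smoothAbs_eq_sqrt]
  exact Real.abs_le_sqrt (le_add_of_nonneg_right (sq_nonneg b))

theorem smoothAbs_le (hb : 0 ≤ b) (z : SpaceTime d) : smoothAbs b f z ≤ |f z| + b := by
  rw [smoothAbs_eq_sqrt, ← sq_abs (f z)]
  exact Real.sqrt_le_iff.2 ⟨by positivity, by nlinarith [mul_nonneg (abs_nonneg (f z)) hb]⟩

theorem mixedNorm_smoothAbs_le (hf : SmoothPeriodic f) (hb : 0 < b) :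
    mixedNorm 1 1 (smoothAbs b f) ≤ mixedNorm 1 1 f + ENNReal.ofReal b := by
  have h := mixedNorm_abs_add_le (a := b) hf le_rfl le_rfl one_ne_top
  rw [abs_of_pos hb] at h
  refine (mixedNorm_mono fun z => ?_).trans h
  rw [Real.norm_of_nonneg (smoothAbs_pos hb z).le]
  exact (smoothAbs_le hb.le z).trans (le_abs_self _)

end SmoothAbs

variable (X : IterationExponents d) (c K : ℝ) (f g : SpaceTime d → ℝ)

/-- The density amplitude of a defect `f` of size `g`: the power `g ^ (1/p)` is normalized by the
mass of `g` so that its `L^s` norm in time of its `L^p` norm in space is a power of `∬ g`. -/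
noncomputable def densityAmplitude (z : SpaceTime d) : ℝ :=
  c * (sliceMass g z ^ (X.s⁻¹ - X.p⁻¹) * (timeCutoff K z.1 * g z ^ X.p⁻¹))

/-- The velocity amplitude dual to `densityAmplitude`: the product is `-f` away from the cutoff. -/
noncomputable def velocityAmplitude (z : SpaceTime d) : ℝ :=
  -(c⁻¹ * (sliceMass g z ^ (X.p⁻¹ - X.s⁻¹) * (timeCutoff K z.1 * (f z * g z ^ (-X.p⁻¹)))))

variable {c f g}

theorem smoothPeriodic_densityAmplitude (hg : SmoothPeriodic g) (h0 : ∀ z, 0 < g z) :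
    SmoothPeriodic (densityAmplitude X c K g) :=
  (SmoothPeriodic.const c).mul ((hg.integral_space.rpow_const (hg.sliceMass_pos h0) _).mul
    ((smoothPeriodic_timeCutoff K).mul (hg.rpow_const h0 _)))

theorem smoothPeriodic_velocityAmplitude (hf : SmoothPeriodic f) (hg : SmoothPeriodic g)
    (h0 : ∀ z, 0 < g z) : SmoothPeriodic (velocityAmplitude X c K f g) :=
  ((SmoothPeriodic.const c⁻¹).mul ((hg.integral_space.rpow_const (hg.sliceMass_pos h0) _).mul
    ((smoothPeriodic_timeCutoff K).mul (hf.mul (hg.rpow_const h0 _))))).neg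

theorem densityAmplitude_mul_velocityAmplitude (hg : SmoothPeriodic g) (h0 : ∀ z, 0 < g z)
    (hc : c ≠ 0) (z : SpaceTime d) :
    densityAmplitude X c K g z * velocityAmplitude X c K f g z = -(timeCutoff K z.1 ^ 2 * f z) := by
  have hmass : sliceMass g z ^ (X.s⁻¹ - X.p⁻¹) * sliceMass g z ^ (X.p⁻¹ - X.s⁻¹) = 1 := by
    rw [← Real.rpow_add (hg.sliceMass_pos h0 z), sub_add_sub_cancel, sub_self, Real.rpow_zero]
  have hroot : g z ^ X.p⁻¹ * g z ^ (-X.p⁻¹) = 1 := by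
    rw [← Real.rpow_add (h0 z), add_neg_cancel, Real.rpow_zero]
  calc _ = -(c * c⁻¹ * (sliceMass g z ^ (X.s⁻¹ - X.p⁻¹) * sliceMass g z ^ (X.p⁻¹ - X.s⁻¹))
        * (g z ^ X.p⁻¹ * g z ^ (-X.p⁻¹)) * (timeCutoff K z.1 ^ 2 * f z)) := by
        unfold densityAmplitude velocityAmplitude
        ring
    _ = _ := by rw [hmass, hroot, mul_inv_cancel₀ hc, one_mul, one_mul, one_mul]

theorem mixedNorm_densityAmplitude_le (hg : SmoothPeriodic g) (h0 : ∀ z, 0 < g z) (hc : 0 ≤ c) :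
    mixedNorm (ENNReal.ofReal X.s) (ENNReal.ofReal X.p) (densityAmplitude X c K g) ≤
      ENNReal.ofReal c * mixedNorm 1 1 g ^ X.s⁻¹ := by
  have hs := one_pos.trans_le X.one_le_s
  have hp := one_pos.trans X.one_lt_p
  refine (mixedNorm_le_of_le_root hg h0 (ENNReal.ofReal_pos.2 hs).ne'
    (ENNReal.ofReal_pos.2 hp).ne' hc fun z => ?_).trans_eq (by rw [ENNReal.toReal_ofReal hs.le])
  rw [ENNReal.toReal_ofReal hs.le, ENNReal.toReal_ofReal hp.le]
  have hm := Real.rpow_nonneg (hg.sliceMass_pos h0 z).le (X.s⁻¹ - X.p⁻¹)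
  have hroot := Real.rpow_nonneg (h0 z).le X.p⁻¹
  rw [densityAmplitude, Real.norm_of_nonneg (mul_nonneg hc
    (mul_nonneg hm (mul_nonneg (timeCutoff_nonneg K _) hroot)))]
  gcongr
  exact mul_le_of_le_one_left hroot (timeCutoff_le_one K _)

theorem mixedNorm_velocityAmplitude_le (hg : SmoothPeriodic g) (h0 : ∀ z, 0 < g z) (hc : 0 ≤ c)
    (hfg : ∀ z, |f z| ≤ g z) :
    mixedNorm X.s' X.p' (velocityAmplitude X c K f g) ≤
      ENNReal.ofReal c⁻¹ * mixedNorm 1 1 g ^ (1 - X.s⁻¹) := by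
  rw [← inv_toReal_of_conj X.one_le_s X.conj_s]
  refine mixedNorm_le_of_le_root hg h0 (zero_lt_one.trans_le (one_le_of_conj X.conj_s)).ne'
    (zero_lt_one.trans_le (one_le_of_conj X.conj_p)).ne' (inv_nonneg.2 hc) fun z => ?_
  rw [inv_toReal_of_conj X.one_le_s X.conj_s, inv_toReal_of_conj X.one_lt_p.le X.conj_p,
    show 1 - X.s⁻¹ - (1 - X.p⁻¹) = X.p⁻¹ - X.s⁻¹ by ring]
  have hm := Real.rpow_nonneg (hg.sliceMass_pos h0 z).le (X.p⁻¹ - X.s⁻¹)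
  have hroot := Real.rpow_nonneg (h0 z).le (-X.p⁻¹)
  have hζ := timeCutoff_nonneg K z.1
  calc ‖velocityAmplitude X c K f g z‖
      = c⁻¹ * (sliceMass g z ^ (X.p⁻¹ - X.s⁻¹)
          * (timeCutoff K z.1 * (|f z| * g z ^ (-X.p⁻¹)))) := by
        rw [velocityAmplitude, norm_neg, norm_mul, norm_mul, norm_mul, norm_mul,
          Real.norm_eq_abs (f z), Real.norm_of_nonneg (inv_nonneg.2 hc), Real.norm_of_nonneg hm,
          Real.norm_of_nonneg hζ, Real.norm_of_nonneg hroot]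
    _ ≤ c⁻¹ * (sliceMass g z ^ (X.p⁻¹ - X.s⁻¹) * (1 * (g z * g z ^ (-X.p⁻¹)))) := by
        gcongr
        · exact timeCutoff_le_one K _
        · exact hfg z
    _ = c⁻¹ * (sliceMass g z ^ (X.p⁻¹ - X.s⁻¹) * g z ^ (1 - X.p⁻¹)) := by
        rw [one_mul, sub_eq_add_neg 1, Real.rpow_add (h0 z), Real.rpow_one]

theorem ofReal_mul_rpow_le {a b x y : ℝ} {N : ℝ≥0∞} (ha : 0 ≤ a) (hb : 0 < b) (hy : 0 ≤ y)
    (hy' : y ≤ 1) (hN : N ≤ ENNReal.ofReal b + ENNReal.ofReal b) :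
    ENNReal.ofReal (a * b ^ (x - y)) * N ^ y ≤ ENNReal.ofReal (a * 2 * b ^ x) := by
  rw [← ENNReal.ofReal_add hb.le hb.le, ← two_mul] at hN
  have h2 : (2 : ℝ) ^ y ≤ 2 := Real.rpow_le_self_of_one_le one_le_two hy'
  calc ENNReal.ofReal (a * b ^ (x - y)) * N ^ y
      ≤ ENNReal.ofReal (a * b ^ (x - y)) * ENNReal.ofReal (2 * b) ^ y := by gcongr
    _ = ENNReal.ofReal (a * b ^ (x - y) * (2 ^ y * b ^ y)) := by
        rw [ENNReal.ofReal_rpow_of_nonneg (by positivity) hy, ← ENNReal.ofReal_mul (by positivity),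
          Real.mul_rpow two_pos.le hb.le]
    _ ≤ ENNReal.ofReal (a * b ^ (x - y) * (2 * b ^ y)) := by gcongr
    _ = ENNReal.ofReal (a * 2 * b ^ x) := by
        rw [show a * b ^ (x - y) * (2 * b ^ y) = a * 2 * (b ^ (x - y) * b ^ y) by ring,
          ← Real.rpow_add hb, sub_add_cancel]

theorem exists_amplitudes (hf : SmoothPeriodic f) {b ν : ℝ} (hb : 0 < b)
    (hfb : mixedNorm 1 1 f ≤ ENNReal.ofReal b) (hν : 0 < ν) :
    ∃ A B : SpaceTime d → ℝ, SmoothPeriodic A ∧ SmoothPeriodic B ∧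
      (∀ z, A z * B z = -(timeCutoff K z.1 ^ 2 * f z)) ∧
      (∀ t, timeCutoff K t = 0 → ∀ x, A (t, x) = 0) ∧
      mixedNorm (ENNReal.ofReal X.s) (ENNReal.ofReal X.p) A
        ≤ ENNReal.ofReal (ν * 2 * b ^ X.p⁻¹) ∧
      mixedNorm X.s' X.p' B ≤ ENNReal.ofReal (ν⁻¹ * 2 * b ^ (1 - X.p⁻¹)) := by
  have hg := hf.smoothAbs hb
  have hg0 := smoothAbs_pos (f := f) hb
  have hgb := (mixedNorm_smoothAbs_le hf hb).trans (add_le_add_left hfb _)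
  have hs : 0 ≤ X.s⁻¹ := inv_nonneg.2 (zero_le_one.trans X.one_le_s)
  have hs' : X.s⁻¹ ≤ 1 := inv_le_one_of_one_le₀ X.one_le_s
  have hc : 0 < ν * b ^ (X.p⁻¹ - X.s⁻¹) := by positivity
  refine ⟨_, _, smoothPeriodic_densityAmplitude X K hg hg0,
    smoothPeriodic_velocityAmplitude X K hf hg hg0,
    densityAmplitude_mul_velocityAmplitude X K hg hg0 hc.ne', fun t ht x => ?_,
    (mixedNorm_densityAmplitude_le X K hg hg0 hc.le).trans (ofReal_mul_rpow_le hν.le hb hs hs' hgb),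
    (mixedNorm_velocityAmplitude_le X K hg hg0 hc.le abs_le_smoothAbs).trans ?_⟩
  · rw [densityAmplitude, ht, zero_mul, mul_zero, mul_zero]
  · rw [mul_inv, ← Real.rpow_neg hb.le, show -(X.p⁻¹ - X.s⁻¹) = 1 - X.p⁻¹ - (1 - X.s⁻¹) by ring]
    exact ofReal_mul_rpow_le (inv_nonneg.2 hν.le) hb (sub_nonneg.2 hs') (sub_le_self _ hs) hgb

end Amplitude

/-! ### Cancelling a defect -/

section Cancellation

variable {d : ℕ} {X : IterationExponents d} {ρ : SpaceTime d → ℝ} {u : SpaceTime d → Vec d}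

namespace IsCorrector

variable {S θ : SpaceTime d → ℝ} {Z Z' : Set ℝ} {a a' b b' : ℝ≥0∞} {ε ε' : ℝ}
  {w E G : SpaceTime d → Vec d}

theorem mono (h : IsCorrector X ρ u S Z a b ε θ w E) (hZ : Z' ⊆ Z) (ha : a ≤ a') (hb : b ≤ b')
    (hε : ε ≤ ε') : IsCorrector X ρ u S Z' a' b' ε' θ w E where
  __ := h
  norm_θ_le := h.norm_θ_le.trans ha
  norm_w_le := h.norm_w_le.trans hb
  gradient_w_le := h.gradient_w_le.trans (ENNReal.ofReal_le_ofReal hε)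
  norm_E_le := h.norm_E_le.trans (ENNReal.ofReal_le_ofReal hε)
  pairing_le t φ hφ hper := (h.pairing_le t φ hφ hper).trans
    (mul_le_mul_of_nonneg_right hε (CkN_nonneg 1 φ))
  eq_zero_of_mem t ht := h.eq_zero_of_mem t (hZ ht)

theorem add_defect (h : IsCorrector X ρ u S Z a b ε θ w E) (hε : 0 ≤ ε) (hε' : 0 ≤ ε')
    (hG : SmoothPeriodic G) (hGε : mixedNorm 1 1 G ≤ ENNReal.ofReal ε') :
    IsCorrector X ρ u (S - spaceDiv G) Z a b (ε + ε') θ w (fun z => E z + G z) where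
  __ := h.mono subset_rfl le_rfl le_rfl (le_add_of_nonneg_right hε')
  smooth_E := h.smooth_E.add hG
  balance z := by
    rw [spaceDiv_add h.smooth_E hG, Pi.sub_apply]
    linear_combination h.balance z
  norm_E_le := by
    rw [ENNReal.ofReal_add hε hε']
    exact (mixedNorm_add_le h.smooth_E.continuous.stronglyMeasurable
      hG.continuous.stronglyMeasurable le_rfl le_rfl one_ne_top).trans (add_le_add h.norm_E_le hGε)

end IsCorrector

theorem sum_ofReal_mul_add_le {K c y ε : ℝ} {N : Fin d → ℝ≥0∞} (hK : 0 ≤ K) (hc : 0 ≤ c)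
    (hy : 0 ≤ y) (hε : 0 ≤ ε) (hdε : d * ε ≤ c * 2 * y)
    (hN : ∀ i, N i ≤ ENNReal.ofReal (c * 2 * y)) :
    ∑ i, (ENNReal.ofReal K * N i + ENNReal.ofReal ε)
      ≤ ENNReal.ofReal (c * (2 * (d * K + 1)) * y) :=
  calc ∑ i, (ENNReal.ofReal K * N i + ENNReal.ofReal ε)
      ≤ ∑ _i : Fin d, (ENNReal.ofReal K * ENNReal.ofReal (c * 2 * y) + ENNReal.ofReal ε) := by
        gcongr with i
        exact hN i
    _ = ENNReal.ofReal (d * (K * (c * 2 * y) + ε)) := by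
        rw [Finset.sum_const, Finset.card_univ, Fintype.card_fin, nsmul_eq_mul,
          ← ENNReal.ofReal_mul hK, ← ENNReal.ofReal_add (by positivity) hε,
          ← ENNReal.ofReal_natCast, ← ENNReal.ofReal_mul (Nat.cast_nonneg d)]
    _ ≤ ENNReal.ofReal (c * (2 * (d * K + 1)) * y) := ENNReal.ofReal_le_ofReal (by linarith)

theorem ofReal_mul_toReal_rpow {c x : ℝ} {N : ℝ≥0∞} (hc : 0 ≤ c) (hx : 0 ≤ x) (hN : N ≠ ∞) :
    ENNReal.ofReal (c * N.toReal ^ x) = ENNReal.ofReal c * N ^ x := by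
  rw [ENNReal.ofReal_mul hc, ← ENNReal.ofReal_rpow_of_nonneg toReal_nonneg hx, ofReal_toReal hN]

theorem sum_dirDeriv_sub_spaceDiv {R : SpaceTime d → Vec d} {χ : SpaceTime d → ℝ}
    {f : Fin d → SpaceTime d → ℝ} (hR : SmoothPeriodic R) (hχ : SmoothPeriodic χ)
    (hf : ∀ i z, f i z = -(χ z * R z i)) :
    ∑ i, ∂[i] (f i) - spaceDiv (fun z => (1 - χ z) • R z) = -spaceDiv R := by
  have hsum : ∑ i, ∂[i] (f i) = -spaceDiv (fun z => χ z • R z) := by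
    ext1 z
    simp only [Finset.sum_apply, Pi.neg_apply, spaceDiv, ← Finset.sum_neg_distrib]
    refine Finset.sum_congr rfl fun i _ => ?_
    rw [funext (hf i), dirDeriv_neg]
    rfl
  ext1 z
  rw [hsum, ← neg_add', Pi.neg_apply, Pi.add_apply,
    ← spaceDiv_add (hχ.smul hR) (((SmoothPeriodic.const 1).sub hχ).smul hR)]
  simp only [← add_smul, add_sub_cancel, one_smul, Pi.neg_apply]

theorem SmoothPeriodic.exists_mixedNorm_cutoff_le {R : SpaceTime d → Vec d} (hR : SmoothPeriodic R)
    {ε : ℝ} (hε : 0 < ε) : ∃ n : ℕ,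
      mixedNorm 1 1 (fun z => (1 - timeCutoff n z.1 ^ 2) • R z) ≤ ENNReal.ofReal ε := by
  obtain ⟨C, hC, hRC⟩ := hR.exists_norm_le
  obtain ⟨n, hn⟩ := (tendsto_mixedNorm_one_sub_timeCutoff_sq.eventually_le_const
    (ENNReal.ofReal_pos.2 (div_pos hε hC))).exists
  refine ⟨n, (mixedNorm_le_mul fun z => ?_).trans ((mul_le_mul_right hn (.ofReal C)).trans_eq ?_)⟩
  · rw [norm_smul, mul_comm]
    exact mul_le_mul_of_nonneg_right (hRC z) (norm_nonneg _)
  · rw [← ENNReal.ofReal_mul hC.le, mul_div_cancel₀ _ hC.ne']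

theorem exists_isCorrector_neg_spaceDiv (hρ : SmoothPeriodic ρ) (hu : SmoothPeriodic u)
    {R : SpaceTime d → Vec d} (hR : SmoothPeriodic R) {b δ ν : ℝ} (hb : 0 < b)
    (hRb : mixedNorm 1 1 R ≤ ENNReal.ofReal b) (hδ : 0 < δ) (hν : 0 < ν) :
    ∃ r > 0, ∃ θ w E, IsCorrector X ρ u (-spaceDiv R) (Set.Icc 0 1 \ Set.Icc r (1 - r))
      (ENNReal.ofReal (ν * (2 * (d * blockBound d + 1)) * b ^ X.p⁻¹))
      (ENNReal.ofReal (ν⁻¹ * (2 * (d * blockBound d + 1)) * b ^ (1 - X.p⁻¹))) δ θ w E := by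
  obtain ⟨n, hn⟩ := hR.exists_mixedNorm_cutoff_le (half_pos hδ)
  obtain ⟨r, hr, hζ⟩ := exists_timeCutoff_eq_zero n
  choose A B hA hB hAB hA0 hA_le hB_le using fun i : Fin d =>
    exists_amplitudes X n (hR.apply i) hb
      ((mixedNorm_mono fun z => norm_le_pi_norm (R z) i).trans hRb) hν
  have hd : (0 : ℝ) < d := Nat.cast_pos.2 (two_pos.trans_le X.two_le_d)
  have hK := zero_le_one.trans (one_le_blockBound d)
  obtain ⟨ε, hε, hdε, hdε', hdε''⟩ : ∃ ε > 0, d * ε ≤ δ / 2 ∧ d * ε ≤ ν * 2 * b ^ X.p⁻¹ ∧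
      d * ε ≤ ν⁻¹ * 2 * b ^ (1 - X.p⁻¹) := by
    refine ⟨min (δ / 2) (min (ν * 2 * b ^ X.p⁻¹) (ν⁻¹ * 2 * b ^ (1 - X.p⁻¹))) / d,
      by positivity, ?_⟩
    rw [mul_div_cancel₀ _ hd.ne', ← le_min_iff, ← le_min_iff]
  obtain ⟨θ, w, E, h⟩ := exists_isCorrector_sum (X := X) (Z := {t | timeCutoff n t = 0}) hA hB hA0
    hε Finset.univ hρ hu
  have hcut := (smoothPeriodic_timeCutoff (d := d) n).pow 2
  have hcorr := h.add_defect (Finset.sum_nonneg fun _ _ => hε.le) (half_pos hδ).le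
    (((SmoothPeriodic.const 1).sub hcut).smul hR) hn
  rw [sum_dirDeriv_sub_spaceDiv hR hcut hAB] at hcorr
  refine ⟨r, hr, θ, w, _, hcorr.mono (fun t ht => hζ t ht.1 ht.2)
    (sum_ofReal_mul_add_le hK hν.le (by positivity) hε.le hdε' hA_le)
    (sum_ofReal_mul_add_le hK (inv_nonneg.2 hν.le) (by positivity) hε.le hdε'' hB_le) ?_⟩
  rw [Finset.sum_const, Finset.card_univ, Fintype.card_fin, nsmul_eq_mul]
  linarith

theorem exists_isCorrector_of_defect (X : IterationExponents d) (hρ : SmoothPeriodic ρ)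
    (hu : SmoothPeriodic u) {R : SpaceTime d → Vec d} (hR : SmoothPeriodic R) {δ ν : ℝ}
    (hδ : 0 < δ) (hν : 0 < ν) :
    ∃ r > 0, ∃ θ w E, IsCorrector X ρ u (-spaceDiv R) (Set.Icc 0 1 \ Set.Icc r (1 - r))
      (ENNReal.ofReal (ν * (2 * (d * blockBound d + 1))) * mixedNorm 1 1 R ^ X.p⁻¹)
      (ENNReal.ofReal (ν⁻¹ * (2 * (d * blockBound d + 1))) * mixedNorm 1 1 R ^ (1 - X.p⁻¹))
      δ θ w E := by
  obtain ⟨C, -, hC⟩ := hR.exists_norm_le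
  have hfin : mixedNorm 1 1 R ≠ ∞ :=
    ne_top_of_le_ne_top ofReal_ne_top (mixedNorm_le_of_norm_le one_ne_zero one_ne_zero hC)
  rcases eq_or_ne (mixedNorm 1 1 R) 0 with hR0 | hR0
  · have h := (IsCorrector.zero (X := X) (ρ := ρ) (u := u)
      (Z := Set.Icc 0 1 \ Set.Icc 1 (1 - 1))).add_defect le_rfl hδ.le hR (hR0.trans_le zero_le)
    rw [zero_sub, zero_add] at h
    exact ⟨1, one_pos, _, _, _, h.mono subset_rfl zero_le zero_le le_rfl⟩
  · have hK := zero_le_one.trans (one_le_blockBound d)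
    rw [← ofReal_mul_toReal_rpow (by positivity) X.inv_p_pos.le hfin,
      ← ofReal_mul_toReal_rpow (by positivity) X.one_sub_inv_p_pos.le hfin]
    exact exists_isCorrector_neg_spaceDiv hρ hu hR (ENNReal.toReal_pos hR0 hfin)
      (ofReal_toReal hfin).ge hδ hν

end Cancellation

/-! ### Solutions of the continuity-defect equation -/

section Solution

variable {d : ℕ}

/-- A smooth periodic solution of the continuity-defect equation, as functions on space-time. -/
structure IsDefectSolution (ρ : SpaceTime d → ℝ) (u R : SpaceTime d → Vec d) : Prop where
  smooth_ρ : SmoothPeriodic ρ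
  smooth_u : SmoothPeriodic u
  smooth_R : SmoothPeriodic R
  continuity : ∀ z, ∂ₜ ρ z + spaceDiv (fun z => ρ z • u z) z = spaceDiv R z
  spaceDiv_u : ∀ z, spaceDiv u z = 0

namespace IsDefectSolution

theorem of_curried {ρ : ℝ → Vec d → ℝ} {u R : ℝ → Vec d → Vec d}
    (hρ : SmoothPeriodic (Function.uncurry ρ)) (hu : SmoothPeriodic (Function.uncurry u))
    (hR : SmoothPeriodic (Function.uncurry R))
    (hcont : ∀ t x, deriv (fun τ => ρ τ x) t + divV (fun y => ρ t y • u t y) x = divV (R t) x)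
    (hdiv : ∀ t x, divV (u t) x = 0) :
    IsDefectSolution (Function.uncurry ρ) (Function.uncurry u) (Function.uncurry R) where
  smooth_ρ := hρ
  smooth_u := hu
  smooth_R := hR
  continuity := fun (t, x) => by
    rw [← (hasDerivAt_slice hρ t x).deriv, ← divV_slice (hρ.smul hu), ← divV_slice hR]
    exact hcont t x
  spaceDiv_u := fun (t, x) => (divV_slice hu t x).symm.trans (hdiv t x)

variable {ρ : SpaceTime d → ℝ} {u R : SpaceTime d → Vec d}

theorem deriv_add_divV (h : IsDefectSolution ρ u R) (t : ℝ) (x : Vec d) :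
    deriv (fun t => ρ (t, x)) t + divV (fun x => ρ (t, x) • u (t, x)) x
      = divV (fun x => R (t, x)) x := by
  rw [(hasDerivAt_slice h.smooth_ρ t x).deriv, divV_slice (h.smooth_ρ.smul h.smooth_u),
    divV_slice h.smooth_R, h.continuity]

theorem divV_eq_zero (h : IsDefectSolution ρ u R) (t : ℝ) (x : Vec d) :
    divV (fun x => u (t, x)) x = 0 :=
  (divV_slice h.smooth_u t x).trans (h.spaceDiv_u (t, x))

theorem add_corrector {X : IterationExponents d} {Z : Set ℝ} {a b : ℝ≥0∞} {ε : ℝ}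
    {θ : SpaceTime d → ℝ} {w E : SpaceTime d → Vec d} (h : IsDefectSolution ρ u R)
    (hcorr : IsCorrector X ρ u (-spaceDiv R) Z a b ε θ w E) :
    IsDefectSolution (fun z => ρ z + θ z) (fun z => u z + w z) E where
  smooth_ρ := h.smooth_ρ.add hcorr.smooth_θ
  smooth_u := h.smooth_u.add hcorr.smooth_w
  smooth_R := hcorr.smooth_E
  continuity z := by
    rw [smul_add_eq_add_interaction, dirDeriv_add _ h.smooth_ρ hcorr.smooth_θ,
      spaceDiv_add (h.smooth_ρ.smul h.smooth_u)
        (h.smooth_ρ.interaction h.smooth_u hcorr.smooth_θ hcorr.smooth_w)]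
    have hbalance := hcorr.balance z
    rw [Pi.neg_apply] at hbalance
    linear_combination h.continuity z + hbalance
  spaceDiv_u z := by
    rw [spaceDiv_add h.smooth_u hcorr.smooth_w, h.spaceDiv_u, hcorr.spaceDiv_w, add_zero]

end IsDefectSolution

end Solution

section Norms

variable {d : ℕ} {E : Type*} [NormedAddCommGroup E] {e r : ℝ≥0∞}

theorem eLpGen_eq_eLpNorm {α : Type*} [MeasurableSpace α] (μ : Measure α) (hr : r ≠ 0)
    (g : α → ℝ≥0∞) : eLpGen μ r g = eLpNorm g r μ := by
  unfold eLpGen eLpNorm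
  rw [if_neg hr]
  split_ifs <;> rfl

theorem spLp_eq_eLpNorm (hr : r ≠ 0) (f : Vec d → E) : spLp r f = eLpNorm f r (torusVol d) :=
  (eLpGen_eq_eLpNorm _ hr _).trans (eLpNorm_enorm f)

theorem LsLpT_eq_mixedNorm (he : e ≠ 0) (hr : r ≠ 0) {F : SpaceTime d → E} :
    LsLpT 1 e r (fun t x => F (t, x)) = mixedNorm e r F := by
  simp only [LsLpT, eLpGen_eq_eLpNorm _ he, spLp_eq_eLpNorm hr]
  rfl

theorem LsW1qT_le_mixedW1Norm {w : SpaceTime d → Vec d} (hw : SmoothPeriodic w) (he : 1 ≤ e)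
    (hr : 1 ≤ r) (hr' : r ≠ ∞) : LsW1qT 1 e r (fun t x => w (t, x)) ≤ mixedW1Norm e r w := by
  simp only [LsW1qT, W1qNorm, eLpGen_eq_eLpNorm _ (one_pos.trans_le he).ne',
    spLp_eq_eLpNorm (one_pos.trans_le hr).ne']
  exact eLpNorm_add_le
    (measurable_eLpNorm_slice hw.continuous.stronglyMeasurable hr').aestronglyMeasurable
    (measurable_eLpNorm_slice hw.continuous_spaceGrad.stronglyMeasurable hr').aestronglyMeasurable
    he

end Norms

section Exponents

variable {s st k β D p q : ℝ} {s' : ℝ≥0∞}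

theorem le_of_ofReal_le_div_conj (hs : 1 ≤ s) (hst : 1 ≤ st) (hk : 0 < k)
    (hs' : 1 / ENNReal.ofReal s + 1 / s' = 1)
    (h : ENNReal.ofReal st ≤ ENNReal.ofReal s / (ENNReal.ofReal s / s' + ENNReal.ofReal k)) :
    k ≤ 1 - s + s / st := by
  have hs0 := one_pos.trans_le hs
  have hst0 := one_pos.trans_le hst
  have hsk : 0 < s - 1 + k := by linarith
  rw [div_eq_mul_inv (ENNReal.ofReal s) s', inv_eq_ofReal_of_conj hs hs',
    ← ENNReal.ofReal_mul hs0.le, mul_one_sub, mul_inv_cancel₀ hs0.ne',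
    ← ENNReal.ofReal_add (sub_nonneg.2 hs) hk.le, ← ENNReal.ofReal_div_of_pos hsk,
    ENNReal.ofReal_le_ofReal_iff (by positivity), le_div_comm₀ hst0 hsk] at h
  linarith

theorem gap_of_exponents (hD : 0 < D) (hp : 1 < p) (hs : 1 ≤ s) (hst : 1 ≤ st)
    (hs' : 1 / ENNReal.ofReal s + 1 / s' = 1) (hβ : β = (p - 1) * D / (4 * p * (p + 1)))
    (hpq : 1 / p + 1 / q > 1 - (p - 1) / (4 * (p + 1) * p))
    (hst2 : ENNReal.ofReal st ≤ ENNReal.ofReal s /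
      (ENNReal.ofReal s / s' + ENNReal.ofReal ((1 + 2 * β) / (1 + 4 * β)))) :
    1 + D * (1 - 1 / p - 1 / q) < (1 - s + s / st) * (1 + D * (1 - 1 / p)) := by
  have hβ0 : 0 < β := hβ ▸ div_pos (mul_pos (sub_pos.2 hp) hD) (by positivity)
  have hk := le_of_ofReal_le_div_conj hs hst (by positivity) hs' hst2
  have hDp : D * (1 - 1 / p) = 4 * (p + 1) * β := by rw [hβ]; field_simp
  have hDpq : D * (1 - 1 / p - 1 / q) < β := by
    have hβD : β = D * ((p - 1) / (4 * (p + 1) * p)) := by rw [hβ]; field_simp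
    rw [hβD]
    exact mul_lt_mul_of_pos_left (by linarith) hD
  calc 1 + D * (1 - 1 / p - 1 / q)
      < 1 + β := by linarith
    _ < (1 + 2 * β) / (1 + 4 * β) * (1 + 8 * β) := by
        rw [div_mul_eq_mul_div, lt_div_iff₀ (by positivity)]
        nlinarith
    _ ≤ (1 + 2 * β) / (1 + 4 * β) * (1 + D * (1 - 1 / p)) := by
        rw [hDp]
        gcongr
        nlinarith
    _ ≤ (1 - s + s / st) * (1 + D * (1 - 1 / p)) := by
        rw [hDp]
        gcongr

end Exponents

theorem continuity_defect_iteration_general (d : ℕ) (hd : 2 ≤ d) (p q s st : ℝ) (hp : 1 < p)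
    (hq : 1 ≤ q) (hs : 1 ≤ s) (hst : 1 ≤ st) (p' s' : ℝ≥0∞)
    (hp' : 1 / ENNReal.ofReal p + 1 / p' = 1) (hs' : 1 / ENNReal.ofReal s + 1 / s' = 1)
    (hgap : 1 + (d - 1) * (1 - 1 / p - 1 / q) < (1 - s + s / st) * (1 + (d - 1) * (1 - 1 / p))) :
    ∃ M : ℝ, 0 < M ∧ ∃ N : ℕ,
      ∀ (ρ : ℝ → Vec d → ℝ) (u R : ℝ → Vec d → Vec d),
        ContDiff ℝ (⊤ : ℕ∞) (Function.uncurry ρ) →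
        ContDiff ℝ (⊤ : ℕ∞) (Function.uncurry u) →
        ContDiff ℝ (⊤ : ℕ∞) (Function.uncurry R) →
        (∀ t, ZPer (ρ t)) → (∀ t, ZPer (u t)) → (∀ t, ZPer (R t)) →
        (∀ t x, ρ (t + 1) x = ρ t x) → (∀ t x, u (t + 1) x = u t x) →
        (∀ t x, R (t + 1) x = R t x) →
        (∀ t x, deriv (fun τ => ρ τ x) t + divV (fun y => ρ t y • u t y) x
          = divV (R t) x) →
        (∀ t x, divV (u t) x = 0) →
        ∀ δ ν : ℝ, 0 < δ → 0 < ν →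
        ∃ (ρ₁ : ℝ → Vec d → ℝ) (u₁ R₁ : ℝ → Vec d → Vec d),
          ContDiff ℝ (⊤ : ℕ∞) (Function.uncurry ρ₁) ∧
          ContDiff ℝ (⊤ : ℕ∞) (Function.uncurry u₁) ∧
          ContDiff ℝ (⊤ : ℕ∞) (Function.uncurry R₁) ∧
          (∀ t, ZPer (ρ₁ t)) ∧ (∀ t, ZPer (u₁ t)) ∧ (∀ t, ZPer (R₁ t)) ∧
          (∀ t x, ρ₁ (t + 1) x = ρ₁ t x) ∧ (∀ t x, u₁ (t + 1) x = u₁ t x) ∧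
          (∀ t x, R₁ (t + 1) x = R₁ t x) ∧
          (∀ t x, deriv (fun τ => ρ₁ τ x) t + divV (fun y => ρ₁ t y • u₁ t y) x
            = divV (R₁ t) x) ∧
          (∀ t x, divV (u₁ t) x = 0) ∧
          LsLpT 1 (ENNReal.ofReal s) (ENNReal.ofReal p)
              (fun t x => ρ₁ t x - ρ t x)
            ≤ ENNReal.ofReal (ν * M) * (LsLpT 1 1 1 R) ^ (1 / p) ∧
          LsLpT 1 s' p' (fun t x => u₁ t x - u t x)
            ≤ ENNReal.ofReal (ν⁻¹ * M) * (LsLpT 1 1 1 R) ^ (1 - 1 / p) ∧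
          LsW1qT 1 (ENNReal.ofReal st) (ENNReal.ofReal q)
              (fun t x => u₁ t x - u t x) ≤ ENNReal.ofReal δ ∧
          LsLpT 1 1 1 R₁ ≤ ENNReal.ofReal δ ∧
          (∀ t, (∫ x in fundCube d, (ρ₁ t x - ρ t x)) = 0) ∧
          (∀ t ∈ Set.Icc (0:ℝ) 1, ∀ φ : Vec d → ℝ,
            ContDiff ℝ (⊤ : ℕ∞) φ → ZPer φ →
            |∫ x in fundCube d, (ρ₁ t x - ρ t x) * φ x| ≤ δ * CkN N φ) ∧
          ∃ r : ℝ, 0 < r ∧ ∀ t ∈ Set.Icc (0:ℝ) 1,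
            t ∉ Set.Icc r (1 - r) → ∀ x, ρ₁ t x = ρ t x := by
  let X : IterationExponents d := ⟨hd, p, q, s, st, p', s', hp, hq, hs, hst, hp', hs', hgap⟩
  have hK := zero_le_one.trans (one_le_blockBound d)
  refine ⟨2 * (d * blockBound d + 1), by positivity, 1, fun ρ u R hρ hu hR hρx hux hRx hρt hut hRt
    hcont hdiv δ ν hδ hν => ?_⟩
  have h := IsDefectSolution.of_curried ⟨hρ, hρt, hρx⟩ ⟨hu, hut, hux⟩ ⟨hR, hRt, hRx⟩ hcont hdiv
  obtain ⟨r, hr, θ, w, R₁, hcorr⟩ :=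
    exists_isCorrector_of_defect X h.smooth_ρ h.smooth_u h.smooth_R hδ hν
  have h₁ := h.add_corrector hcorr
  have hs0 := (ENNReal.ofReal_pos.2 (one_pos.trans_le hs)).ne'
  have hp0 := (ENNReal.ofReal_pos.2 (one_pos.trans hp)).ne'
  have hs'0 := (one_pos.trans_le (one_le_of_conj hs')).ne'
  have hp'0 := (one_pos.trans_le (one_le_of_conj hp')).ne'
  have hR0 : LsLpT 1 1 1 R = mixedNorm 1 1 (Function.uncurry R) :=
    LsLpT_eq_mixedNorm (F := Function.uncurry R) one_ne_zero one_ne_zero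
  refine ⟨fun t x => ρ t x + θ (t, x), fun t x => u t x + w (t, x), fun t x => R₁ (t, x),
    h₁.smooth_ρ.contDiff, h₁.smooth_u.contDiff, h₁.smooth_R.contDiff, h₁.smooth_ρ.space_periodic,
    h₁.smooth_u.space_periodic, h₁.smooth_R.space_periodic, h₁.smooth_ρ.time_periodic,
    h₁.smooth_u.time_periodic, h₁.smooth_R.time_periodic, h₁.deriv_add_divV, h₁.divV_eq_zero, ?_⟩
  simp only [add_sub_cancel_left, one_div, hR0, LsLpT_eq_mixedNorm hs0 hp0,
    LsLpT_eq_mixedNorm hs'0 hp'0, LsLpT_eq_mixedNorm one_ne_zero one_ne_zero]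
  exact ⟨hcorr.norm_θ_le, hcorr.norm_w_le, (LsW1qT_le_mixedW1Norm hcorr.smooth_w
    (ENNReal.one_le_ofReal.2 hst) (ENNReal.one_le_ofReal.2 hq) ofReal_ne_top).trans
      hcorr.gradient_w_le, hcorr.norm_E_le, hcorr.mean_eq_zero,
    fun t _ φ hφ hper => hcorr.pairing_le t φ hφ hper, r, hr, fun t ht htr x => by
      rw [hcorr.eq_zero_of_mem t ⟨ht, htr⟩, add_zero]⟩

/-- **Main iteration proposition** (Proposition 3.1): there exist a universal
constant `M > 0` and an integer `N` such that any smooth time-1-periodic solution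
`(ρ,u,R)` of the continuity-defect equation on `[0,1] × 𝕋^d` can be perturbed,
for any `δ,ν > 0`, to a new smooth time-periodic solution `(ρ¹,u¹,R¹)`
satisfying `‖ρ¹−ρ‖_{L^s L^p} ≤ νM‖R‖_{L^1}^{1/p}`,
`‖u¹−u‖_{L^{s'} L^{p'}} ≤ ν⁻¹M‖R‖_{L^1}^{1/p'}`, `‖u¹−u‖_{L^{s̃} W^{1,q}} ≤ δ`,
`‖R¹‖_{L^1} ≤ δ`, with `ρ¹−ρ` of zero spatial mean, small against `C^N` test
functions, and supported in time in some `[r,1−r]`. -/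
theorem continuity_defect_iteration
    (d : ℕ) (hd : 3 ≤ d)
    (p q s st : ℝ) (hp : 1 < p) (hq : 1 ≤ q) (hs : 1 ≤ s) (hst : 1 ≤ st)
    (p' s' : ℝ≥0∞)
    (hp' : 1 / ENNReal.ofReal p + 1 / p' = 1)
    (hs' : 1 / ENNReal.ofReal s + 1 / s' = 1)
    (β : ℝ) (hβ : β = (p - 1) * (d - 1) / (4 * p * (p + 1)))
    (hpq : 1 / p + 1 / q > 1 - (p - 1) / (4 * (p + 1) * p))
    (hst2 : ENNReal.ofReal st ≤
      ENNReal.ofReal s /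
        (ENNReal.ofReal s / s' + ENNReal.ofReal ((1 + 2 * β) / (1 + 4 * β)))) :
    ∃ M : ℝ, 0 < M ∧ ∃ N : ℕ,
      ∀ (ρ : ℝ → Vec d → ℝ) (u R : ℝ → Vec d → Vec d),
        ContDiff ℝ (⊤ : ℕ∞) (Function.uncurry ρ) →
        ContDiff ℝ (⊤ : ℕ∞) (Function.uncurry u) →
        ContDiff ℝ (⊤ : ℕ∞) (Function.uncurry R) →
        (∀ t, ZPer (ρ t)) → (∀ t, ZPer (u t)) → (∀ t, ZPer (R t)) →
        (∀ t x, ρ (t + 1) x = ρ t x) → (∀ t x, u (t + 1) x = u t x) →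
        (∀ t x, R (t + 1) x = R t x) →
        (∀ t x, deriv (fun τ => ρ τ x) t + divV (fun y => ρ t y • u t y) x
          = divV (R t) x) →
        (∀ t x, divV (u t) x = 0) →
        ∀ δ ν : ℝ, 0 < δ → 0 < ν →
        ∃ (ρ₁ : ℝ → Vec d → ℝ) (u₁ R₁ : ℝ → Vec d → Vec d),
          ContDiff ℝ (⊤ : ℕ∞) (Function.uncurry ρ₁) ∧
          ContDiff ℝ (⊤ : ℕ∞) (Function.uncurry u₁) ∧
          ContDiff ℝ (⊤ : ℕ∞) (Function.uncurry R₁) ∧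
          (∀ t, ZPer (ρ₁ t)) ∧ (∀ t, ZPer (u₁ t)) ∧ (∀ t, ZPer (R₁ t)) ∧
          (∀ t x, ρ₁ (t + 1) x = ρ₁ t x) ∧ (∀ t x, u₁ (t + 1) x = u₁ t x) ∧
          (∀ t x, R₁ (t + 1) x = R₁ t x) ∧
          (∀ t x, deriv (fun τ => ρ₁ τ x) t + divV (fun y => ρ₁ t y • u₁ t y) x
            = divV (R₁ t) x) ∧
          (∀ t x, divV (u₁ t) x = 0) ∧
          LsLpT 1 (ENNReal.ofReal s) (ENNReal.ofReal p)
              (fun t x => ρ₁ t x - ρ t x)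
            ≤ ENNReal.ofReal (ν * M) * (LsLpT 1 1 1 R) ^ (1 / p) ∧
          LsLpT 1 s' p' (fun t x => u₁ t x - u t x)
            ≤ ENNReal.ofReal (ν⁻¹ * M) * (LsLpT 1 1 1 R) ^ (1 - 1 / p) ∧
          LsW1qT 1 (ENNReal.ofReal st) (ENNReal.ofReal q)
              (fun t x => u₁ t x - u t x) ≤ ENNReal.ofReal δ ∧
          LsLpT 1 1 1 R₁ ≤ ENNReal.ofReal δ ∧
          (∀ t, (∫ x in fundCube d, (ρ₁ t x - ρ t x)) = 0) ∧
          (∀ t ∈ Set.Icc (0:ℝ) 1, ∀ φ : Vec d → ℝ,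
            ContDiff ℝ (⊤ : ℕ∞) φ → ZPer φ →
            |∫ x in fundCube d, (ρ₁ t x - ρ t x) * φ x| ≤ δ * CkN N φ) ∧
          ∃ r : ℝ, 0 < r ∧ ∀ t ∈ Set.Icc (0:ℝ) 1,
            t ∉ Set.Icc r (1 - r) → ∀ x, ρ₁ t x = ρ t x := by
  exact continuity_defect_iteration_general d (le_of_lt hd) p q s st hp hq hs hst p' s' hp' hs'
    (gap_of_exponents (sub_pos.2 (Nat.one_lt_cast.2 (by lia))) hp hs hst hs' hβ hpq hst2)
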